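/- Suppose d ≥ 1, 0 < α < d and α < min{1, d/3}. Then the triangle diagram is finite at criticality: ∇_{β_c} < ∞. -/

import Mathlib

open MeasureTheory ENNReal

namespace LRP

/-- The vertex set `ℤ^d`. -/
abbrev V (d : ℕ) : Type := Fin d → ℤ

/-- The `ℓ^∞` norm of a lattice point, as a natural number. -/
def normInf {d : ℕ} (x : V d) : ℕ := Finset.univ.sup fun i => (x i).natAbs

/-- A percolation configuration: each (unordered) pair of vertices is open or closed. -/
abbrev Config (d : ℕ) : Type := Sym2 (V d) → Bool

/-- The probability `1 - exp (-β J(x,y))` that the edge `e = {x,y}` is open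
(the symmetrization `(J x y + J y x)/2` equals `J x y` for symmetric `J`). -/
noncomputable def edgeProb {d : ℕ} (J : V d → V d → ℝ) (β : ℝ) (e : Sym2 (V d)) : ℝ≥0∞ :=
  ENNReal.ofReal (1 - Real.exp (-β *
    Sym2.lift ⟨fun x y => (J x y + J y x) / 2, fun x y => by dsimp only; rw [add_comm]⟩ e))

/-- `IsLRP J P` asserts that for each `β`, `P β` is the law of long-range percolation on `ℤ^d`
with kernel `J` at inverse temperature `β`: distinct edges are open independently, edge `{x,y}`
being open with probability `1 - exp (-β J(x,y))`.  This is expressed by prescribing the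
probability of every finite cylinder event, which characterizes the measure uniquely. -/
def IsLRP {d : ℕ} (J : V d → V d → ℝ) (P : ℝ → Measure (Config d)) : Prop :=
  ∀ (β : ℝ) (s : Finset (Sym2 (V d))) (f : Sym2 (V d) → Bool),
    P β {ω | ∀ e ∈ s, ω e = f e} =
      ∏ e ∈ s, (if f e then edgeProb J β e else 1 - edgeProb J β e)

/-- Two vertices are adjacent if they are distinct and the edge between them is open. -/
def adj {d : ℕ} (ω : Config d) (x y : V d) : Prop := x ≠ y ∧ ω s(x, y) = true

/-- `x ↔ y`: the vertices are connected by a path of open edges. -/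
def conn {d : ℕ} (ω : Config d) (x y : V d) : Prop := Relation.ReflTransGen (adj ω) x y

/-- `x ↔ y` inside `A`: connected by an open path all of whose vertices lie in `A`. -/
def connIn {d : ℕ} (ω : Config d) (A : Set (V d)) (x y : V d) : Prop :=
  x ∈ A ∧ y ∈ A ∧ Relation.ReflTransGen (fun a b => a ∈ A ∧ b ∈ A ∧ adj ω a b) x y

/-- The cluster of `x`. -/
def cluster {d : ℕ} (ω : Config d) (x : V d) : Set (V d) := {y | conn ω x y}

/-- The critical point `β_c`. -/
noncomputable def betaC {d : ℕ} (P : ℝ → Measure (Config d)) : ℝ :=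
  sInf {β : ℝ | 0 ≤ β ∧ 0 < P β {ω | ∃ x, (cluster ω x).Infinite}}

/-- The two-point function `ℙ_β(x ↔ y)`. -/
noncomputable def twoPoint {d : ℕ} (P : ℝ → Measure (Config d)) (β : ℝ) (x y : V d) : ℝ≥0∞ :=
  P β {ω | conn ω x y}

/-- The susceptibility `χ(β) = Σ_x ℙ_β(0 ↔ x)`. -/
noncomputable def chi {d : ℕ} (P : ℝ → Measure (Config d)) (β : ℝ) : ℝ≥0∞ :=
  ∑' x : V d, twoPoint P β 0 x

/-- `Σ_{x ∈ [-n,n]^d} ℙ_β(0 ↔ x)`. -/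
noncomputable def boxSum {d : ℕ} (P : ℝ → Measure (Config d)) (β : ℝ) (n : ℕ) : ℝ≥0∞ :=
  ∑' x : V d, if normInf x ≤ n then twoPoint P β 0 x else 0

/-- The correlation length `ξ(β) = inf {r ≥ 1 : Σ_{x ∈ [-r,r]^d} ℙ_β(0↔x) ≥ χ(β)/2}`
(`= ∞` if no such `r` exists). -/
noncomputable def xi {d : ℕ} (P : ℝ → Measure (Config d)) (β : ℝ) : ℝ≥0∞ :=
  sInf {r : ℝ≥0∞ | ∃ n : ℕ, r = (n : ℝ≥0∞) ∧ 1 ≤ n ∧ chi P β ≤ 2 * boxSum P β n}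

/-- The triangle diagram `∇_β`. -/
noncomputable def triangle {d : ℕ} (P : ℝ → Measure (Config d)) (β : ℝ) : ℝ≥0∞ :=
  ∑' x : V d, ∑' y : V d, twoPoint P β 0 x * twoPoint P β x y * twoPoint P β y 0

/-- The standing assumptions on the kernel `J`: symmetric, integrable, translation-invariant,
with `c ‖x-y‖^{-d-α} ≤ J(x,y) ≤ C ‖x-y‖^{-d-α}` for distinct `x, y`, where `0 < α < d`. -/
structure KernelHyp (d : ℕ) (J : V d → V d → ℝ) (α c C : ℝ) : Prop where
  d_pos : 1 ≤ d
  symm : ∀ x y, J x y = J y x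
  transInv : ∀ x y z : V d, J (x + z) (y + z) = J x y
  nonneg : ∀ x y, 0 ≤ J x y
  integrable : Summable fun x : V d => J 0 x
  alpha_pos : 0 < α
  alpha_lt_d : α < (d : ℝ)
  c_pos : 0 < c
  c_le_C : c ≤ C
  lower : ∀ x y : V d, x ≠ y → c * (normInf (x - y) : ℝ) ^ (-(d : ℝ) - α) ≤ J x y
  upper : ∀ x y : V d, x ≠ y → J x y ≤ C * (normInf (x - y) : ℝ) ^ (-(d : ℝ) - α)

set_option linter.unusedSectionVars false

section
open scoped Classical in
/-- real indicator -/
noncomputable def ind (A : Prop) : ℝ := if A then 1 else 0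

theorem ind_true {A : Prop} (h : A) : ind A = 1 := by simp [ind, h]
theorem ind_false {A : Prop} (h : ¬ A) : ind A = 0 := by simp [ind, h]
theorem ind_nonneg (A : Prop) : 0 ≤ ind A := by unfold ind; split_ifs <;> simp
theorem ind_le_one (A : Prop) : ind A ≤ 1 := by unfold ind; split_ifs <;> simp
theorem ind_mono {A B : Prop} (h : A → B) : ind A ≤ ind B := by
  unfold ind; split_ifs <;> simp_all
theorem ind_and (A B : Prop) : ind (A ∧ B) = ind A * ind B := by
  unfold ind; split_ifs <;> simp_all
theorem ind_not (A : Prop) : ind (¬ A) = 1 - ind A := by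
  unfold ind; split_ifs <;> simp_all
theorem ind_or_le (A B : Prop) : ind (A ∨ B) ≤ ind A + ind B := by
  unfold ind; split_ifs <;> simp_all
theorem ind_exists_le {κ : Type*} (s : Finset κ) (A : κ → Prop) :
    ind (∃ i ∈ s, A i) ≤ ∑ i ∈ s, ind (A i) := by
  by_cases h : ∃ i ∈ s, A i
  · obtain ⟨i, hi, hA⟩ := h
    calc _ ≤ (1:ℝ) := ind_le_one _
      _ = ind (A i) := (ind_true hA).symm
      _ ≤ _ := Finset.single_le_sum (f := fun i => ind (A i)) (fun i _ => ind_nonneg _) hi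
  · rw [ind_false h]
    exact Finset.sum_nonneg fun i _ => ind_nonneg _

section Ex
variable {ι : Type*} [DecidableEq ι]

/-- expectation over independent open edges in `E` -/
noncomputable def Ex (p : ι → ℝ) (E : Finset ι) (f : Finset ι → ℝ) : ℝ :=
  ∑ ω ∈ E.powerset, (∏ e ∈ ω, p e) * (∏ e ∈ E \ ω, (1 - p e)) * f ω

/-- probability -/
noncomputable def Pr (p : ι → ℝ) (E : Finset ι) (A : Finset ι → Prop) : ℝ :=
  Ex p E (fun ω => ind (A ω))

variable {p : ι → ℝ}

theorem Ex_empty (f : Finset ι → ℝ) : Ex p ∅ f = f ∅ := by simp [Ex]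

theorem Ex_insert {E : Finset ι} {e : ι} (he : e ∉ E) (f : Finset ι → ℝ) :
    Ex p (insert e E) f = p e * Ex p E (fun ω => f (insert e ω)) + (1 - p e) * Ex p E f := by
  unfold Ex
  rw [Finset.sum_powerset_insert he, add_comm, Finset.mul_sum, Finset.mul_sum]
  congr 1
  · apply Finset.sum_congr rfl
    intro ω hω
    have hω' := Finset.mem_powerset.1 hω
    have h1 : e ∉ ω := fun h => he (hω' h)
    have h2 : insert e E \ insert e ω = E \ ω := by
      ext a; simp only [Finset.mem_sdiff, Finset.mem_insert]
      constructor
      · rintro ⟨h | h, h'⟩ <;> tauto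
      · rintro ⟨h, h'⟩
        refine ⟨Or.inr h, ?_⟩
        rintro (rfl | h3)
        · exact he h
        · exact h' h3
    rw [Finset.prod_insert h1, h2]; ring
  · apply Finset.sum_congr rfl
    intro ω hω
    have hω' := Finset.mem_powerset.1 hω
    have h1 : e ∉ ω := fun h => he (hω' h)
    have h2 : insert e E \ ω = insert e (E \ ω) := Finset.insert_sdiff_of_notMem _ h1
    rw [h2, Finset.prod_insert (by simp [he])]; ring

theorem Ex_congr {E : Finset ι} {f g : Finset ι → ℝ} (h : ∀ ω, ω ⊆ E → f ω = g ω) :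
    Ex p E f = Ex p E g := by
  unfold Ex
  exact Finset.sum_congr rfl fun ω hω => by rw [h ω (Finset.mem_powerset.1 hω)]

theorem Ex_add (E : Finset ι) (f g : Finset ι → ℝ) :
    Ex p E (fun ω => f ω + g ω) = Ex p E f + Ex p E g := by
  unfold Ex; rw [← Finset.sum_add_distrib]
  exact Finset.sum_congr rfl fun ω _ => by ring

theorem Ex_mul_left (E : Finset ι) (c : ℝ) (f : Finset ι → ℝ) :
    Ex p E (fun ω => c * f ω) = c * Ex p E f := by
  unfold Ex; rw [Finset.mul_sum]
  exact Finset.sum_congr rfl fun ω _ => by ring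

theorem Ex_mul_right (E : Finset ι) (c : ℝ) (f : Finset ι → ℝ) :
    Ex p E (fun ω => f ω * c) = Ex p E f * c := by
  unfold Ex; rw [Finset.sum_mul]
  exact Finset.sum_congr rfl fun ω _ => by ring

theorem Ex_sum {κ : Type*} (E : Finset ι) (s : Finset κ) (f : κ → Finset ι → ℝ) :
    Ex p E (fun ω => ∑ i ∈ s, f i ω) = ∑ i ∈ s, Ex p E (f i) := by
  unfold Ex; rw [Finset.sum_comm]
  exact Finset.sum_congr rfl fun ω _ => by rw [Finset.mul_sum]

theorem Ex_const (E : Finset ι) (c : ℝ) : Ex p E (fun _ => c) = c := by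
  induction E using Finset.induction_on with
  | empty => simp [Ex_empty]
  | insert e E he ih => rw [Ex_insert he, ih]; ring

theorem Ex_mono {E : Finset ι} (h0 : ∀ e, 0 ≤ p e) (h1 : ∀ e, p e ≤ 1) {f g : Finset ι → ℝ}
    (h : ∀ ω, ω ⊆ E → f ω ≤ g ω) : Ex p E f ≤ Ex p E g := by
  unfold Ex
  refine Finset.sum_le_sum fun ω hω => ?_
  apply mul_le_mul_of_nonneg_left (h ω (Finset.mem_powerset.1 hω))
  exact mul_nonneg (Finset.prod_nonneg fun e _ => h0 e)
    (Finset.prod_nonneg fun e _ => sub_nonneg.2 (h1 e))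

theorem Ex_nonneg {E : Finset ι} (h0 : ∀ e, 0 ≤ p e) (h1 : ∀ e, p e ≤ 1) {f : Finset ι → ℝ}
    (h : ∀ ω, ω ⊆ E → 0 ≤ f ω) : 0 ≤ Ex p E f := by
  have := Ex_mono (p := p) (E := E) h0 h1 h
  rwa [Ex_const] at this

/-- Fubini -/
theorem Ex_union (S T : Finset ι) (hST : Disjoint S T) (h : Finset ι → Finset ι → ℝ) :
    Ex p (S ∪ T) (fun ω => h (ω ∩ S) (ω ∩ T)) = Ex p S (fun a => Ex p T (fun b => h a b)) := by
  induction S using Finset.induction_on generalizing h with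
  | empty =>
    rw [Ex_empty, Finset.empty_union]
    exact Ex_congr fun ω hω => by rw [Finset.inter_empty, Finset.inter_eq_left.2 hω]
  | insert e S he ih =>
    rw [Finset.disjoint_insert_left] at hST
    have heU : e ∉ S ∪ T := by simp [he, hST.1]
    rw [Finset.insert_union, Ex_insert heU, Ex_insert he, ← ih hST.2, ← ih hST.2]
    congr 2
    · refine Ex_congr fun ω hω => ?_
      have h1 : insert e ω ∩ insert e S = insert e (ω ∩ S) := by
        rw [Finset.insert_inter_distrib]
      rw [h1, Finset.insert_inter_of_notMem hST.1]
    · refine Ex_congr fun ω hω => ?_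
      have : e ∉ ω := fun h => heU (hω h)
      rw [Finset.inter_insert_of_notMem this]

theorem Ex_marg {S E : Finset ι} (h : S ⊆ E) (f : Finset ι → ℝ) :
    Ex p E (fun ω => f (ω ∩ S)) = Ex p S f := by
  have := Ex_union (p := p) S (E \ S) Finset.disjoint_sdiff (fun a _ => f a)
  rw [Finset.union_sdiff_of_subset h] at this
  rw [this]
  exact Ex_congr fun ω _ => Ex_const _ _

theorem Ex_indep {S T E : Finset ι} (hS : S ⊆ E) (hT : T ⊆ E) (hST : Disjoint S T)
    (h : Finset ι → Finset ι → ℝ) :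
    Ex p E (fun ω => h (ω ∩ S) (ω ∩ T)) = Ex p S (fun a => Ex p T (fun b => h a b)) := by
  rw [← Ex_union S T hST, ← Ex_marg (Finset.union_subset hS hT)]
  refine Ex_congr fun ω _ => ?_
  rw [Finset.inter_assoc, Finset.inter_assoc, Finset.union_inter_cancel_left,
    Finset.union_inter_cancel_right]

theorem Ex_none (F : Finset ι) : Ex p F (fun ω => ind (ω = ∅)) = ∏ e ∈ F, (1 - p e) := by
  induction F using Finset.induction_on with
  | empty => simp [Ex_empty, ind]
  | insert e F he ih =>
    rw [Ex_insert he, ih, Finset.prod_insert he]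
    have : Ex p F (fun ω => ind (insert e ω = ∅)) = 0 := by
      rw [← Ex_const (p := p) F 0]
      exact Ex_congr fun ω _ => ind_false (Finset.insert_ne_empty _ _)
    rw [this]; ring

theorem Ex_map {E : Finset ι} (σ : ι ≃ ι) (hσ : ∀ e, p (σ e) = p e) (f : Finset ι → ℝ) :
    Ex p (E.map σ.toEmbedding) f = Ex p E (fun ω => f (ω.map σ.toEmbedding)) := by
  induction E using Finset.induction_on generalizing f with
  | empty => simp [Ex_empty]
  | insert e E he ih =>
    rw [Finset.map_insert, Ex_insert (by simpa using he), Ex_insert he, ih, ih]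
    simp only [Finset.map_insert, Equiv.coe_toEmbedding, hσ]

theorem Pr_mono {E : Finset ι} (h0 : ∀ e, 0 ≤ p e) (h1 : ∀ e, p e ≤ 1) {A B : Finset ι → Prop}
    (h : ∀ ω, ω ⊆ E → A ω → B ω) : Pr p E A ≤ Pr p E B :=
  Ex_mono h0 h1 fun ω hω => ind_mono (h ω hω)

theorem Pr_nonneg {E : Finset ι} (h0 : ∀ e, 0 ≤ p e) (h1 : ∀ e, p e ≤ 1) (A : Finset ι → Prop) :
    0 ≤ Pr p E A := Ex_nonneg h0 h1 fun _ _ => ind_nonneg _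

theorem Pr_le_one {E : Finset ι} (h0 : ∀ e, 0 ≤ p e) (h1 : ∀ e, p e ≤ 1) (A : Finset ι → Prop) :
    Pr p E A ≤ 1 := by
  rw [← Ex_const (p := p) E 1]
  exact Ex_mono h0 h1 fun _ _ => ind_le_one _

theorem Pr_not (E : Finset ι) (A : Finset ι → Prop) :
    Pr p E (fun ω => ¬ A ω) = 1 - Pr p E A := by
  have : Pr p E (fun ω => ¬ A ω) + Pr p E A = 1 := by
    unfold Pr; rw [← Ex_add, ← Ex_const (p := p) E 1]
    exact Ex_congr fun ω _ => by rw [ind_not]; ring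
  linarith

theorem Pr_exists_le {κ : Type*} {E : Finset ι} (h0 : ∀ e, 0 ≤ p e) (h1 : ∀ e, p e ≤ 1)
    (s : Finset κ) (A : κ → Finset ι → Prop) :
    Pr p E (fun ω => ∃ i ∈ s, A i ω) ≤ ∑ i ∈ s, Pr p E (A i) := by
  unfold Pr; rw [← Ex_sum]
  exact Ex_mono h0 h1 fun ω _ => ind_exists_le s fun i => A i ω

theorem Pr_or_le {E : Finset ι} (h0 : ∀ e, 0 ≤ p e) (h1 : ∀ e, p e ≤ 1)
    (A B : Finset ι → Prop) :
    Pr p E (fun ω => A ω ∨ B ω) ≤ Pr p E A + Pr p E B := by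
  unfold Pr; rw [← Ex_add]
  exact Ex_mono h0 h1 fun ω _ => ind_or_le _ _

theorem ind_union_inter (A B : Prop) : ind (A ∨ B) + ind (A ∧ B) = ind A + ind B := by
  unfold ind; split_ifs <;> simp_all

/-- general BK inequality for increasing events -/
theorem BK_gen (h0 : ∀ e, 0 ≤ p e) (h1 : ∀ e, p e ≤ 1) (E : Finset ι)
    (F : Finset ι → Finset ι → Prop)
    (hF : ∀ a b a' b', a ⊆ a' → b ⊆ b' → F a b → F a' b') :
    Pr p E (fun ω => ∃ η ζ, η ⊆ ω ∧ ζ ⊆ ω ∧ Disjoint η ζ ∧ F η ζ) ≤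
      Ex p E (fun a => Ex p E (fun b => ind (F a b))) := by
  induction E using Finset.induction_on generalizing F with
  | empty =>
    unfold Pr
    simp only [Ex_empty]
    apply ind_mono
    rintro ⟨η, ζ, h1, h2, -, h⟩
    exact hF _ _ _ _ h1 h2 h
  | insert e E he ih =>
    set F00 := F
    set F10 : Finset ι → Finset ι → Prop := fun a b => F (insert e a) b
    set F01 : Finset ι → Finset ι → Prop := fun a b => F a (insert e b)
    set F11 : Finset ι → Finset ι → Prop := fun a b => F (insert e a) (insert e b)
    set FU : Finset ι → Finset ι → Prop := fun a b => F10 a b ∨ F01 a b with hFU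
    set FI : Finset ι → Finset ι → Prop := fun a b => F10 a b ∧ F01 a b with hFI
    have hU : ∀ a b a' b', a ⊆ a' → b ⊆ b' → FU a b → FU a' b' := by
      intro a b a' b' ha hb h
      rcases h with h | h
      · exact Or.inl (hF _ _ _ _ (Finset.insert_subset_insert _ ha) hb h)
      · exact Or.inr (hF _ _ _ _ ha (Finset.insert_subset_insert _ hb) h)
    have i0 := ih F hF
    have iU := ih FU hU
    let R : (Finset ι → Finset ι → Prop) → ℝ :=
      fun G => Ex p E (fun a => Ex p E (fun b => ind (G a b)))
    have Rmono : ∀ G G' : Finset ι → Finset ι → Prop, (∀ a b, G a b → G' a b) → R G ≤ R G' := by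
      intro G G' h
      exact Ex_mono h0 h1 fun a _ => Ex_mono h0 h1 fun b _ => ind_mono (h a b)
    have eRHS : Ex p (insert e E) (fun a => Ex p (insert e E) (fun b => ind (F a b))) =
        p e * (p e * R F11 + (1 - p e) * R F10) + (1 - p e) * (p e * R F01 + (1 - p e) * R F) := by
      rw [Ex_insert he]
      simp only [Ex_insert he]
      rw [Ex_add, Ex_add, Ex_mul_left, Ex_mul_left, Ex_mul_left, Ex_mul_left]
    have eU : R FU + R FI = R F10 + R F01 := by
      simp only [R]
      rw [← Ex_add, ← Ex_add]
      refine Ex_congr fun a _ => ?_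
      rw [← Ex_add, ← Ex_add]
      exact Ex_congr fun b _ => ind_union_inter _ _
    have k1 : R F ≤ R FI := Rmono _ _ fun a b h =>
      ⟨hF _ _ _ _ (Finset.subset_insert _ _) le_rfl h, hF _ _ _ _ le_rfl (Finset.subset_insert _ _) h⟩
    have k2 : R FU ≤ R F11 := Rmono _ _ fun a b h => by
      rcases h with h | h
      · exact hF _ _ _ _ le_rfl (Finset.subset_insert _ _) h
      · exact hF _ _ _ _ (Finset.subset_insert _ _) le_rfl h
    rw [eRHS]
    unfold Pr
    rw [Ex_insert he]
    have j1 : Ex p E (fun ω => ind (∃ η ζ, η ⊆ insert e ω ∧ ζ ⊆ insert e ω ∧ Disjoint η ζ ∧ F η ζ))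
        ≤ Pr p E (fun ω => ∃ η ζ, η ⊆ ω ∧ ζ ⊆ ω ∧ Disjoint η ζ ∧ FU η ζ) := by
      refine Ex_mono h0 h1 fun ω hω => ind_mono ?_
      rintro ⟨η, ζ, hη, hζ, hd, h⟩
      refine ⟨η.erase e, ζ.erase e, ?_, ?_, ?_, ?_⟩
      · rw [← Finset.subset_insert_iff]; exact hη
      · rw [← Finset.subset_insert_iff]; exact hζ
      · exact Disjoint.mono (Finset.erase_subset _ _) (Finset.erase_subset _ _) hd
      · by_cases hx : e ∈ η
        · left
          have : e ∉ ζ := Finset.disjoint_left.1 hd hx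
          simp only [F10, F00]
          rw [Finset.insert_erase hx, Finset.erase_eq_of_notMem this]; exact h
        · right
          simp only [F01, F00]
          rw [Finset.erase_eq_of_notMem hx]
          refine hF _ _ _ _ le_rfl ?_ h
          intro a ha
          by_cases ha' : a = e <;> simp [ha', ha]
    have q0 := h0 e
    have q1 := h1 e
    have R0 : (0:ℝ) ≤ 1 - p e := by linarith
    have s1 := mul_le_mul_of_nonneg_left (j1.trans iU) q0
    have s2 := mul_le_mul_of_nonneg_left i0 R0
    have s3 := mul_le_mul_of_nonneg_left k1 (mul_nonneg q0 R0)
    have s4 := mul_le_mul_of_nonneg_left k2 (mul_nonneg q0 q0)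
    have e3 : R FI = R F10 + R F01 - R FU := by linarith
    refine (add_le_add s1 s2).trans ?_
    rw [e3] at s3
    change p e * R FU + (1 - p e) * R F ≤ _
    nlinarith

theorem BK (h0 : ∀ e, 0 ≤ p e) (h1 : ∀ e, p e ≤ 1) (E : Finset ι)
    (A B : Finset ι → Prop) (hA : ∀ a b, a ⊆ b → A a → A b) (hB : ∀ a b, a ⊆ b → B a → B b) :
    Pr p E (fun ω => ∃ η ζ, η ⊆ ω ∧ ζ ⊆ ω ∧ Disjoint η ζ ∧ A η ∧ B ζ) ≤ Pr p E A * Pr p E B := by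
  refine (BK_gen h0 h1 E (fun a b => A a ∧ B b)
    fun a b a' b' ha hb h => ⟨hA _ _ ha h.1, hB _ _ hb h.2⟩).trans (le_of_eq ?_)
  unfold Pr
  simp only [ind_and, Ex_mul_left, Ex_mul_right]

end Ex

end

section
theorem rtg_mono {W : Type*} {r r' : W → W → Prop} (h : ∀ a b, r a b → r' a b) {x y : W}
    (hx : Relation.ReflTransGen r x y) : Relation.ReflTransGen r' x y := by
  induction hx with
  | refl => exact Relation.ReflTransGen.refl
  | tail _ h2 ih => exact ih.tail (h _ _ h2)

section Conn
variable {W : Type*} [DecidableEq W]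

/-- connectivity through the edge set `ω` -/
def cn (ω : Finset (Sym2 W)) (x y : W) : Prop :=
  Relation.ReflTransGen (fun a b => a ≠ b ∧ s(a, b) ∈ ω) x y

theorem cn_refl (ω : Finset (Sym2 W)) (x : W) : cn ω x x := Relation.ReflTransGen.refl

theorem cn_symm {ω : Finset (Sym2 W)} {x y : W} (h : cn ω x y) : cn ω y x := by
  have : Std.Symm (fun a b : W => a ≠ b ∧ s(a, b) ∈ ω) :=
    ⟨fun a b h => ⟨h.1.symm, by rw [Sym2.eq_swap]; exact h.2⟩⟩
  exact (Relation.ReflTransGen.stdSymm (r := fun a b : W => a ≠ b ∧ s(a, b) ∈ ω)).symm _ _ h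

theorem cn_trans {ω : Finset (Sym2 W)} {x y z : W} (h : cn ω x y) (h' : cn ω y z) : cn ω x z :=
  Relation.ReflTransGen.trans h h'

theorem cn_mono {ω ω' : Finset (Sym2 W)} (hω : ω ⊆ ω') {x y : W} (h : cn ω x y) : cn ω' x y :=
  rtg_mono (fun _ _ h => ⟨h.1, hω h.2⟩) h

theorem cn_edge {ω : Finset (Sym2 W)} {x y : W} (h : s(x, y) ∈ ω) : cn ω x y := by
  by_cases hxy : x = y
  · rw [hxy]; exact cn_refl _ _
  · exact Relation.ReflTransGen.single ⟨hxy, h⟩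

theorem cn_mem {ω : Finset (Sym2 W)} {B : Finset W} (hω : ω ⊆ B.sym2) {x y : W}
    (hx : x ∈ B) (h : cn ω x y) : y ∈ B := by
  induction h with
  | refl => exact hx
  | tail _ h _ => exact (Finset.mk_mem_sym2_iff.1 (hω h.2)).2

theorem last_exit {r : W → W → Prop} (K : W → Prop) {x y : W} (h : Relation.ReflTransGen r x y)
    (hy : ¬ K y) :
    (¬ K x ∧ Relation.ReflTransGen (fun a b => ¬ K a ∧ ¬ K b ∧ r a b) x y) ∨
    ∃ u v, K u ∧ ¬ K v ∧ r u v ∧ Relation.ReflTransGen (fun a b => ¬ K a ∧ ¬ K b ∧ r a b) v y := by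
  induction h using Relation.ReflTransGen.head_induction_on with
  | refl => exact Or.inl ⟨hy, Relation.ReflTransGen.refl⟩
  | head h _ ih =>
    rename_i a c _
    rcases ih with ⟨h1, h2⟩ | h3
    · by_cases ha : K a
      · exact Or.inr ⟨a, c, ha, h1, h, h2⟩
      · exact Or.inl ⟨ha, Relation.ReflTransGen.head ⟨ha, h1, h⟩ h2⟩
    · exact Or.inr h3

/-- two point function inside `B` -/
noncomputable def tau (p : Sym2 W → ℝ) (B : Finset W) (x y : W) : ℝ :=
  Pr p B.sym2 (fun ω => cn ω x y)

variable {p : Sym2 W → ℝ}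

theorem tau_symm (B : Finset W) (x y : W) : tau p B x y = tau p B y x := by
  unfold tau Pr
  refine Ex_congr fun ω _ => ?_
  congr 1
  exact propext ⟨cn_symm, cn_symm⟩

theorem tau_nonneg (h0 : ∀ e, 0 ≤ p e) (h1 : ∀ e, p e ≤ 1) (B : Finset W) (x y : W) :
    0 ≤ tau p B x y := Pr_nonneg h0 h1 _

theorem tau_le_one (h0 : ∀ e, 0 ≤ p e) (h1 : ∀ e, p e ≤ 1) (B : Finset W) (x y : W) :
    tau p B x y ≤ 1 := Pr_le_one h0 h1 _

theorem tau_marg {B Q : Finset W} (h : B ⊆ Q) (x y : W) :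
    Pr p Q.sym2 (fun ω => cn (ω ∩ B.sym2) x y) = tau p B x y :=
  Ex_marg (Finset.sym2_mono h) (fun ω => ind (cn ω x y))

theorem tau_mono (h0 : ∀ e, 0 ≤ p e) (h1 : ∀ e, p e ≤ 1) {B Q : Finset W} (h : B ⊆ Q) (x y : W) :
    tau p B x y ≤ tau p Q x y := by
  rw [← tau_marg h]
  exact Pr_mono h0 h1 fun ω _ hc => cn_mono Finset.inter_subset_left hc

theorem tau_out (B : Finset W) {x y : W} (hx : x ∈ B) (hy : y ∉ B) : tau p B x y = 0 := by
  unfold tau Pr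
  rw [← Ex_const (p := p) B.sym2 0]
  exact Ex_congr fun ω hω => ind_false fun h => hy (cn_mem hω hx h)

theorem tau_self (B : Finset W) (x : W) : tau p B x x = 1 := by
  unfold tau Pr
  rw [← Ex_const (p := p) B.sym2 1]
  exact Ex_congr fun ω hω => ind_true (cn_refl _ _)

theorem Pr_mem_single {ι : Type*} [DecidableEq ι] {p : ι → ℝ} {E : Finset ι} {e : ι} (he : e ∈ E) :
    Pr p E (fun ω => e ∈ ω) = p e := by
  unfold Pr
  have h := Ex_marg (p := p) (S := {e}) (E := E) (by simpa using he) (fun ω => ind (e ∈ ω))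
  have h2 : Ex p E (fun ω => ind (e ∈ ω ∩ {e})) = Ex p E (fun ω => ind (e ∈ ω)) :=
    Ex_congr fun ω _ => by simp
  rw [← h2, h]
  have := Ex_insert (p := p) (E := ∅) (e := e) (by simp) (fun ω => ind (e ∈ ω))
  simp only [insert_empty_eq] at this
  rw [this, Ex_empty, Ex_empty]
  simp [ind]

open scoped Classical in
theorem exit_pt {ω : Finset (Sym2 W)} {B Q : Finset W} (hB : B ⊆ Q) (hω : ω ⊆ Q.sym2) {x y : W}
    (hx : x ∈ B) (h : cn ω x y) :
    cn (ω ∩ B.sym2) x y ∨ ∃ u ∈ B, ∃ v ∈ Q \ B, ∃ η ζ, η ⊆ ω ∧ ζ ⊆ ω ∧ Disjoint η ζ ∧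
      cn (η ∩ B.sym2) x u ∧
      (∃ η' ζ', η' ⊆ ζ ∧ ζ' ⊆ ζ ∧ Disjoint η' ζ' ∧ s(u, v) ∈ η' ∧ cn ζ' v y) := by
  by_cases hy : cn (ω ∩ B.sym2) x y
  · exact Or.inl hy
  right
  set K : W → Prop := fun w => cn (ω ∩ B.sym2) x w with hK
  rcases last_exit K h hy with ⟨h1, -⟩ | ⟨u, v, hu, hv, huv, hp⟩
  · exact absurd (cn_refl _ _) h1
  have huB : u ∈ B := cn_mem Finset.inter_subset_right hx hu
  have hvB : v ∉ B := by
    intro hvB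
    apply hv
    refine cn_trans hu (cn_edge ?_)
    simp [huv.2, huB, hvB]
  have hvQ : v ∈ Q := (Finset.mk_mem_sym2_iff.1 (hω huv.2)).2
  refine ⟨u, huB, v, by simp [hvQ, hvB], ω.filter (fun e => ∀ a ∈ e, K a),
    ω.filter (fun e => ¬ ∀ a ∈ e, K a), Finset.filter_subset _ _, Finset.filter_subset _ _,
    Finset.disjoint_filter_filter_not _ _ _, ?_, {s(u, v)}, ω.filter (fun e => ∀ a ∈ e, ¬ K a),
    ?_, ?_, ?_, by simp, ?_⟩
  · -- path inside K
    have : ∀ w, K w → cn (ω.filter (fun e => ∀ a ∈ e, K a) ∩ B.sym2) x w := by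
      intro w hw
      have hw' : Relation.ReflTransGen (fun a b : W => a ≠ b ∧ s(a, b) ∈ ω ∩ B.sym2) x w := hw
      induction hw' with
      | refl => exact cn_refl _ _
      | tail h1 h2 ih =>
        rename_i b c
        have hb : K b := h1
        refine cn_trans (ih hb) (cn_edge ?_)
        have h3 := Finset.mem_inter.1 h2.2
        simp only [Finset.mem_inter, Finset.mem_filter]
        refine ⟨⟨h3.1, ?_⟩, h3.2⟩
        intro a ha
        rcases Sym2.mem_iff.1 ha with rfl | rfl
        · exact hb
        · exact hw
    exact this u hu
  · intro e he
    rw [Finset.mem_singleton] at he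
    subst he
    simp only [Finset.mem_filter]
    exact ⟨huv.2, fun h => hv (h v (by simp))⟩
  · intro e he
    simp only [Finset.mem_filter] at he ⊢
    refine ⟨he.1, fun h => ?_⟩
    induction e using Sym2.ind with
    | _ a b => exact he.2 a (by simp) (h a (by simp))
  · rw [Finset.disjoint_singleton_left]
    simp only [Finset.mem_filter, not_and]
    intro _ h
    exact h u (by simp) hu
  · refine rtg_mono ?_ hp
    rintro a b ⟨h1, h2, h3, h4⟩
    refine ⟨h3, ?_⟩
    simp only [Finset.mem_filter]
    refine ⟨h4, fun c hc => ?_⟩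
    rcases Sym2.mem_iff.1 hc with rfl | rfl <;> assumption

theorem exit_ineq (h0 : ∀ e, 0 ≤ p e) (h1 : ∀ e, p e ≤ 1) {B Q : Finset W} (hB : B ⊆ Q) {x y : W}
    (hx : x ∈ B) :
    tau p Q x y ≤ tau p B x y + ∑ u ∈ B, ∑ v ∈ Q \ B, tau p B x u * (p s(u, v) * tau p Q v y) := by
  set G : W → W → Finset (Sym2 W) → Prop := fun u v ω => ∃ η ζ, η ⊆ ω ∧ ζ ⊆ ω ∧ Disjoint η ζ ∧
      cn (η ∩ B.sym2) x u ∧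
      (∃ η' ζ', η' ⊆ ζ ∧ ζ' ⊆ ζ ∧ Disjoint η' ζ' ∧ s(u, v) ∈ η' ∧ cn ζ' v y) with hG
  have hbk : ∀ u ∈ B, ∀ v ∈ Q \ B,
      Pr p Q.sym2 (G u v) ≤ tau p B x u * (p s(u, v) * tau p Q v y) := by
    intro u hu v hv
    refine (BK h0 h1 Q.sym2 (fun η => cn (η ∩ B.sym2) x u)
      (fun ζ => ∃ η' ζ', η' ⊆ ζ ∧ ζ' ⊆ ζ ∧ Disjoint η' ζ' ∧ s(u, v) ∈ η' ∧ cn ζ' v y)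
      (fun a b hab h => cn_mono (Finset.inter_subset_inter_right hab) h) ?_).trans ?_
    · rintro a b hab ⟨η, ζ, h2, h3, h4⟩
      exact ⟨η, ζ, h2.trans hab, h3.trans hab, h4⟩
    rw [tau_marg hB]
    refine mul_le_mul_of_nonneg_left ?_ (tau_nonneg h0 h1 _ _ _)
    refine (BK h0 h1 Q.sym2 (fun η => s(u, v) ∈ η) (fun ζ => cn ζ v y)
      (fun a b hab h => hab h) (fun a b hab h => cn_mono hab h)).trans (le_of_eq ?_)
    rw [Pr_mem_single]
    · rfl
    · rw [Finset.mk_mem_sym2_iff]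
      exact ⟨hB hu, (Finset.mem_sdiff.1 hv).1⟩
  calc tau p Q x y ≤ Pr p Q.sym2 (fun ω => cn (ω ∩ B.sym2) x y ∨ ∃ u ∈ B, ∃ v ∈ Q \ B, G u v ω) :=
        Pr_mono h0 h1 fun ω hω h => exit_pt hB hω hx h
    _ ≤ Pr p Q.sym2 (fun ω => cn (ω ∩ B.sym2) x y) +
        Pr p Q.sym2 (fun ω => ∃ u ∈ B, ∃ v ∈ Q \ B, G u v ω) := Pr_or_le h0 h1 _ _
    _ ≤ tau p B x y + ∑ u ∈ B, ∑ v ∈ Q \ B, Pr p Q.sym2 (G u v) := by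
        rw [tau_marg hB]
        refine add_le_add le_rfl ((Pr_exists_le h0 h1 B _).trans ?_)
        exact Finset.sum_le_sum fun u _ => Pr_exists_le h0 h1 _ _
    _ ≤ _ := by
        refine add_le_add le_rfl (Finset.sum_le_sum fun u hu => Finset.sum_le_sum fun v hv => ?_)
        exact hbk u hu v hv
end Conn

end

section
section Split
variable {W : Type*} [DecidableEq W]

/-- step inside X -/
def stp (ω : Finset (Sym2 W)) (X : Finset W) (a b : W) : Prop :=
  a ∈ X ∧ b ∈ X ∧ a ≠ b ∧ s(a, b) ∈ ω

/-- `X` is connected with root `v` -/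
def Con (ω : Finset (Sym2 W)) (X : Finset W) (v : W) : Prop :=
  v ∈ X ∧ ∀ w ∈ X, Relation.ReflTransGen (stp ω X) v w

variable {ω : Finset (Sym2 W)}

theorem stp_mono {X Y : Finset W} (h : X ⊆ Y) (a b : W) (hs : stp ω X a b) : stp ω Y a b :=
  ⟨h hs.1, h hs.2.1, hs.2.2⟩

theorem Con_union {X Y : Finset W} {v : W} (hX : Con ω X v) (hY : Con ω Y v) :
    Con ω (X ∪ Y) v := by
  refine ⟨Finset.mem_union_left _ hX.1, fun w hw => ?_⟩
  rcases Finset.mem_union.1 hw with h | h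
  · exact rtg_mono (stp_mono Finset.subset_union_left) (hX.2 w h)
  · exact rtg_mono (stp_mono Finset.subset_union_right) (hY.2 w h)

theorem Con_insert {X : Finset W} {v v' : W} (hX : Con ω X v') (hne : v ≠ v') (he : s(v, v') ∈ ω) :
    Con ω (insert v X) v := by
  refine ⟨Finset.mem_insert_self _ _, fun w hw => ?_⟩
  rcases Finset.mem_insert.1 hw with rfl | h
  · exact Relation.ReflTransGen.refl
  · refine Relation.ReflTransGen.head (b := v') ⟨Finset.mem_insert_self _ _, ?_, hne, he⟩ ?_
    · exact Finset.mem_insert_of_mem hX.1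
    · exact rtg_mono (stp_mono (Finset.subset_insert _ _)) (hX.2 w h)

open scoped Classical in
theorem split_aux (K : Finset W) (s : ℕ) (hs : 1 ≤ s) (hK : 3 * s ≤ K.card) :
    ∀ n (X : Finset W) (v : W), X.card = n → X ⊆ K → Con ω X v → Con ω (insert v (K \ X)) v →
      s ≤ X.card → ∃ (X : Finset W) (v : W), X ⊆ K ∧ Con ω X v ∧ Con ω (insert v (K \ X)) v ∧
        s ≤ X.card ∧ s ≤ (insert v (K \ X)).card := by
  intro n
  induction n using Nat.strong_induction_on with
  | _ n ih =>
  intro X v hn hXK hX hZ hsX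
  by_cases h2 : X.card ≤ 2 * s
  · refine ⟨X, v, hXK, hX, hZ, hsX, ?_⟩
    have h3 := Finset.card_sdiff_add_card_eq_card hXK
    have h4 := Finset.card_le_card (Finset.subset_insert v (K \ X))
    omega
  push Not at h2
  obtain ⟨w, hw, hwv⟩ : ∃ w ∈ X, w ≠ v := Finset.exists_mem_ne (by omega) v
  obtain ⟨v', hv', hne, he⟩ : ∃ v' ∈ X, v ≠ v' ∧ s(v, v') ∈ ω := by
    rcases Relation.ReflTransGen.cases_head (hX.2 w hw) with h | ⟨c, hc, -⟩
    · exact absurd h.symm hwv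
    · exact ⟨c, hc.2.1, hc.2.2.1, hc.2.2.2⟩
  set C := (X.erase v).filter (fun w => Relation.ReflTransGen (stp ω (X.erase v)) v' w) with hC
  have hv'e : v' ∈ X.erase v := Finset.mem_erase.2 ⟨hne.symm, hv'⟩
  have hv'C : v' ∈ C := Finset.mem_filter.2 ⟨hv'e, Relation.ReflTransGen.refl⟩
  have hCe : C ⊆ X.erase v := Finset.filter_subset _ _
  have hCX : C ⊆ X := hCe.trans (Finset.erase_subset _ _)
  have hvC : v ∉ C := fun h => by simpa using hCe h
  have hConC : Con ω C v' := by
    refine ⟨hv'C, fun w hw => ?_⟩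
    have hw' := (Finset.mem_filter.1 hw).2
    clear hw
    induction hw' with
    | refl => exact Relation.ReflTransGen.refl
    | tail h1 h2 ih2 =>
      exact ih2.tail ⟨Finset.mem_filter.2 ⟨h2.1, h1⟩, Finset.mem_filter.2 ⟨h2.2.1, h1.tail h2⟩, h2.2.2⟩
  have hConvC := Con_insert hConC hne he
  have hConXC : Con ω (X \ C) v := by
    refine ⟨Finset.mem_sdiff.2 ⟨hX.1, hvC⟩, fun w hw => ?_⟩
    obtain ⟨hwX, hwC⟩ := Finset.mem_sdiff.1 hw
    have hw' := hX.2 w hwX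
    clear hw
    induction hw' with
    | refl => exact Relation.ReflTransGen.refl
    | tail h1 h2 ih2 =>
      rename_i a b
      by_cases hb : b = v
      · rw [hb]
      by_cases ha : a ∈ C
      · exfalso
        apply hwC
        refine Finset.mem_filter.2 ⟨Finset.mem_erase.2 ⟨hb, hwX⟩, ?_⟩
        exact (Finset.mem_filter.1 ha).2.tail ⟨hCe ha, Finset.mem_erase.2 ⟨hb, hwX⟩, h2.2.2⟩
      · exact (ih2 h2.1 ha).tail ⟨Finset.mem_sdiff.2 ⟨h2.1, ha⟩, Finset.mem_sdiff.2 ⟨hwX, hwC⟩, h2.2.2⟩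
  have hcard : (X \ C).card + C.card = X.card := Finset.card_sdiff_add_card_eq_card hCX
  have hC1 : 1 ≤ C.card := Finset.card_pos.2 ⟨_, hv'C⟩
  have hce : (X.erase v).card + 1 = X.card := Finset.card_erase_add_one hX.1
  by_cases hCeq : C = X.erase v
  · have hcc : C.card + 1 = X.card := by rw [hCeq]; exact hce
    refine ih C.card (by omega) C v' rfl (hCX.trans hXK) hConC ?_ (by omega)
    have : insert v' (K \ C) = insert v' (insert v (K \ X)) := by
      rw [hCeq]; ext a
      simp only [Finset.mem_insert, Finset.mem_sdiff, Finset.mem_erase]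
      have := @hXK v hX.1
      by_cases hav : a = v
      · subst hav; tauto
      · tauto
    rw [this]
    exact Con_insert hZ hne.symm (by rw [Sym2.eq_swap]; exact he)
  · have hlt : C.card < (X.erase v).card :=
      Finset.card_lt_card (Finset.ssubset_iff_subset_ne.2 ⟨hCe, hCeq⟩)
    by_cases hsC : s ≤ C.card + 1
    · have hic : (insert v C).card = C.card + 1 := Finset.card_insert_of_notMem hvC
      refine ih (insert v C).card (by omega) (insert v C) v rfl ?_ hConvC ?_ (by omega)
      · exact Finset.insert_subset (hXK hX.1) (hCX.trans hXK)
      · have : insert v (K \ insert v C) = insert v (K \ X) ∪ (X \ C) := by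
          ext a
          simp only [Finset.mem_insert, Finset.mem_sdiff, Finset.mem_union]
          have h5 := @hXK a
          have h6 := @hCX a
          have h7 := hX.1
          by_cases hav : a = v
          · subst hav; tauto
          · tauto
        rw [this]
        exact Con_union hZ hConXC
    · refine ih (X \ C).card (by omega) (X \ C) v rfl (Finset.sdiff_subset.trans hXK) hConXC ?_ (by omega)
      have : insert v (K \ (X \ C)) = insert v (K \ X) ∪ insert v C := by
        ext a
        simp only [Finset.mem_insert, Finset.mem_sdiff, Finset.mem_union]
        have h5 := @hXK a
        have h6 := @hCX a
        by_cases hav : a = v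
        · subst hav; tauto
        · tauto
      rw [this]
      exact Con_union hZ hConvC

theorem split_lem {K : Finset W} {v : W} (hK : Con ω K v) (s : ℕ) (hs : 1 ≤ s)
    (h3 : 3 * s ≤ K.card) : ∃ (X : Finset W) (v : W), X ⊆ K ∧ Con ω X v ∧
      Con ω (insert v (K \ X)) v ∧ s ≤ X.card ∧ s ≤ (insert v (K \ X)).card := by
  refine split_aux K s hs h3 K.card K v rfl subset_rfl hK ?_ (by omega)
  rw [Finset.sdiff_self]
  refine ⟨by simp, fun w hw => ?_⟩
  have : w = v := by simpa using hw
  rw [this]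

open scoped Classical in
/-- cluster of `x` inside Λ -/
noncomputable def cl (Λ : Finset W) (ω : Finset (Sym2 W)) (x : W) : Finset W :=
  Λ.filter (fun y => cn ω x y)

open scoped Classical in
/-- vertices in big clusters -/
noncomputable def Big (Λ : Finset W) (m : ℕ) (ω : Finset (Sym2 W)) : Finset W :=
  Λ.filter (fun x => m ≤ (cl Λ ω x).card)

theorem mem_cl {Λ : Finset W} {x y : W} : y ∈ cl Λ ω x ↔ y ∈ Λ ∧ cn ω x y := by
  simp [cl]

theorem mem_Big {Λ : Finset W} {m : ℕ} {x : W} : x ∈ Big Λ m ω ↔ x ∈ Λ ∧ m ≤ (cl Λ ω x).card := by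
  simp [Big]

theorem cl_mono {Λ : Finset W} {ω' : Finset (Sym2 W)} (h : ω ⊆ ω') (x : W) :
    cl Λ ω x ⊆ cl Λ ω' x := fun y hy => by
  rw [mem_cl] at *; exact ⟨hy.1, cn_mono h hy.2⟩

theorem Big_mono {Λ : Finset W} {m : ℕ} {ω' : Finset (Sym2 W)} (h : ω ⊆ ω') :
    Big Λ m ω ⊆ Big Λ m ω' := fun y hy => by
  rw [mem_Big] at *; exact ⟨hy.1, hy.2.trans (Finset.card_le_card (cl_mono h y))⟩

theorem cl_congr {Λ : Finset W} {x y : W} (h : cn ω x y) : cl Λ ω x = cl Λ ω y := by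
  ext z; rw [mem_cl, mem_cl]
  exact and_congr_right fun _ => ⟨fun h' => cn_trans (cn_symm h) h', fun h' => cn_trans h h'⟩

theorem cl_sub_Big {Λ : Finset W} {m : ℕ} {x : W} (hx : x ∈ Big Λ m ω) :
    cl Λ ω x ⊆ Big Λ m ω := fun y hy => by
  rw [mem_Big] at *
  rw [mem_cl] at hy
  exact ⟨hy.1, by rw [← cl_congr hy.2]; exact hx.2⟩

theorem Con_big {Λ X : Finset W} {v : W} {m : ℕ} {η : Finset (Sym2 W)} (hX : Con ω X v)
    (hXΛ : X ⊆ Λ) (hm : m ≤ X.card) (hη : ∀ a b, stp ω X a b → s(a, b) ∈ η) :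
    X ⊆ Big Λ m η := by
  have h1 : ∀ w ∈ X, cn η v w := fun w hw =>
    rtg_mono (fun a b h => ⟨h.2.2.1, hη a b h⟩) (hX.2 w hw)
  intro w hw
  rw [mem_Big]
  refine ⟨hXΛ hw, hm.trans (Finset.card_le_card fun z hz => ?_)⟩
  rw [mem_cl]
  exact ⟨hXΛ hz, cn_trans (cn_symm (h1 w hw)) (h1 z hz)⟩

open scoped Classical in
theorem big_split {Λ : Finset W} (hω : ω ⊆ Λ.sym2) {m t : ℕ} (hm : 1 ≤ m) (hmt : m ≤ t)
    (hY : 5 * t ≤ (Big Λ m ω).card) :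
    ∃ η ζ, η ⊆ ω ∧ ζ ⊆ ω ∧ Disjoint η ζ ∧ t ≤ (Big Λ m η).card ∧ t ≤ (Big Λ m ζ).card := by
  by_cases hbig : ∃ x ∈ Λ, 3 * t ≤ (cl Λ ω x).card
  · obtain ⟨x, hx, h3⟩ := hbig
    have hcon : Con ω (cl Λ ω x) x := by
      refine ⟨mem_cl.2 ⟨hx, cn_refl _ _⟩, fun w hw => ?_⟩
      have hw' : Relation.ReflTransGen (fun a b => a ≠ b ∧ s(a, b) ∈ ω) x w := (mem_cl.1 hw).2
      clear hw
      induction hw' with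
      | refl => exact Relation.ReflTransGen.refl
      | tail h1 h2 ih =>
        refine ih.tail ⟨mem_cl.2 ⟨?_, h1⟩, mem_cl.2 ⟨?_, h1.tail h2⟩, h2⟩
        · exact cn_mem hω hx h1
        · exact cn_mem hω hx (h1.tail h2)
    obtain ⟨X, v, hXK, hX, hZ, h4, h5⟩ := split_lem hcon t (by omega) h3
    have hKΛ : cl Λ ω x ⊆ Λ := fun y hy => (mem_cl.1 hy).1
    refine ⟨ω.filter (fun e => ∀ a ∈ e, a ∈ X), ω.filter (fun e => ¬ ∀ a ∈ e, a ∈ X),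
      Finset.filter_subset _ _, Finset.filter_subset _ _, Finset.disjoint_filter_filter_not _ _ _,
      h4.trans (Finset.card_le_card (Con_big hX (hXK.trans hKΛ) (by omega) ?_)),
      h5.trans (Finset.card_le_card (Con_big hZ ?_ (by omega) ?_))⟩
    · rintro a b ⟨ha, hb, -, he⟩
      refine Finset.mem_filter.2 ⟨he, fun c hc => ?_⟩
      rcases Sym2.mem_iff.1 hc with rfl | rfl <;> assumption
    · exact Finset.insert_subset (hKΛ (hXK hX.1)) (Finset.sdiff_subset.trans hKΛ)
    · rintro a b ⟨ha, hb, hne, he⟩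
      refine Finset.mem_filter.2 ⟨he, fun hc => ?_⟩
      have h6 := hc a (by simp)
      have h7 := hc b (by simp)
      simp only [Finset.mem_insert, Finset.mem_sdiff] at ha hb
      have : a = v := by tauto
      have : b = v := by tauto
      exact hne (by simp [*])
  · push Not at hbig
    -- minimal closed union
    let S := (Big Λ m ω).powerset.filter
      (fun U => (∀ x ∈ U, cl Λ ω x ⊆ U) ∧ t ≤ U.card)
    have hS : S.Nonempty := ⟨Big Λ m ω, by
      simp only [S, Finset.mem_filter, Finset.mem_powerset]
      exact ⟨subset_rfl, fun x hx => cl_sub_Big hx, by omega⟩⟩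
    obtain ⟨U, hU, hmin⟩ := Finset.exists_min_image S Finset.card hS
    simp only [S, Finset.mem_filter, Finset.mem_powerset] at hU hmin
    obtain ⟨hUB, hUc, hUt⟩ := hU
    have hUΛ : U ⊆ Λ := fun x hx => (mem_Big.1 (hUB hx)).1
    have hU4 : U.card ≤ 4 * t := by
      obtain ⟨x, hx⟩ : U.Nonempty := Finset.card_pos.1 (by omega)
      by_contra hlt
      have h3 := hbig x (hUΛ hx)
      have h6 := Finset.card_sdiff_add_card_eq_card (hUc x hx)
      have hpos : 1 ≤ (cl Λ ω x).card :=
        Finset.card_pos.2 ⟨x, mem_cl.2 ⟨hUΛ hx, cn_refl _ _⟩⟩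
      have := hmin (U \ cl Λ ω x) ⟨Finset.sdiff_subset.trans hUB, fun y hy z hz => ?_, by omega⟩
      · omega
      · rw [Finset.mem_sdiff] at hy ⊢
        refine ⟨hUc y hy.1 hz, fun hzx => hy.2 ?_⟩
        rw [mem_cl] at hz hzx ⊢
        exact ⟨hUΛ hy.1, cn_trans hzx.2 (cn_symm hz.2)⟩
    have key : ∀ (η : Finset (Sym2 W)) (T : W → Prop), (∀ x ∈ Λ, T x → ∀ y ∈ Λ, cn ω x y → T y) →
        (∀ a b, T a → T b → s(a, b) ∈ ω → s(a, b) ∈ η) →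
        ∀ x ∈ Big Λ m ω, T x → x ∈ Big Λ m η := by
      intro η T hT hη x hx hTx
      rw [mem_Big] at hx ⊢
      refine ⟨hx.1, hx.2.trans (Finset.card_le_card fun y hy => ?_)⟩
      rw [mem_cl] at hy ⊢
      refine ⟨hy.1, ?_⟩
      have hy' : Relation.ReflTransGen (fun a b => a ≠ b ∧ s(a, b) ∈ ω) x y := hy.2
      clear hy
      induction hy' with
      | refl => exact cn_refl _ _
      | tail h1 h2 ih =>
        refine cn_trans ih (cn_edge (hη _ _ ?_ ?_ h2.2))
        · exact hT x hx.1 hTx _ (cn_mem hω hx.1 h1) h1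
        · exact hT x hx.1 hTx _ (cn_mem hω hx.1 (h1.tail h2)) (h1.tail h2)
    refine ⟨ω.filter (fun e => ∀ a ∈ e, a ∈ U), ω.filter (fun e => ¬ ∀ a ∈ e, a ∈ U),
      Finset.filter_subset _ _, Finset.filter_subset _ _, Finset.disjoint_filter_filter_not _ _ _,
      hUt.trans (Finset.card_le_card fun x hx => ?_), ?_⟩
    · refine key _ (fun a => a ∈ U) ?_ ?_ x (hUB hx) hx
      · intro x _ hxU y hy hxy
        exact hUc x hxU (mem_cl.2 ⟨hy, hxy⟩)
      · intro a b ha hb he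
        refine Finset.mem_filter.2 ⟨he, fun c hc => ?_⟩
        rcases Sym2.mem_iff.1 hc with rfl | rfl <;> assumption
    · have h6 := Finset.card_sdiff_add_card_eq_card hUB
      refine le_trans (show t ≤ (Big Λ m ω \ U).card by omega)
        (Finset.card_le_card fun x hx => ?_)
      rw [Finset.mem_sdiff] at hx
      refine key _ (fun a => a ∉ U) ?_ ?_ x hx.1 hx.2
      · intro x hxΛ hxU y hy hxy hyU
        exact hxU (hUc y hyU (mem_cl.2 ⟨hxΛ, cn_symm hxy⟩))
      · intro a b ha hb he
        exact Finset.mem_filter.2 ⟨he, fun hc => ha (hc a (by simp))⟩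

variable {p : Sym2 W → ℝ}

theorem big_tail (h0 : ∀ e, 0 ≤ p e) (h1 : ∀ e, p e ≤ 1) (Λ : Finset W) {m : ℕ} (hm : 1 ≤ m)
    (j : ℕ) : Pr p Λ.sym2 (fun ω => 5 ^ j * m ≤ (Big Λ m ω).card) ≤
      (Pr p Λ.sym2 (fun ω => m ≤ (Big Λ m ω).card)) ^ (2 ^ j) := by
  induction j with
  | zero => simp
  | succ j ih =>
    have h5 : m ≤ 5 ^ j * m := Nat.le_mul_of_pos_left _ (by positivity)
    have hmon : ∀ a b : Finset (Sym2 W), a ⊆ b → 5 ^ j * m ≤ (Big Λ m a).card →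
        5 ^ j * m ≤ (Big Λ m b).card := fun a b hab h => h.trans (Finset.card_le_card (Big_mono hab))
    calc _ ≤ Pr p Λ.sym2 (fun ω => ∃ η ζ, η ⊆ ω ∧ ζ ⊆ ω ∧ Disjoint η ζ ∧
            5 ^ j * m ≤ (Big Λ m η).card ∧ 5 ^ j * m ≤ (Big Λ m ζ).card) :=
          Pr_mono h0 h1 fun ω hω h => big_split hω hm h5 (by rw [← mul_assoc, ← pow_succ']; exact h)
      _ ≤ _ := BK h0 h1 _ _ _ hmon hmon
      _ ≤ _ := by
          rw [pow_succ, pow_mul, sq]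
          exact mul_le_mul ih ih (Pr_nonneg h0 h1 _) (pow_nonneg (Pr_nonneg h0 h1 _) _)

theorem big_second (h0 : ∀ e, 0 ≤ p e) (h1 : ∀ e, p e ≤ 1) (Λ : Finset W) {m : ℕ} (hm : 1 ≤ m)
    {q G : ℝ} (hq : Pr p Λ.sym2 (fun ω => m ≤ (Big Λ m ω).card) ≤ q)
    (hG : ∀ J, ∑ j ∈ Finset.range J, (25:ℝ) ^ (j + 1) * q ^ (2 ^ j) ≤ G) :
    Ex p Λ.sym2 (fun ω => ((Big Λ m ω).card : ℝ) ^ 2) ≤ (m:ℝ) ^ 2 * G := by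
  have hq0 : 0 ≤ q := (Pr_nonneg h0 h1 _).trans hq
  set J := Λ.card + 1
  have hpt : ∀ ω, ω ⊆ Λ.sym2 → ((Big Λ m ω).card : ℝ) ^ 2 ≤
      ∑ j ∈ Finset.range J, (m:ℝ) ^ 2 * 25 ^ (j + 1) * ind (5 ^ j * m ≤ (Big Λ m ω).card) := by
    intro ω _
    set Y := (Big Λ m ω).card with hY
    have hnn : ∀ j ∈ Finset.range J, 0 ≤ (m:ℝ) ^ 2 * 25 ^ (j + 1) * ind (5 ^ j * m ≤ Y) :=
      fun j _ => mul_nonneg (by positivity) (ind_nonneg _)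
    by_cases hY0 : Y = 0
    · have h00 : (Y:ℝ) ^ 2 = 0 := by rw [hY0]; simp
      rw [h00]; exact Finset.sum_nonneg hnn
    have hYm : m ≤ Y := by
      obtain ⟨x, hx⟩ : (Big Λ m ω).Nonempty := Finset.card_pos.1 (Nat.pos_of_ne_zero hY0)
      exact (mem_Big.1 hx).2.trans (Finset.card_le_card (cl_sub_Big hx))
    have hYΛ : Y ≤ Λ.card := Finset.card_le_card (Finset.filter_subset _ _)
    -- choose j
    have hex : ∃ j, Y < 5 ^ (j + 1) * m := ⟨Y, by
      have : Y < 5 ^ (Y + 1) := (Nat.lt_pow_self (by norm_num)).trans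
        (Nat.pow_lt_pow_right (by norm_num) (by omega))
      nlinarith⟩
    classical
    obtain ⟨j, hj, hjmin⟩ : ∃ j, Y < 5 ^ (j + 1) * m ∧ ∀ i < j, ¬ Y < 5 ^ (i + 1) * m :=
      ⟨Nat.find hex, Nat.find_spec hex, fun i hi => Nat.find_min hex hi⟩
    have hj2 : 5 ^ j * m ≤ Y := by
      cases j with
      | zero => simpa using hYm
      | succ i => exact not_lt.1 (hjmin i (by omega))
    have hjJ : j ∈ Finset.range J := by
      rw [Finset.mem_range]
      have : j < 5 ^ j := Nat.lt_pow_self (by norm_num)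
      have : 5 ^ j ≤ 5 ^ j * m := Nat.le_mul_of_pos_right _ hm
      omega
    refine le_trans ?_ (Finset.single_le_sum hnn hjJ)
    rw [ind_true hj2, mul_one]
    have h7 : (Y:ℝ) ≤ 5 ^ (j + 1) * m := by exact_mod_cast hj.le
    calc (Y:ℝ) ^ 2 ≤ (5 ^ (j + 1) * m) ^ 2 := pow_le_pow_left₀ (by positivity) h7 2
      _ = _ := by rw [mul_pow, ← pow_mul, mul_comm (j+1) 2, pow_mul]; norm_num; ring
  refine (Ex_mono h0 h1 hpt).trans ?_
  rw [Ex_sum]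
  calc _ ≤ ∑ j ∈ Finset.range J, (m:ℝ) ^ 2 * (25 ^ (j + 1) * q ^ (2 ^ j)) := by
        refine Finset.sum_le_sum fun j _ => ?_
        rw [Ex_mul_left, mul_assoc]
        refine mul_le_mul_of_nonneg_left (mul_le_mul_of_nonneg_left ?_ (by positivity)) (by positivity)
        exact (big_tail h0 h1 Λ hm j).trans (pow_le_pow_left₀ (Pr_nonneg h0 h1 _) hq _)
    _ ≤ _ := by
        rw [← Finset.mul_sum]
        exact mul_le_mul_of_nonneg_left (hG J) (by positivity)

end Split

end

section
section cross
variable {W : Type*} [DecidableEq W] {p : Sym2 W → ℝ}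

/-- cross edges -/
def X (a a' : Finset W) : Finset (Sym2 W) := (a ×ˢ a').image fun q => s(q.1, q.2)

theorem mem_X {a a' : Finset W} {u v : W} (hu : u ∈ a) (hv : v ∈ a') : s(u, v) ∈ X a a' :=
  Finset.mem_image.2 ⟨(u, v), Finset.mk_mem_product hu hv, rfl⟩

theorem X_sub {a a' B B' : Finset W} (h : a ⊆ B) (h' : a' ⊆ B') : X a a' ⊆ X B B' :=
  Finset.image_subset_image (Finset.product_subset_product h h')

theorem X_sub_sym2 {a a' Λ : Finset W} (h : a ⊆ Λ) (h' : a' ⊆ Λ) : X a a' ⊆ Λ.sym2 := by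
  intro e he
  obtain ⟨⟨u, v⟩, huv, rfl⟩ := Finset.mem_image.1 he
  rw [Finset.mem_product] at huv
  exact Finset.mk_mem_sym2_iff.2 ⟨h huv.1, h' huv.2⟩

theorem X_card {a a' : Finset W} (h : Disjoint a a') : (X a a').card = a.card * a'.card := by
  rw [X, Finset.card_image_of_injOn, Finset.card_product]
  rintro ⟨u, v⟩ h1 ⟨u', v'⟩ h2 he
  simp only [Finset.coe_product, Set.mem_prod, Finset.mem_coe] at h1 h2
  simp only [Sym2.eq_iff] at he
  rcases he with ⟨rfl, rfl⟩ | ⟨rfl, rfl⟩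
  · rfl
  · exact absurd h2.2 (Finset.disjoint_left.1 h h1.1)

theorem X_disj_left {B B' : Finset W} (h : Disjoint B B') : Disjoint (B.sym2) (X B B') := by
  rw [Finset.disjoint_right]
  intro e he
  obtain ⟨⟨u, v⟩, huv, rfl⟩ := Finset.mem_image.1 he
  rw [Finset.mem_product] at huv
  rw [Finset.mk_mem_sym2_iff]
  exact fun hh => Finset.disjoint_left.1 h hh.2 huv.2

theorem X_disj_right {B B' : Finset W} (h : Disjoint B B') : Disjoint (B'.sym2) (X B B') := by
  rw [Finset.disjoint_right]
  intro e he
  obtain ⟨⟨u, v⟩, huv, rfl⟩ := Finset.mem_image.1 he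
  rw [Finset.mem_product] at huv
  rw [Finset.mk_mem_sym2_iff]
  exact fun hh => Finset.disjoint_left.1 h huv.1 hh.1

theorem sym2_disj {B B' : Finset W} (h : Disjoint B B') : Disjoint (B.sym2) (B'.sym2) := by
  rw [Finset.disjoint_left]
  intro e
  induction e with | _ u v => 
  rw [Finset.mk_mem_sym2_iff, Finset.mk_mem_sym2_iff]
  exact fun h1 h2 => Finset.disjoint_left.1 h h1.1 h2.1

theorem three_indep {B B' Λ : Finset W} (hB : B ⊆ Λ) (hB' : B' ⊆ Λ) (hd : Disjoint B B')
    (h : Finset (Sym2 W) → Finset (Sym2 W) → Finset (Sym2 W) → ℝ) :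
    Ex p Λ.sym2 (fun ω => h (ω ∩ B.sym2) (ω ∩ B'.sym2) (ω ∩ X B B')) =
      Ex p B.sym2 fun a => Ex p B'.sym2 fun a' => Ex p (X B B') fun x => h a a' x := by
  have h1 : Disjoint B.sym2 (B'.sym2 ∪ X B B') :=
    Finset.disjoint_union_right.2 ⟨sym2_disj hd, X_disj_left hd⟩
  have h2 := Ex_indep (p := p) (Finset.sym2_mono hB)
    (Finset.union_subset (Finset.sym2_mono hB') (X_sub_sym2 hB hB')) h1
    (fun a b => h a (b ∩ B'.sym2) (b ∩ X B B'))
  have h3 : ∀ a, Ex p (B'.sym2 ∪ X B B') (fun b => h a (b ∩ B'.sym2) (b ∩ X B B')) =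
      Ex p B'.sym2 fun a' => Ex p (X B B') fun x => h a a' x := fun a =>
    Ex_union _ _ (X_disj_right hd) (fun a' x => h a a' x)
  simp only [h3] at h2
  rw [← h2]
  refine Ex_congr fun ω _ => ?_
  rw [Finset.inter_assoc, Finset.inter_assoc, Finset.union_inter_cancel_left,
    Finset.union_inter_cancel_right]

theorem cross_none (h1 : ∀ e, p e ≤ 1) {B B' a a' : Finset W} (ha : a ⊆ B) (ha' : a' ⊆ B')
    (hd : Disjoint B B') {l : ℝ} (hl : ∀ u ∈ B, ∀ v ∈ B', 1 - p s(u, v) ≤ Real.exp (-l)) :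
    Pr p (X B B') (fun ω => ∀ u ∈ a, ∀ v ∈ a', s(u, v) ∉ ω) ≤
      Real.exp (-(l * (a.card * a'.card))) := by
  have e1 : Pr p (X B B') (fun ω => ∀ u ∈ a, ∀ v ∈ a', s(u, v) ∉ ω) =
      Ex p (X B B') (fun ω => ind (ω ∩ X a a' = ∅)) := by
    unfold Pr
    refine Ex_congr fun ω _ => ?_
    congr 1
    rw [eq_iff_iff, Finset.eq_empty_iff_forall_notMem]
    constructor
    · intro h e he
      rw [Finset.mem_inter] at he
      obtain ⟨⟨u, v⟩, huv, rfl⟩ := Finset.mem_image.1 he.2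
      rw [Finset.mem_product] at huv
      exact h u huv.1 v huv.2 he.1
    · intro h u hu v hv he
      exact h _ (Finset.mem_inter.2 ⟨he, mem_X hu hv⟩)
  rw [e1, Ex_marg (X_sub ha ha') (fun ω => ind (ω = ∅)), Ex_none]
  calc _ ≤ ∏ e ∈ X a a', Real.exp (-l) := by
        refine Finset.prod_le_prod (fun e _ => by linarith [h1 e]) fun e he => ?_
        obtain ⟨⟨u, v⟩, huv, rfl⟩ := Finset.mem_image.1 he
        rw [Finset.mem_product] at huv
        exact hl u (ha huv.1) v (ha' huv.2)
    _ = _ := by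
        rw [Finset.prod_const, X_card (hd.mono ha ha'), ← Real.exp_nat_mul]
        congr 1; push_cast; ring

theorem Ex_swap (E F : Finset (Sym2 W)) (h : Finset (Sym2 W) → Finset (Sym2 W) → ℝ) (hEF : Disjoint E F) :
    Ex p E (fun a => Ex p F fun b => h a b) = Ex p F (fun b => Ex p E fun a => h a b) := by
  rw [← Ex_union E F hEF, ← Ex_union F E hEF.symm (fun b a => h a b), Finset.union_comm]

/-- concavity -/
theorem conc {l m t : ℝ} (hl : 0 ≤ l) (hm : 0 < m) (ht0 : 0 ≤ t) (ht : t ≤ m) :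
    t * ((1 - Real.exp (-(l * m))) / m) ≤ 1 - Real.exp (-(l * t)) := by
  have hc := convexOn_exp.2 (Set.mem_univ (-(l*m))) (Set.mem_univ (0:ℝ))
    (show (0:ℝ) ≤ t / m by positivity)
    (show (0:ℝ) ≤ 1 - t / m by rw [sub_nonneg, div_le_one hm]; exact ht) (by ring)
  simp only [smul_eq_mul, mul_zero, add_zero, Real.exp_zero, mul_one] at hc
  have : t / m * -(l * m) = -(l*t) := by field_simp
  rw [this] at hc
  have e : t * ((1 - Real.exp (-(l * m))) / m) = t / m - t/m * Real.exp (-(l*m)) := by ring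
  rw [e]; linarith

/-- sum of two point function -/
noncomputable def SS (p : Sym2 W → ℝ) (B : Finset W) : ℝ := ∑ x ∈ B, ∑ y ∈ B, tau p B x y

theorem SS_eq (B : Finset W) : SS p B = Ex p B.sym2 fun ω => ∑ x ∈ B, ((cl B ω x).card : ℝ) := by
  rw [Ex_sum]
  refine Finset.sum_congr rfl fun x _ => ?_
  unfold tau Pr
  rw [← Ex_sum]
  refine Ex_congr fun ω _ => ?_
  classical
  simp only [ind, Finset.sum_boole]
  congr 2

/-- truncated sum -/
noncomputable def SL (p : Sym2 W → ℝ) (B : Finset W) (m : ℕ) : ℝ :=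
  Ex p B.sym2 fun ω => ∑ x ∈ B, ((cl B ω x).card : ℝ) * ind ((cl B ω x).card < m)

theorem SS_le_SL (h0 : ∀ e, 0 ≤ p e) (h1 : ∀ e, p e ≤ 1) (B : Finset W) {m : ℕ} :
    SS p B ≤ SL p B m + Ex p B.sym2 (fun ω => ((Big B m ω).card : ℝ) ^ 2) := by
  rw [SS_eq, SL, ← Ex_add]
  refine Ex_mono h0 h1 fun ω _ => ?_
  have : ∀ x ∈ B, ((cl B ω x).card : ℝ) ≤ ((cl B ω x).card : ℝ) * ind ((cl B ω x).card < m) +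
      (if x ∈ Big B m ω then ((Big B m ω).card : ℝ) else 0) := by
    intro x hx
    by_cases h : (cl B ω x).card < m
    · rw [ind_true h, mul_one]; split_ifs <;> simp
    · have hb : x ∈ Big B m ω := mem_Big.2 ⟨hx, not_lt.1 h⟩
      rw [ind_false h, if_pos hb, mul_zero, zero_add]
      exact_mod_cast Finset.card_le_card (cl_sub_Big hb)
  refine (Finset.sum_le_sum this).trans ?_
  rw [Finset.sum_add_distrib]
  gcongr
  rw [← Finset.sum_filter, Finset.sum_const, nsmul_eq_mul, sq]
  gcongr
  intro x hx
  exact (Finset.mem_filter.1 hx).2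

theorem SS_two (h0 : ∀ e, 0 ≤ p e) (h1 : ∀ e, p e ≤ 1) {B B' Λ : Finset W} (hB : B ⊆ Λ) (hB' : B' ⊆ Λ)
    (hd : Disjoint B B') {l : ℝ} (hl0 : 0 ≤ l)
    (hl : ∀ u ∈ B, ∀ v ∈ B', 1 - p s(u, v) ≤ Real.exp (-l)) {m : ℕ} (hm : 1 ≤ m) :
    (1 - Real.exp (-(l * (m:ℝ) ^ 2))) / (m:ℝ) ^ 2 * (SL p B m * SL p B' m) ≤ SS p Λ := by
  have hm' : (0:ℝ) < (m:ℝ) ^ 2 := by have : (0:ℝ) < m := by exact_mod_cast hm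
                                     positivity
  set κ := (1 - Real.exp (-(l * (m:ℝ) ^ 2))) / (m:ℝ) ^ 2
  have hκ : 0 ≤ κ := div_nonneg (sub_nonneg.2 (Real.exp_le_one_iff.2 (by nlinarith))) hm'.le
  have step : ∀ x ∈ B, ∀ y ∈ B', κ * (
      Ex p B.sym2 (fun a => ((cl B a x).card : ℝ) * ind ((cl B a x).card < m)) *
      Ex p B'.sym2 (fun a => ((cl B' a y).card : ℝ) * ind ((cl B' a y).card < m))) ≤ tau p Λ x y := by
    intro x _ y _
    have t1 := three_indep (p := p) hB hB' hd (fun a a' ω => 1 - ind (∀ u ∈ cl B a x, ∀ v ∈ cl B' a' y, s(u, v) ∉ ω))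
    have t2 : Ex p Λ.sym2 (fun ω => 1 - ind (∀ u ∈ cl B (ω ∩ B.sym2) x, ∀ v ∈ cl B' (ω ∩ B'.sym2) y, s(u, v) ∉ ω ∩ X B B'))
        ≤ tau p Λ x y := by
      refine Ex_mono h0 h1 fun ω _ => ?_
      rw [← ind_not]
      refine ind_mono fun h => ?_
      push Not at h
      obtain ⟨u, hu, v, hv, huv⟩ := h
      have hu' := cn_mono Finset.inter_subset_left (mem_cl.1 hu).2
      have hv' := cn_mono Finset.inter_subset_left (mem_cl.1 hv).2
      exact cn_trans hu' (cn_trans (cn_edge (Finset.mem_inter.1 huv).1) (cn_symm hv'))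
    rw [t1] at t2
    refine le_trans ?_ t2
    rw [← Ex_mul_right, ← Ex_mul_left]
    refine Ex_mono h0 h1 fun a _ => ?_
    rw [← Ex_mul_left, ← Ex_mul_left]
    refine Ex_mono h0 h1 fun a' _ => ?_
    have e1 : Ex p (X B B') (fun ω => 1 - ind (∀ u ∈ cl B a x, ∀ v ∈ cl B' a' y, s(u, v) ∉ ω)) =
        1 - Pr p (X B B') (fun ω => ∀ u ∈ cl B a x, ∀ v ∈ cl B' a' y, s(u, v) ∉ ω) := by
      rw [← Pr_not]; unfold Pr; simp only [ind_not]
    have hsub : ∀ (B : Finset W) a x, cl B a x ⊆ B := fun B a x z hz => (mem_cl.1 hz).1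
    have e2 := cross_none h1 (hsub B a x) (hsub B' a' y) hd hl
    set k : ℕ := (cl B a x).card
    set k' : ℕ := (cl B' a' y).card
    rw [e1]
    have hge : 0 ≤ 1 - Real.exp (-(l * ((k:ℝ) * k'))) :=
      sub_nonneg.2 (Real.exp_le_one_iff.2 (by have : 0 ≤ l * ((k:ℝ)*k') := by positivity
                                              linarith))
    by_cases hk : k < m
    · by_cases hk' : k' < m
      · rw [ind_true hk, ind_true hk']
        have hkk : (k:ℝ) * k' ≤ (m:ℝ)^2 := by
          rw [sq]; gcongr
        have := conc hl0 hm' (by positivity) hkk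
        have e3 : κ * (k * 1 * (k' * 1)) = (k:ℝ) * k' * κ := by ring
        rw [e3]
        linarith
      · rw [ind_false hk']; simp only [mul_zero]; linarith
    · rw [ind_false hk]; simp only [mul_zero, zero_mul]; linarith
  have e1 : SL p B m * SL p B' m = ∑ x ∈ B, ∑ y ∈ B', 
      Ex p B.sym2 (fun a => ((cl B a x).card : ℝ) * ind ((cl B a x).card < m)) *
      Ex p B'.sym2 (fun a => ((cl B' a y).card : ℝ) * ind ((cl B' a y).card < m)) := by
    unfold SL
    rw [Ex_sum, Ex_sum, Finset.sum_mul_sum]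
  rw [e1, Finset.mul_sum]
  calc _ ≤ ∑ x ∈ B, ∑ y ∈ B', tau p Λ x y := by
        refine Finset.sum_le_sum fun x hx => ?_
        rw [Finset.mul_sum]
        exact Finset.sum_le_sum fun y hy => step x hx y hy
    _ ≤ ∑ x ∈ B, ∑ y ∈ Λ, tau p Λ x y := Finset.sum_le_sum fun x _ =>
        Finset.sum_le_sum_of_subset_of_nonneg hB' fun y _ _ => tau_nonneg h0 h1 _ _ _
    _ ≤ _ := Finset.sum_le_sum_of_subset_of_nonneg hB fun x _ _ =>
        Finset.sum_nonneg fun y _ => tau_nonneg h0 h1 _ _ _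

end cross

end

section
section transl
variable {W : Type*} [DecidableEq W] {p : Sym2 W → ℝ}

/-- induced equivalence on edges -/
def s2 (σ : W ≃ W) : Sym2 W ≃ Sym2 W where
  toFun := Sym2.map σ
  invFun := Sym2.map σ.symm
  left_inv e := by rw [Sym2.map_map]; simp
  right_inv e := by rw [Sym2.map_map]; simp

theorem sym2_map_eq (σ : W ≃ W) (B : Finset W) :
    (B.map σ.toEmbedding).sym2 = B.sym2.map (s2 σ).toEmbedding := by
  ext e
  induction e with | _ u v => 
  simp only [Finset.mk_mem_sym2_iff, Finset.mem_map_equiv]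
  exact Finset.mk_mem_sym2_iff.symm

theorem Ex_tr (σ : W ≃ W) (hσ : ∀ x y, p s(σ x, σ y) = p s(x, y)) (B : Finset W)
    (f : Finset (Sym2 W) → ℝ) :
    Ex p (B.map σ.toEmbedding).sym2 f = Ex p B.sym2 (fun ω => f (ω.map (s2 σ).toEmbedding)) := by
  rw [sym2_map_eq, Ex_map]
  intro e
  induction e with | _ u v => 
  exact hσ u v

theorem mem_map_s (σ : W ≃ W) (ω : Finset (Sym2 W)) (x y : W) :
    s(σ x, σ y) ∈ ω.map (s2 σ).toEmbedding ↔ s(x, y) ∈ ω := by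
  rw [Finset.mem_map_equiv]
  simp [s2]

theorem cn_map (σ : W ≃ W) (ω : Finset (Sym2 W)) (x y : W) :
    cn (ω.map (s2 σ).toEmbedding) (σ x) (σ y) ↔ cn ω x y := by
  have key : ∀ (σ : W ≃ W) (ω : Finset (Sym2 W)) (x y : W), cn ω x y →
      cn (ω.map (s2 σ).toEmbedding) (σ x) (σ y) := by
    intro σ ω x y h
    induction h with
    | refl => exact cn_refl _ _
    | tail _ hb ih => exact cn_trans ih (cn_edge ((mem_map_s σ ω _ _).2 hb.2))
  refine ⟨fun h => ?_, key σ ω x y⟩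
  have h2 := key σ.symm _ _ _ h
  have h3 : (ω.map (s2 σ).toEmbedding).map (s2 σ.symm).toEmbedding = ω := by
    ext e
    rw [Finset.mem_map_equiv, Finset.mem_map_equiv]
    have : (s2 σ).symm ((s2 σ.symm).symm e) = e := (s2 σ).symm_apply_apply e
    rw [this]
  rw [h3] at h2
  simpa using h2

theorem tau_tr (σ : W ≃ W) (hσ : ∀ x y, p s(σ x, σ y) = p s(x, y)) (B : Finset W) (x y : W) :
    tau p (B.map σ.toEmbedding) (σ x) (σ y) = tau p B x y := by
  unfold tau Pr
  rw [Ex_tr σ hσ]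
  simp only [cn_map]

theorem cl_map (σ : W ≃ W) (ω : Finset (Sym2 W)) (B : Finset W) (x : W) :
    cl (B.map σ.toEmbedding) (ω.map (s2 σ).toEmbedding) (σ x) = (cl B ω x).map σ.toEmbedding := by
  ext y
  obtain ⟨y, rfl⟩ := σ.surjective y
  simp [mem_cl, cn_map]

theorem Big_map (σ : W ≃ W) (ω : Finset (Sym2 W)) (B : Finset W) (m : ℕ) :
    Big (B.map σ.toEmbedding) m (ω.map (s2 σ).toEmbedding) = (Big B m ω).map σ.toEmbedding := by
  ext y
  obtain ⟨y, rfl⟩ := σ.surjective y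
  rw [mem_Big, cl_map]
  simp [mem_Big]

theorem SL_tr (σ : W ≃ W) (hσ : ∀ x y, p s(σ x, σ y) = p s(x, y)) (B : Finset W) (m : ℕ) :
    SL p (B.map σ.toEmbedding) m = SL p B m := by
  unfold SL
  rw [Ex_tr σ hσ]
  simp [Finset.sum_map, cl_map]

theorem PrBig_tr (σ : W ≃ W) (hσ : ∀ x y, p s(σ x, σ y) = p s(x, y)) (B : Finset W) (m k : ℕ) :
    Pr p (B.map σ.toEmbedding).sym2 (fun ω => k ≤ (Big (B.map σ.toEmbedding) m ω).card) =
      Pr p B.sym2 (fun ω => k ≤ (Big B m ω).card) := by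
  unfold Pr
  rw [Ex_tr σ hσ]
  simp [Big_map]

end transl

/-- Hypotheses on edge probabilities. -/
structure PH (d : ℕ) (p : Sym2 (V d) → ℝ) (α c C : ℝ) : Prop where
  h0 : ∀ e, 0 ≤ p e
  h1 : ∀ e, p e ≤ 1
  tr : ∀ z x y : V d, p s(x + z, y + z) = p s(x, y)
  lo : ∀ x y : V d, x ≠ y → 1 - p s(x, y) ≤ Real.exp (-(c * (normInf (x - y) : ℝ) ^ (-((d:ℝ) + α))))
  up : ∀ x y : V d, x ≠ y → p s(x, y) ≤ C * (normInf (x - y) : ℝ) ^ (-((d:ℝ) + α))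

variable {d : ℕ}

theorem normInf_le {x : V d} {n : ℕ} : normInf x ≤ n ↔ ∀ i, (x i).natAbs ≤ n := by
  simp [normInf]

theorem le_normInf (x : V d) (i : Fin d) : (x i).natAbs ≤ normInf x := normInf_le.1 le_rfl i

theorem normInf_eq_zero {x : V d} : normInf x = 0 ↔ x = 0 := by
  rw [← Nat.le_zero, normInf_le]
  constructor
  · intro h; funext i; have := h i; simp at this; simpa using this
  · rintro rfl; simp

theorem normInf_pos {x y : V d} (h : x ≠ y) : 1 ≤ normInf (x - y) := by
  rw [Nat.one_le_iff_ne_zero, Ne, normInf_eq_zero, sub_eq_zero]; exact h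

theorem normInf_add (x y : V d) : normInf (x + y) ≤ normInf x + normInf y := by
  rw [normInf_le]; intro i
  have := le_normInf x i; have := le_normInf y i
  have := Int.natAbs_add_le (x i) (y i)
  simp only [Pi.add_apply]; omega

theorem normInf_neg (x : V d) : normInf (-x) = normInf x := by simp [normInf]

theorem normInf_comm (x y : V d) : normInf (x - y) = normInf (y - x) := by
  rw [← normInf_neg, neg_sub]

theorem normInf_tri (x y z : V d) : normInf (x - z) ≤ normInf (x - y) + normInf (y - z) := by
  have := normInf_add (x - y) (y - z)
  simpa using this

/-- Box of side `L` with corner `x`. -/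
noncomputable def box (L : ℕ) (x : V d) : Finset (V d) := Fintype.piFinset fun i => Finset.Ico (x i) (x i + L)

theorem mem_box {L : ℕ} {x y : V d} : y ∈ box L x ↔ ∀ i, x i ≤ y i ∧ y i < x i + L := by
  simp [box]

theorem card_box (L : ℕ) (x : V d) : (box L x).card = L ^ d := by
  simp [box, Fintype.card_piFinset]

theorem box_map (L : ℕ) (x z : V d) : (box L x).map (Equiv.addRight z).toEmbedding = box L (x + z) := by
  ext y
  rw [Finset.mem_map_equiv, mem_box, mem_box]
  refine forall_congr' fun i => ?_
  simp only [Equiv.addRight_symm, Equiv.coe_addRight, Pi.add_apply, Pi.neg_apply]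
  omega

theorem box_norm {L : ℕ} {x u v : V d} (hu : u ∈ box L x) (hv : v ∈ box L x) : normInf (u - v) ≤ L := by
  rw [normInf_le]; intro i
  have := mem_box.1 hu i; have := mem_box.1 hv i
  simp only [Pi.sub_apply]; omega

variable {p : Sym2 (V d) → ℝ} {α c C : ℝ}

theorem PH.tr' (h : PH d p α c C) (z : V d) : ∀ x y, p s(Equiv.addRight z x, Equiv.addRight z y) = p s(x, y) :=
  fun x y => h.tr z x y

theorem PH.lo' (h : PH d p α c C) (hc : 0 ≤ c) (hα : 0 ≤ α) {L : ℕ} {u v : V d} (hne : u ≠ v)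
    (hL : normInf (u - v) ≤ L) : 1 - p s(u, v) ≤ Real.exp (-(c * (L:ℝ) ^ (-((d:ℝ) + α)))) := by
  refine (h.lo u v hne).trans ?_
  rw [Real.exp_le_exp, neg_le_neg_iff]
  refine mul_le_mul_of_nonneg_left ?_ hc
  refine Real.rpow_le_rpow_of_nonpos ?_ (by exact_mod_cast hL) (by linarith [(Nat.cast_nonneg d : (0:ℝ) ≤ d)])
  exact_mod_cast normInf_pos hne

theorem SL_box (h : PH d p α c C) (L m : ℕ) (x : V d) : SL p (box L x) m = SL p (box L 0) m := by
  have := SL_tr (p := p) (Equiv.addRight x) (h.tr' x) (box L 0) m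
  rwa [box_map, zero_add] at this

theorem PrBig_box (h : PH d p α c C) (L m k : ℕ) (x : V d) :
    Pr p (box L x).sym2 (fun ω => k ≤ (Big (box L x) m ω).card) =
      Pr p (box L 0).sym2 (fun ω => k ≤ (Big (box L 0) m ω).card) := by
  have := PrBig_tr (p := p) (Equiv.addRight x) (h.tr' x) (box L 0) m k
  rwa [box_map, zero_add] at this

theorem SS_step (hd : 1 ≤ d) (hc : 0 ≤ c) (hα : 0 ≤ α) (h : PH d p α c C) {L b m : ℕ} (hL : 1 ≤ L) (hb : 2 ≤ b) (hm : 1 ≤ m)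
    {q G : ℝ} (hq : Pr p (box L (0 : V d)).sym2 (fun ω => m ≤ (Big (box L 0) m ω).card) ≤ q)
    (hG : ∀ J, ∑ j ∈ Finset.range J, (25:ℝ) ^ (j + 1) * q ^ (2 ^ j) ≤ G)
    (hS : 2 * ((m:ℝ) ^ 2 * G) ≤ SS p (box L (0 : V d))) :
    (1 - Real.exp (-(c * ((b * L : ℕ):ℝ) ^ (-((d:ℝ) + α)) * (m:ℝ) ^ 2))) / (4 * (m:ℝ) ^ 2) *
      (SS p (box L (0 : V d))) ^ 2 ≤ SS p (box (b * L) (0 : V d)) := by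
  have h2 := big_second h.h0 h.h1 (box L (0 : V d)) hm hq hG
  have h3 := SS_le_SL h.h0 h.h1 (box L (0 : V d)) (m := m)
  have h4 : SS p (box L (0 : V d)) / 2 ≤ SL p (box L 0) m := by linarith
  have hSS : 0 ≤ SS p (box L (0 : V d)) := Finset.sum_nonneg fun x _ => Finset.sum_nonneg fun y _ =>
    tau_nonneg h.h0 h.h1 _ _ _
  set z : V d := fun _ => L
  have hbL : 2 * L ≤ b * L := Nat.mul_le_mul_right _ hb
  have hB : box L (0 : V d) ⊆ box (b * L) 0 := by
    intro y hy; rw [mem_box] at hy ⊢; intro i; have := hy i; constructor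
    · exact this.1
    · have : ((b * L : ℕ) : ℤ) ≥ 2 * L := by exact_mod_cast hbL
      omega
  have hB' : box L z ⊆ box (b * L) 0 := by
    intro y hy; rw [mem_box] at hy ⊢; intro i; have := hy i
    simp only [z] at this
    simp only [Pi.zero_apply]
    have : ((b * L : ℕ) : ℤ) ≥ 2 * L := by exact_mod_cast hbL
    constructor <;> omega
  have hdisj : Disjoint (box L (0 : V d)) (box L z) := by
    rw [Finset.disjoint_left]
    intro y hy hy'
    have h1 := mem_box.1 hy ⟨0, hd⟩; have h2 := mem_box.1 hy' ⟨0, hd⟩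
    simp only [z, Pi.zero_apply] at h1 h2; omega
  have h5 := SS_two h.h0 h.h1 hB hB' hdisj (l := c * ((b * L : ℕ):ℝ) ^ (-((d:ℝ) + α))) (by positivity)
    (fun u hu v hv => h.lo' hc hα (fun e => Finset.disjoint_left.1 hdisj hu (e ▸ hv)) (box_norm (hB hu) (hB' hv))) hm
  rw [SL_box h L m z] at h5
  refine le_trans ?_ h5
  have hnn : 0 ≤ (1 - Real.exp (-(c * ((b * L : ℕ):ℝ) ^ (-((d:ℝ) + α)) * (m:ℝ) ^ 2))) :=
    sub_nonneg.2 (Real.exp_le_one_iff.2 (by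
      have : 0 ≤ c * ((b * L : ℕ):ℝ) ^ (-((d:ℝ) + α)) * (m:ℝ) ^ 2 := by positivity
      linarith))
  generalize (1 - Real.exp (-(c * ((b * L : ℕ):ℝ) ^ (-((d:ℝ) + α)) * (m:ℝ) ^ 2))) = E at *
  generalize SS p (box L (0 : V d)) = S at *
  generalize SL p (box L (0 : V d)) m = T at *
  have e : E / (4 * (m:ℝ) ^ 2) * S ^ 2 = E / (m:ℝ) ^ 2 * ((S / 2) * (S / 2)) := by
    rw [mul_comm (4:ℝ), ← div_div]; ring
  rw [e]
  have : S / 2 * (S / 2) ≤ T * T := by nlinarith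
  exact mul_le_mul_of_nonneg_left this (by positivity)

theorem SS_le (h : PH d p α c C) (B : Finset (V d)) : SS p B ≤ (B.card : ℝ) ^ 2 := by
  unfold SS
  calc _ ≤ ∑ x ∈ B, ∑ y ∈ B, (1:ℝ) := Finset.sum_le_sum fun x _ => Finset.sum_le_sum fun y _ =>
        tau_le_one h.h0 h.h1 _ _ _
    _ = _ := by simp [sq]

theorem G_exists {q : ℝ} (hq0 : 0 ≤ q) (hq : q < 1) :
    ∃ G : ℝ, 1 ≤ G ∧ ∀ J, ∑ j ∈ Finset.range J, (25:ℝ) ^ (j + 1) * q ^ (2 ^ j) ≤ G := by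
  have hs : Summable fun j : ℕ => (25:ℝ) ^ (j + 1) * q ^ (2 ^ j) := by
    rcases hq0.eq_or_lt with rfl | hq0
    · refine summable_zero.congr fun j => ?_
      rw [zero_pow (by positivity), mul_zero]
    refine summable_of_ratio_test_tendsto_lt_one (l := 0) (by norm_num) ?_ ?_
    · filter_upwards with j; positivity
    · have : Filter.Tendsto (fun j : ℕ => 25 * q ^ (2 ^ j)) Filter.atTop (nhds (25 * 0)) := by
        refine Filter.Tendsto.const_mul _ ?_
        exact (tendsto_pow_atTop_nhds_zero_of_lt_one hq0.le hq).comp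
          (tendsto_pow_atTop_atTop_of_one_lt (by norm_num))
      rw [mul_zero] at this
      refine this.congr fun j => ?_
      rw [Real.norm_of_nonneg (by positivity), Real.norm_of_nonneg (by positivity)]
      rw [pow_succ (25:ℝ) (j+1), pow_succ 2 j, mul_two, pow_add q]
      field_simp
  refine ⟨max 1 (∑' j : ℕ, (25:ℝ) ^ (j + 1) * q ^ (2 ^ j)), le_max_left _ _, fun J => ?_⟩
  exact (hs.sum_le_tsum _ fun j _ => by positivity).trans (le_max_right _ _)

end

section
variable {d : ℕ} {α c C : ℝ}

theorem pow_cast_rpow (b n : ℕ) (s : ℝ) : ((b ^ n : ℕ) : ℝ) ^ s = ((b:ℝ) ^ s) ^ n := by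
  push_cast
  rw [← Real.rpow_natCast, ← Real.rpow_natCast, ← Real.rpow_mul (by positivity),
    ← Real.rpow_mul (by positivity), mul_comm]

theorem rec_main (hd : 1 ≤ d) (hα : 0 < α) (hc : 0 < c) {b : ℕ} (hb : 2 ≤ b) {η : ℝ}
    (hη0 : 0 < η) (hη1 : η ≤ 1) {K : ℝ} (hK : 1 ≤ K) :
    ∃ A : ℝ, 0 < A ∧ ∀ p : Sym2 (V d) → ℝ, PH d p α c C →
      (∃ n m : ℕ, 1 ≤ m ∧ K ^ 2 * ((b:ℝ) ^ ((d:ℝ) + α)) ^ n ≤ (m:ℝ) ^ 2 ∧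
        1 - η < Pr p (box (b ^ n) (0 : V d)).sym2 (fun ω => m ≤ (Big (box (b ^ n) 0) m ω).card)) ∨
      ∀ n : ℕ, SS p (box (b ^ n) (0 : V d)) ≤ A * ((b:ℝ) ^ ((d:ℝ) + α)) ^ n := by
  obtain ⟨G, hG1, hG⟩ := G_exists (q := 1 - η) (by linarith) (by linarith)
  have hb1 : (1:ℝ) < b := by exact_mod_cast (by omega : 1 < b)
  set D : ℝ := (b:ℝ) ^ ((d:ℝ) + α) with hDdef
  have hD : 1 < D := Real.one_lt_rpow hb1 (by positivity)
  have hD0 : 0 < D := by linarith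
  set M : ℝ := (b:ℝ) ^ (2 * d) with hMdef
  have hM : 1 ≤ M := one_le_pow₀ hb1.le
  set ε := 1 - Real.exp (-(c * K ^ 2 / D)) with hε
  have hε0 : 0 < ε := by
    have h : 0 < c * K ^ 2 / D := by positivity
    have := Real.exp_lt_exp.2 (neg_lt_zero.2 h)
    rw [Real.exp_zero] at this
    rw [hε]; linarith
  set κ := ε / (16 * K ^ 2 * D) with hκ
  have hκ0 : 0 < κ := by positivity
  refine ⟨max (8 * K ^ 2 * G) (M / κ), lt_max_of_lt_right (by positivity), fun p hp => ?_⟩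
  set A := max (8 * K ^ 2 * G) (M / κ) with hA
  have hA0 : 0 < A := lt_max_of_lt_right (by positivity)
  have hA1 : 8 * K ^ 2 * G ≤ A := le_max_left _ _
  have hA2 : M ≤ κ * A := by
    have : M / κ ≤ A := le_max_right _ _
    rw [div_le_iff₀ hκ0] at this; linarith
  by_contra hcon
  push Not at hcon
  obtain ⟨h1, n0, hn0⟩ := hcon
  have key : ∀ k : ℕ, A * M ^ k * D ^ (n0 + k) ≤ SS p (box (b ^ (n0 + k)) (0 : V d)) := by
    intro k
    induction k with
    | zero => simpa using hn0.le
    | succ k ih =>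
      set n := n0 + k with hn
      have hDn : 1 ≤ D ^ n := one_le_pow₀ hD.le
      have hS : A * D ^ n ≤ SS p (box (b ^ n) (0 : V d)) := by
        refine le_trans ?_ ih
        have : 1 ≤ M ^ k := one_le_pow₀ hM
        have : A * D ^ n * 1 ≤ A * D ^ n * M ^ k := by gcongr
        linarith
      set r := K * Real.sqrt (D ^ n) with hr
      have hr1 : 1 ≤ r := by
        have : 1 ≤ Real.sqrt (D ^ n) := Real.one_le_sqrt.2 hDn
        nlinarith
      have hr2 : r ^ 2 = K ^ 2 * D ^ n := by rw [hr, mul_pow, Real.sq_sqrt (by positivity)]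
      set m := ⌈r⌉₊ with hm
      have hm1 : r ≤ m := Nat.le_ceil r
      have hm2 : (m:ℝ) ≤ 2 * r := by
        have := Nat.ceil_lt_add_one (by linarith : 0 ≤ r)
        linarith
      have hm0 : 1 ≤ m := by
        have : (1:ℝ) ≤ m := by linarith
        exact_mod_cast this
      have hmlo : K ^ 2 * D ^ n ≤ (m:ℝ) ^ 2 := by rw [← hr2]; gcongr
      have hmhi : (m:ℝ) ^ 2 ≤ 4 * (K ^ 2 * D ^ n) := by
        rw [← hr2]; nlinarith
      have hst := SS_step hd hc.le hα.le hp (L := b ^ n) (b := b) (m := m)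
        (Nat.one_le_pow _ _ (by omega)) hb hm0 (h1 n m hm0 hmlo) hG (by
          refine le_trans ?_ hS
          have : (m:ℝ)^2 * G ≤ 4 * (K ^ 2 * D ^ n) * G := by gcongr
          have : 8 * K ^ 2 * G * D ^ n ≤ A * D ^ n := by gcongr
          linarith)
      have e1 : b * b ^ n = b ^ (n + 1) := by rw [pow_succ, mul_comm]
      rw [e1, pow_cast_rpow, Real.rpow_neg (by positivity), ← hDdef] at hst
      have e2 : n0 + (k + 1) = n + 1 := by omega
      rw [e2]
      refine le_trans ?_ hst
      have hexp : ε ≤ 1 - Real.exp (-(c * D⁻¹ ^ (n + 1) * (m:ℝ) ^ 2)) := by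
        rw [hε]
        have : c * K ^ 2 / D ≤ c * D⁻¹ ^ (n + 1) * (m:ℝ) ^ 2 := by
          calc c * K ^ 2 / D = c * D⁻¹ ^ (n + 1) * (K ^ 2 * D ^ n) := by
                rw [inv_pow, pow_succ]; field_simp; ring
            _ ≤ _ := by gcongr
        have := Real.exp_le_exp.2 (neg_le_neg this)
        linarith
      have hfac : κ * D / D ^ n ≤ (1 - Real.exp (-(c * D⁻¹ ^ (n + 1) * (m:ℝ) ^ 2))) / (4 * (m:ℝ) ^ 2) := by
        have hmp : (0:ℝ) < (m:ℝ) ^ 2 := by positivity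
        calc κ * D / D ^ n = ε / (4 * (4 * (K ^ 2 * D ^ n))) := by rw [hκ]; field_simp; ring
          _ ≤ ε / (4 * (m:ℝ) ^ 2) := by gcongr
          _ ≤ _ := by gcongr
      generalize SS p (box (b ^ n) (0 : V d)) = S at *
      have hS0 : 0 ≤ S := le_trans (by positivity) hS
      generalize (1 - Real.exp (-(c * D⁻¹ ^ (n + 1) * (m:ℝ) ^ 2))) / (4 * (m:ℝ) ^ 2) = R at *
      clear hst hmlo hmhi hexp
      clear_value κ D M A
      have hDn0 : 0 < D ^ n := by linarith
      calc A * M ^ (k + 1) * D ^ (n + 1) = M * D * (A * M ^ k * D ^ n) := by ring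
        _ ≤ M * D * S := by gcongr
        _ ≤ κ * A * D * S := by gcongr
        _ = κ * D / D ^ n * (A * D ^ n * S) := by field_simp
        _ ≤ κ * D / D ^ n * (S * S) := by gcongr
        _ = κ * D / D ^ n * S ^ 2 := by ring
        _ ≤ _ := by gcongr
  obtain ⟨k, hk⟩ := pow_unbounded_of_one_lt (M ^ n0 / A) hD
  have h2 := (key k).trans (SS_le hp _)
  rw [card_box] at h2
  have e : (((b ^ (n0 + k)) ^ d : ℕ) : ℝ) ^ 2 = M ^ n0 * M ^ k := by
    rw [hMdef, ← pow_add]; push_cast; rw [← pow_mul, ← pow_mul, ← pow_mul]; congr 1; ring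
  rw [e] at h2
  have hMk : 0 < M ^ k := by positivity
  have h3 : A * D ^ (n0 + k) ≤ M ^ n0 := by
    refine le_of_mul_le_mul_right ?_ hMk
    linarith
  rw [div_lt_iff₀ hA0] at hk
  have h4 : D ^ k ≤ D ^ (n0 + k) := pow_le_pow_right₀ hD.le (by omega)
  nlinarith

end

section
variable {d : ℕ} {α c C : ℝ} {p : Sym2 (V d) → ℝ}

/-- corner of subbox -/
def off {b : ℕ} (L : ℕ) (x : V d) (i : Fin d → Fin b) : V d := fun k => x k + L * ((i k : ℕ) : ℤ)

theorem off_sub {b : ℕ} (L : ℕ) (x : V d) (i : Fin d → Fin b) : box L (off L x i) ⊆ box (b * L) x := by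
  intro y hy; rw [mem_box] at hy ⊢; intro k
  have h1 := hy k
  simp only [off] at h1
  have h2 : L * ((i k : ℕ) : ℤ) + L ≤ ((b * L : ℕ) : ℤ) := by
    have : (i k : ℕ) + 1 ≤ b := (i k).2
    have h3 : L * ((i k : ℕ) + 1) ≤ L * b := Nat.mul_le_mul_left _ this
    have h4 : ((L * ((i k : ℕ) + 1) : ℕ) : ℤ) ≤ ((L * b : ℕ) : ℤ) := by exact_mod_cast h3
    push_cast at h4 ⊢
    linarith
  have h5 : 0 ≤ L * ((i k : ℕ) : ℤ) := by positivity
  constructor <;> omega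

theorem off_disj {b : ℕ} (L : ℕ) (x : V d) {i i' : Fin d → Fin b} (h : i ≠ i') :
    Disjoint (box L (off L x i)) (box L (off L x i')) := by
  rw [Finset.disjoint_left]
  intro y hy hy'
  apply h
  funext k
  have h1 := mem_box.1 hy k
  have h2 := mem_box.1 hy' k
  simp only [off] at h1 h2
  apply Fin.ext
  by_contra hne
  rcases Nat.lt_or_gt_of_ne hne with hlt | hlt
  · have : (L:ℤ) * ((i k : ℕ) + 1) ≤ L * (i' k : ℕ) := by
      apply mul_le_mul_of_nonneg_left _ (by positivity); exact_mod_cast hlt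
    linarith
  · have : (L:ℤ) * ((i' k : ℕ) + 1) ≤ L * (i k : ℕ) := by
      apply mul_le_mul_of_nonneg_left _ (by positivity); exact_mod_cast hlt
    linarith

open scoped Classical in
/-- base -/
noncomputable def DD0 (m L : ℕ) (x : V d) (ω : Finset (Sym2 (V d))) : Finset (V d) :=
  if h : ∃ y ∈ box L x, m ≤ (cl (box L x) (ω ∩ (box L x).sym2) y).card then
    cl (box L x) (ω ∩ (box L x).sym2) h.choose else ∅

/-- good merge -/
def Gd {b : ℕ} (sub : (Fin d → Fin b) → Finset (V d)) (ω : Finset (Sym2 (V d))) : Prop :=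
  (∀ i i', i ≠ i' → ¬ (sub i = ∅ ∧ sub i' = ∅)) ∧
  ∀ i i', i ≠ i' → sub i ≠ ∅ → sub i' ≠ ∅ → ∃ u ∈ sub i, ∃ v ∈ sub i', s(u, v) ∈ ω

open scoped Classical in
/-- renormalised clusters -/
noncomputable def DD (b m n0 : ℕ) : ℕ → V d → Finset (Sym2 (V d)) → Finset (V d)
  | 0, x, ω => DD0 m (b ^ n0) x ω
  | j + 1, x, ω =>
    if Gd (b := b) (fun i => DD b m n0 j (off (b ^ (n0 + j)) x i) ω) ω then
      Finset.univ.biUnion fun i : Fin d → Fin b => DD b m n0 j (off (b ^ (n0 + j)) x i) ω else ∅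

variable {b m n0 : ℕ}

theorem bpow (j : ℕ) : b ^ (n0 + (j + 1)) = b * b ^ (n0 + j) := by rw [← pow_succ']; rfl

theorem DD_sub (j : ℕ) (x : V d) (ω : Finset (Sym2 (V d))) : DD b m n0 j x ω ⊆ box (b ^ (n0 + j)) x := by
  induction j generalizing x with
  | zero =>
    simp only [DD, DD0]
    split_ifs with h
    · exact fun z hz => (mem_cl.1 hz).1
    · simp
  | succ j ih =>
    simp only [DD]
    split_ifs with h
    · rw [bpow]
      exact Finset.biUnion_subset.2 fun i _ => (ih _).trans (off_sub _ _ _)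
    · simp

theorem DD_loc (j : ℕ) (x : V d) (ω : Finset (Sym2 (V d))) (E : Finset (Sym2 (V d)))
    (hE : (box (b ^ (n0 + j)) x).sym2 ⊆ E) :
    DD b m n0 j x (ω ∩ E) = DD b m n0 j x ω := by
  induction j generalizing x with
  | zero =>
    simp only [DD, DD0]
    rw [Nat.add_zero] at hE
    have : ω ∩ E ∩ (box (b ^ n0) x).sym2 = ω ∩ (box (b ^ n0) x).sym2 := by
      rw [Finset.inter_assoc, Finset.inter_eq_right.2 hE]
    rw [this]
  | succ j ih =>
    simp only [DD]
    rw [bpow] at hE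
    have h1 : ∀ i : Fin d → Fin b, DD b m n0 j (off (b ^ (n0 + j)) x i) (ω ∩ E) = DD b m n0 j (off (b ^ (n0 + j)) x i) ω :=
      fun i => ih _ ((Finset.sym2_mono (off_sub _ _ _)).trans hE)
    simp only [h1]
    have h2 : Gd (b := b) (fun i => DD b m n0 j (off (b ^ (n0 + j)) x i) ω) (ω ∩ E) ↔
        Gd (b := b) (fun i => DD b m n0 j (off (b ^ (n0 + j)) x i) ω) ω := by
      unfold Gd
      refine and_congr_right fun _ => ?_
      refine forall_congr' fun i => forall_congr' fun i' => forall_congr' fun hi =>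
        forall_congr' fun _ => forall_congr' fun _ => ?_
      refine exists_congr fun u => and_congr_right fun hu => exists_congr fun v => and_congr_right fun hv => ?_
      rw [Finset.mem_inter, and_iff_left]
      refine hE (Finset.mk_mem_sym2_iff.2 ⟨off_sub _ _ _ (DD_sub _ _ _ hu), off_sub _ _ _ (DD_sub _ _ _ hv)⟩)
    rw [← funext h1] at h2
    conv at h2 => rhs; rw [funext h1]
    by_cases hG : Gd (b := b) (fun i => DD b m n0 j (off (b ^ (n0 + j)) x i) ω) ω
    · rw [if_pos hG, if_pos (h2.2 hG)]
    · rw [if_neg hG, if_neg (fun h => hG (h2.1 h))]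

theorem DD_cn (j : ℕ) (x : V d) (ω : Finset (Sym2 (V d))) {u v : V d} (hu : u ∈ DD b m n0 j x ω)
    (hv : v ∈ DD b m n0 j x ω) : cn ω u v := by
  induction j generalizing x u v with
  | zero =>
    simp only [DD, DD0] at hu hv
    split_ifs at hu hv with h
    · exact cn_mono Finset.inter_subset_left (cn_trans (cn_symm (mem_cl.1 hu).2) (mem_cl.1 hv).2)
    · simp at hu
  | succ j ih =>
    simp only [DD] at hu hv
    split_ifs at hu hv with h
    · rw [Finset.mem_biUnion] at hu hv
      obtain ⟨i, _, hi⟩ := hu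
      obtain ⟨i', _, hi'⟩ := hv
      by_cases hii : i = i'
      · subst hii; exact ih _ hi hi'
      · obtain ⟨u', hu', v', hv', he⟩ := h.2 i i' hii (Finset.ne_empty_of_mem hi) (Finset.ne_empty_of_mem hi')
        exact cn_trans (ih _ hi hu') (cn_trans (cn_edge he) (ih _ hv' hi'))
    · simp at hu

theorem DD_card (j : ℕ) (x : V d) (ω : Finset (Sym2 (V d))) (h : DD b m n0 j x ω ≠ ∅) :
    (b ^ d - 1) ^ j * m ≤ (DD b m n0 j x ω).card := by
  classical
  induction j generalizing x with
  | zero =>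
    simp only [DD, DD0] at h ⊢
    split_ifs at h ⊢ with h1
    · simpa using h1.choose_spec.2
    · simp at h
  | succ j ih =>
    simp only [DD] at h ⊢
    split_ifs at h ⊢ with h1
    · rw [Finset.card_biUnion]
      · set sub := fun i : Fin d → Fin b => DD b m n0 j (off (b ^ (n0 + j)) x i) ω
        set T : Finset (Fin d → Fin b) := Finset.univ.filter fun i => sub i ≠ ∅
        have hT : b ^ d - 1 ≤ T.card := by
          have h2 : (Finset.univ.filter fun i => ¬ (sub i ≠ ∅)).card ≤ 1 := by
            rw [Finset.card_le_one]
            intro i hi i' hi'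
            simp only [Finset.mem_filter, not_not] at hi hi'
            by_contra hne
            exact h1.1 i i' hne ⟨hi.2, hi'.2⟩
          have h3 := Finset.card_filter_add_card_filter_not (s := (Finset.univ : Finset (Fin d → Fin b)))
            (fun i => sub i ≠ ∅)
          simp only [Finset.card_univ, Fintype.card_fun, Fintype.card_fin] at h3
          have h4 : (Finset.univ.filter fun i => sub i ≠ ∅).card = T.card := rfl
          omega
        calc (b ^ d - 1) ^ (j + 1) * m = (b ^ d - 1) * ((b ^ d - 1) ^ j * m) := by ring
          _ ≤ T.card * ((b ^ d - 1) ^ j * m) := Nat.mul_le_mul_right _ hT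
          _ = ∑ i ∈ T, ((b ^ d - 1) ^ j * m) := by simp
          _ ≤ ∑ i ∈ T, (sub i).card := Finset.sum_le_sum fun i hi => ih _ (Finset.mem_filter.1 hi).2
          _ ≤ _ := Finset.sum_le_sum_of_subset (Finset.subset_univ _)
      · intro i _ i' _ hne
        exact (off_disj _ _ hne).mono (DD_sub _ _ _) (DD_sub _ _ _)
    · simp at h

theorem DD_chain (hb : 1 ≤ b) (j : ℕ) (x : V d) (ω : Finset (Sym2 (V d)))
    (h : DD b m n0 (j + 1) x ω ≠ ∅) : DD b m n0 j x ω ⊆ DD b m n0 (j + 1) x ω := by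
  conv_rhs => rw [DD]
  rw [DD] at h
  split_ifs at h ⊢ with h1
  · have h2 : off (b ^ (n0 + j)) x (fun _ => (⟨0, hb⟩ : Fin b)) = x := by funext k; simp [off]
    intro z hz
    rw [Finset.mem_biUnion]
    exact ⟨fun _ => ⟨0, hb⟩, Finset.mem_univ _, by rw [h2]; exact hz⟩
  · simp at h

theorem DD_zero (hm : 1 ≤ m) (hp : PH d p α c C) {η : ℝ}
    (hη : 1 - η < Pr p (box (b ^ n0) (0 : V d)).sym2 (fun ω => m ≤ (Big (box (b ^ n0) 0) m ω).card))
    (x : V d) : Pr p (box (b ^ (n0 + 0)) x).sym2 (fun ω => DD b m n0 0 x ω = ∅) ≤ η := by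
  rw [← PrBig_box hp _ _ _ x] at hη
  rw [Nat.add_zero]
  have h1 := Pr_not (p := p) (box (b ^ n0) x).sym2 (fun ω => m ≤ (Big (box (b ^ n0) x) m ω).card)
  refine le_trans (Pr_mono hp.h0 hp.h1 (B := fun ω => ¬ m ≤ (Big (box (b ^ n0) x) m ω).card) fun ω hω h => ?_) (by linarith)
  intro hbig
  simp only [DD, DD0, Finset.inter_eq_left.2 hω] at h
  obtain ⟨y, hy⟩ : (Big (box (b ^ n0) x) m ω).Nonempty := Finset.card_pos.1 (by omega)
  have hex : ∃ y ∈ box (b ^ n0) x, m ≤ (cl (box (b ^ n0) x) ω y).card := ⟨y, mem_Big.1 hy⟩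
  rw [dif_pos hex] at h
  have := hex.choose_spec.2
  rw [h] at this
  simp at this; omega

theorem two_bad (hp : PH d p α c C) {B B' Λ : Finset (V d)} (hB : B ⊆ Λ) (hB' : B' ⊆ Λ) (hd : Disjoint B B')
    (f f' : Finset (Sym2 (V d)) → Finset (V d)) (hf : ∀ ω, f (ω ∩ B.sym2) = f ω) (hf' : ∀ ω, f' (ω ∩ B'.sym2) = f' ω)
    {δ : ℝ} (h : Pr p B.sym2 (fun ω => f ω = ∅) ≤ δ) (h' : Pr p B'.sym2 (fun ω => f' ω = ∅) ≤ δ) :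
    Pr p Λ.sym2 (fun ω => f ω = ∅ ∧ f' ω = ∅) ≤ δ ^ 2 := by
  have h1 := Ex_indep (p := p) (Finset.sym2_mono hB) (Finset.sym2_mono hB') (sym2_disj hd)
    (fun a a' => ind (f a = ∅) * ind (f' a' = ∅))
  simp only [hf, hf'] at h1
  unfold Pr
  simp only [ind_and]
  rw [h1]
  have h2 : ∀ a, Ex p B'.sym2 (fun a' => ind (f a = ∅) * ind (f' a' = ∅)) =
      ind (f a = ∅) * Pr p B'.sym2 (fun a' => f' a' = ∅) := fun a => Ex_mul_left _ _ _
  simp only [h2]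
  rw [Ex_mul_right, sq]
  exact mul_le_mul h h' (Pr_nonneg hp.h0 hp.h1 _) ((Pr_nonneg hp.h0 hp.h1 _).trans h)

theorem two_unjoined (hp : PH d p α c C) {B B' Λ : Finset (V d)} (hB : B ⊆ Λ) (hB' : B' ⊆ Λ) (hd : Disjoint B B')
    (f f' : Finset (Sym2 (V d)) → Finset (V d)) (hf : ∀ ω, f (ω ∩ B.sym2) = f ω) (hf' : ∀ ω, f' (ω ∩ B'.sym2) = f' ω)
    (hfB : ∀ ω, f ω ⊆ B) (hfB' : ∀ ω, f' ω ⊆ B') {s : ℕ} {l : ℝ} (hl0 : 0 ≤ l)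
    (hl : ∀ u ∈ B, ∀ v ∈ B', 1 - p s(u, v) ≤ Real.exp (-l)) 
    (hs : ∀ ω, f ω ≠ ∅ → s ≤ (f ω).card) (hs' : ∀ ω, f' ω ≠ ∅ → s ≤ (f' ω).card) :
    Pr p Λ.sym2 (fun ω => f ω ≠ ∅ ∧ f' ω ≠ ∅ ∧ ∀ u ∈ f ω, ∀ v ∈ f' ω, s(u, v) ∉ ω) ≤
      Real.exp (-(l * (s:ℝ) ^ 2)) := by
  have h1 := three_indep (p := p) hB hB' hd (fun a a' x => ind (f a ≠ ∅ ∧ f' a' ≠ ∅ ∧ ∀ u ∈ f a, ∀ v ∈ f' a', s(u, v) ∉ x))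
  have h2 : Pr p Λ.sym2 (fun ω => f ω ≠ ∅ ∧ f' ω ≠ ∅ ∧ ∀ u ∈ f ω, ∀ v ∈ f' ω, s(u, v) ∉ ω) =
      Ex p Λ.sym2 (fun ω => ind (f (ω ∩ B.sym2) ≠ ∅ ∧ f' (ω ∩ B'.sym2) ≠ ∅ ∧
        ∀ u ∈ f (ω ∩ B.sym2), ∀ v ∈ f' (ω ∩ B'.sym2), s(u, v) ∉ ω ∩ X B B')) := by
    refine Ex_congr fun ω _ => ?_
    rw [hf, hf']
    congr 1
    rw [eq_iff_iff]
    refine and_congr_right fun _ => and_congr_right fun _ => forall_congr' fun u => forall_congr' fun hu =>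
      forall_congr' fun v => forall_congr' fun hv => ?_
    rw [Finset.mem_inter, and_iff_left (mem_X (hfB _ hu) (hfB' _ hv))]
  rw [h2, h1, ← Ex_const (p := p) B.sym2 (Real.exp (-(l * (s:ℝ) ^ 2)))]
  refine Ex_mono hp.h0 hp.h1 fun a _ => ?_
  rw [← Ex_const (p := p) B'.sym2 (Real.exp (-(l * (s:ℝ) ^ 2)))]
  refine Ex_mono hp.h0 hp.h1 fun a' _ => ?_
  by_cases ha : f a ≠ ∅ ∧ f' a' ≠ ∅
  · have h3 := cross_none hp.h1 (hfB a) (hfB' a') hd hl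
    have h4 : Ex p (X B B') (fun x => ind (f a ≠ ∅ ∧ f' a' ≠ ∅ ∧ ∀ u ∈ f a, ∀ v ∈ f' a', s(u, v) ∉ x)) =
      Pr p (X B B') (fun x => ∀ u ∈ f a, ∀ v ∈ f' a', s(u, v) ∉ x) := by
      refine Ex_congr fun x _ => ?_
      congr 1
      simp [ha]
    rw [h4]
    refine h3.trans ?_
    rw [Real.exp_le_exp, neg_le_neg_iff]
    have := hs a ha.1; have := hs' a' ha.2
    rw [sq]; gcongr
  · have h4 : Ex p (X B B') (fun x => ind (f a ≠ ∅ ∧ f' a' ≠ ∅ ∧ ∀ u ∈ f a, ∀ v ∈ f' a', s(u, v) ∉ x)) = 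
        Ex p (X B B') (fun x => 0) := by
      refine Ex_congr fun x _ => ind_false fun h => ha ⟨h.1, h.2.1⟩
    rw [h4, Ex_const]
    positivity

theorem DD_step (hp : PH d p α c C) (hc : 0 ≤ c) (hα : 0 ≤ α) (hbd : 2 ≤ b ^ d) (j : ℕ) {δ : ℝ}
    (hδ : ∀ x : V d, Pr p (box (b ^ (n0 + j)) x).sym2 (fun ω => DD b m n0 j x ω = ∅) ≤ δ) (x : V d) :
    Pr p (box (b ^ (n0 + (j + 1))) x).sym2 (fun ω => DD b m n0 (j + 1) x ω = ∅) ≤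
      ((b ^ d : ℕ):ℝ) ^ 2 * (δ ^ 2 + Real.exp (-(c * ((b ^ (n0 + (j + 1)) : ℕ) : ℝ) ^ (-((d:ℝ) + α)) *
        (((b ^ d - 1) ^ j * m : ℕ) : ℝ) ^ 2))) := by
  classical
  set Y := Real.exp (-(c * ((b ^ (n0 + (j + 1)) : ℕ) : ℝ) ^ (-((d:ℝ) + α)) *
        (((b ^ d - 1) ^ j * m : ℕ) : ℝ) ^ 2)) with hY
  set Λ := box (b ^ (n0 + (j + 1))) x with hΛ
  set sub := fun (i : Fin d → Fin b) ω => DD b m n0 j (off (b ^ (n0 + j)) x i) ω with hsub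
  have hBi : ∀ i : Fin d → Fin b, box (b ^ (n0 + j)) (off (b ^ (n0 + j)) x i) ⊆ Λ := by
    intro i; rw [hΛ, bpow]; exact off_sub _ _ _
  set T : Finset ((Fin d → Fin b) × (Fin d → Fin b)) := Finset.univ.filter fun q => q.1 ≠ q.2 with hT
  have h1 : Pr p Λ.sym2 (fun ω => DD b m n0 (j + 1) x ω = ∅) ≤
      Pr p Λ.sym2 (fun ω => ∃ q ∈ T, (sub q.1 ω = ∅ ∧ sub q.2 ω = ∅) ∨
        (sub q.1 ω ≠ ∅ ∧ sub q.2 ω ≠ ∅ ∧ ∀ u ∈ sub q.1 ω, ∀ v ∈ sub q.2 ω, s(u, v) ∉ ω)) := by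
    refine Pr_mono hp.h0 hp.h1 fun ω _ h => ?_
    by_contra hcon
    push Not at hcon
    have hG : Gd (fun i => sub i ω) ω := by
      constructor
      · intro i i' hi hh
        exact (hcon (i, i') (by simp [hT, hi])).1 hh.1 |>.ne_empty hh.2
      · intro i i' hi h1 h2
        exact (hcon (i, i') (by simp [hT, hi])).2 (Finset.nonempty_iff_ne_empty.2 h1) (Finset.nonempty_iff_ne_empty.2 h2)
    rw [DD, if_pos hG] at h
    have hall : ∀ i, sub i ω = ∅ := fun i => by
      rw [← Finset.subset_empty, ← h]
      exact Finset.subset_biUnion_of_mem (fun i => sub i ω) (Finset.mem_univ i)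
    have hcard : 1 < Fintype.card (Fin d → Fin b) := by simp; omega
    obtain ⟨i, i', hne⟩ := Fintype.one_lt_card_iff.1 hcard
    exact hG.1 i i' hne ⟨hall i, hall i'⟩
  refine h1.trans ((Pr_exists_le hp.h0 hp.h1 _ _).trans ?_)
  have hY0 : 0 ≤ Y := (Real.exp_pos _).le
  calc _ ≤ ∑ q ∈ T, (δ ^ 2 + Y) := by
        refine Finset.sum_le_sum fun q hq => ?_
        have hne : q.1 ≠ q.2 := (Finset.mem_filter.1 hq).2
        refine (Pr_or_le hp.h0 hp.h1 _ _).trans (add_le_add ?_ ?_)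
        · exact two_bad hp (hBi q.1) (hBi q.2) (off_disj _ _ hne) (sub q.1) (sub q.2)
            (fun ω => DD_loc _ _ _ _ subset_rfl) (fun ω => DD_loc _ _ _ _ subset_rfl) (hδ _) (hδ _)
        · refine two_unjoined hp (hBi q.1) (hBi q.2) (off_disj _ _ hne) (sub q.1) (sub q.2)
            (fun ω => DD_loc _ _ _ _ subset_rfl) (fun ω => DD_loc _ _ _ _ subset_rfl)
            (fun ω => DD_sub _ _ _) (fun ω => DD_sub _ _ _) (by positivity) ?_
            (fun ω h => DD_card _ _ _ h) (fun ω h => DD_card _ _ _ h)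
          intro u hu v hv
          exact hp.lo' hc hα (fun e => Finset.disjoint_left.1 (off_disj _ _ hne) hu (e ▸ hv))
            (box_norm (hBi _ hu) (hBi _ hv))
    _ = T.card * (δ ^ 2 + Y) := by rw [Finset.sum_const, nsmul_eq_mul]
    _ ≤ _ := by
        refine mul_le_mul_of_nonneg_right ?_ (by positivity)
        have : T.card ≤ (b ^ d) ^ 2 := by
          refine (Finset.card_filter_le _ _).trans ?_
          simp [sq]
        exact_mod_cast this

end

section
variable {d : ℕ} {α c C : ℝ} {p : Sym2 (V d) → ℝ} {b m n0 : ℕ}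

theorem renorm_delta (hp : PH d p α c C) (hc : 0 < c) (hα : 0 < α) (hb : 2 ≤ b) (hd : 1 ≤ d)
    (hbig : 8 * (b:ℝ) ^ ((d:ℝ) + α) ≤ (((b ^ d : ℕ) : ℝ)) ^ 2) {η K : ℝ} (hη0 : 0 < η) 
    (hη : (((b ^ d : ℕ) : ℝ)) ^ 2 * η ≤ 1 / 4)
    (hK : 4 * (((b ^ d : ℕ) : ℝ)) ^ 2 * (b:ℝ) ^ ((d:ℝ) + α) ≤ c * η * K ^ 2) (hm : 1 ≤ m)
    (hmK : K ^ 2 * ((b:ℝ) ^ ((d:ℝ) + α)) ^ n0 ≤ (m:ℝ) ^ 2)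
    (hbigP : 1 - η < Pr p (box (b ^ n0) (0 : V d)).sym2 (fun ω => m ≤ (Big (box (b ^ n0) 0) m ω).card))
    (j : ℕ) (x : V d) :
    Pr p (box (b ^ (n0 + j)) x).sym2 (fun ω => DD b m n0 j x ω = ∅) ≤ η / 2 ^ j := by
  have hb2 : 2 ≤ b ^ d := hb.trans (Nat.le_self_pow (by omega) b)
  induction j generalizing x with
  | zero => simpa using DD_zero hm hp hbigP x
  | succ j ih =>
    refine (DD_step hp hc.le hα.le hb2 j ih x).trans ?_
    rw [pow_cast_rpow, Real.rpow_neg (by positivity)]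
    have hb1 : (1:ℝ) < b := by exact_mod_cast (by omega : 1 < b)
    have hD1 : 1 < (b:ℝ) ^ ((d:ℝ) + α) := Real.one_lt_rpow hb1 (by positivity)
    generalize (b:ℝ) ^ ((d:ℝ) + α) = D at *
    have hsub : (((b ^ d - 1 : ℕ)) : ℝ) = ((b ^ d : ℕ) : ℝ) - 1 := by
      rw [Nat.cast_sub (by omega)]; simp
    rw [Nat.cast_mul, Nat.cast_pow (b ^ d - 1) j, hsub]
    have hM2 : (2:ℝ) ≤ ((b ^ d : ℕ) : ℝ) := by exact_mod_cast hb2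
    generalize ((b ^ d : ℕ) : ℝ) = M at *
    have hD0 : 0 < D := by linarith
    have hK0 : 0 < K ^ 2 := by
      by_contra hcon
      have h1 : K ^ 2 ≤ 0 := not_lt.1 hcon
      have h2 : 0 < 4 * M ^ 2 * D := by positivity
      have h3 : c * η * K ^ 2 ≤ 0 := mul_nonpos_of_nonneg_of_nonpos (by positivity) h1
      linarith
    have h2D : 2 * D ≤ (M - 1) ^ 2 := by nlinarith
    set y := c * D⁻¹ ^ (n0 + (j + 1)) * ((M - 1) ^ j * (m:ℝ)) ^ 2 with hy
    have hy1 : c * K ^ 2 / D * 2 ^ j ≤ y := by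
      calc c * K ^ 2 / D * 2 ^ j = c * D⁻¹ ^ (n0 + (j + 1)) * ((2 * D) ^ j * (K ^ 2 * D ^ n0)) := by
            rw [inv_pow, pow_add, pow_succ, mul_pow]; field_simp; ring
        _ ≤ c * D⁻¹ ^ (n0 + (j + 1)) * (((M - 1) ^ 2) ^ j * (m:ℝ) ^ 2) := by gcongr
        _ = y := by rw [hy, mul_pow, pow_right_comm]
    have hy0 : 0 < c * K ^ 2 / D * 2 ^ j := by positivity
    have hexp : Real.exp (-y) ≤ D / (c * K ^ 2) / 2 ^ j := by
      have h1 : c * K ^ 2 / D * 2 ^ j ≤ Real.exp y := by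
        have := Real.add_one_le_exp y; linarith
      rw [Real.exp_neg]
      calc (Real.exp y)⁻¹ ≤ (c * K ^ 2 / D * 2 ^ j)⁻¹ := by gcongr
        _ = _ := by field_simp
    have h5 : M ^ 2 * (D / (c * K ^ 2)) ≤ η / 4 := by
      rw [mul_div_assoc', div_le_iff₀ (by positivity)]
      linarith
    have h2j : (1:ℝ) ≤ 2 ^ j := one_le_pow₀ (by norm_num)
    have h6 : M ^ 2 * (η / 2 ^ j) ^ 2 ≤ η / 4 / 2 ^ j := by
      have : M ^ 2 * (η / 2 ^ j) ^ 2 = (M ^ 2 * η) * η / 2 ^ j / 2 ^ j := by field_simp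
      rw [this]
      have h7 : (M ^ 2 * η) * η / 2 ^ j ≤ η / 4 := by
        rw [div_le_iff₀ (by positivity)]; nlinarith
      gcongr
    calc M ^ 2 * ((η / 2 ^ j) ^ 2 + Real.exp (-y)) ≤ M ^ 2 * (η / 2 ^ j) ^ 2 + M ^ 2 * (D / (c * K ^ 2) / 2 ^ j) := by
          rw [mul_add]; gcongr
      _ = M ^ 2 * (η / 2 ^ j) ^ 2 + M ^ 2 * (D / (c * K ^ 2)) / 2 ^ j := by ring
      _ ≤ η / 4 / 2 ^ j + η / 4 / 2 ^ j := by gcongr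
      _ = _ := by rw [pow_succ]; ring

theorem renorm (hp : PH d p α c C) (hc : 0 < c) (hα : 0 < α) (hb : 2 ≤ b) (hd : 1 ≤ d)
    (hbig : 8 * (b:ℝ) ^ ((d:ℝ) + α) ≤ (((b ^ d : ℕ) : ℝ)) ^ 2) {η K : ℝ} (hη0 : 0 < η) 
    (hη : (((b ^ d : ℕ) : ℝ)) ^ 2 * η ≤ 1 / 4)
    (hK : 4 * (((b ^ d : ℕ) : ℝ)) ^ 2 * (b:ℝ) ^ ((d:ℝ) + α) ≤ c * η * K ^ 2) (hm : 1 ≤ m)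
    (hmK : K ^ 2 * ((b:ℝ) ^ ((d:ℝ) + α)) ^ n0 ≤ (m:ℝ) ^ 2)
    (hbigP : 1 - η < Pr p (box (b ^ n0) (0 : V d)).sym2 (fun ω => m ≤ (Big (box (b ^ n0) 0) m ω).card))
    (J : ℕ) : 1 / 2 ≤ Pr p (box (b ^ (n0 + J)) (0 : V d)).sym2
      (fun ω => ∃ x ∈ box (b ^ n0) (0 : V d), J ≤ (cl (box (b ^ (n0 + J)) 0) ω x).card) := by
  have hδ := renorm_delta hp hc hα hb hd hbig hη0 hη hK hm hmK hbigP
  have hb1 : (1:ℝ) < b := by exact_mod_cast (by omega : 1 < b)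
  have hD1 : 1 < (b:ℝ) ^ ((d:ℝ) + α) := Real.one_lt_rpow hb1 (by positivity)
  have hb2 : 2 ≤ b ^ d := hb.trans (Nat.le_self_pow (by omega) b)
  have hM2 : (2:ℝ) ≤ ((b ^ d : ℕ) : ℝ) := by exact_mod_cast hb2
  have hM3 : 3 ≤ b ^ d := by
    by_contra h
    have h2 : b ^ d = 2 := by omega
    rw [h2] at hbig; norm_num at hbig; linarith
  have hη4 : η ≤ 1 / 4 := by nlinarith
  set Λ := box (b ^ (n0 + J)) (0 : V d) with hΛ
  have hmonob : ∀ j ≤ J, box (b ^ (n0 + j)) (0 : V d) ⊆ Λ := by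
    intro j hj y hy
    rw [hΛ, mem_box]; rw [mem_box] at hy
    intro i
    have h1 := hy i
    have h2 : ((b ^ (n0 + j) : ℕ) : ℤ) ≤ ((b ^ (n0 + J) : ℕ) : ℤ) := by
      exact_mod_cast Nat.pow_le_pow_right (by omega) (by omega)
    constructor <;> omega
  have h1 : Pr p Λ.sym2 (fun ω => ∃ j ∈ Finset.range (J + 1), DD b m n0 j 0 ω = ∅) ≤ 1 / 2 := by
    refine (Pr_exists_le hp.h0 hp.h1 _ _).trans ?_
    calc _ ≤ ∑ j ∈ Finset.range (J + 1), η * (1 / 2) ^ j := by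
          refine Finset.sum_le_sum fun j hj => ?_
          have hj' : j ≤ J := by rw [Finset.mem_range] at hj; omega
          have h2 := Ex_marg (p := p) (Finset.sym2_mono (hmonob j hj')) (fun ω => ind (DD b m n0 j 0 ω = ∅))
          simp only [DD_loc _ _ _ _ subset_rfl] at h2
          have h3 := hδ j 0
          unfold Pr at h3 ⊢
          rw [h2]
          refine h3.trans_eq ?_
          rw [one_div, inv_pow]; rfl
      _ ≤ η * 2 := by
          rw [← Finset.mul_sum]
          have := sum_geometric_two_le (J + 1)
          gcongr
      _ ≤ 1 / 2 := by linarith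
  have h2 := Pr_not (p := p) Λ.sym2 (fun ω => ∃ j ∈ Finset.range (J + 1), DD b m n0 j 0 ω = ∅)
  have h3 : 1 / 2 ≤ Pr p Λ.sym2 (fun ω => ¬ ∃ j ∈ Finset.range (J + 1), DD b m n0 j 0 ω = ∅) := by
    linarith
  refine h3.trans (Pr_mono hp.h0 hp.h1 fun ω _ h => ?_)
  push Not at h
  have hne : ∀ j ≤ J, DD b m n0 j 0 ω ≠ ∅ := fun j hj => (h j (Finset.mem_range.2 (by omega))).ne_empty
  have hch : ∀ j ≤ J, DD b m n0 0 0 ω ⊆ DD b m n0 j 0 ω := by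
    intro j
    induction j with
    | zero => intro _; rfl
    | succ j ih => intro hj; exact (ih (by omega)).trans (DD_chain (by omega) j 0 ω (hne (j+1) hj))
  obtain ⟨x, hx⟩ := Finset.nonempty_iff_ne_empty.2 (hne 0 (by omega))
  refine ⟨x, by simpa using DD_sub 0 0 ω hx, ?_⟩
  calc J ≤ 2 ^ J := Nat.lt_two_pow_self.le
    _ ≤ (b ^ d - 1) ^ J := Nat.pow_le_pow_left (by omega) J
    _ ≤ (b ^ d - 1) ^ J * m := Nat.le_mul_of_pos_right _ hm
    _ ≤ (DD b m n0 J 0 ω).card := DD_card _ _ _ (hne J le_rfl)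
    _ ≤ _ := by
        refine Finset.card_le_card fun y hy => mem_cl.2 ⟨DD_sub _ _ _ hy, DD_cn J 0 ω (hch J le_rfl hx) hy⟩

/-- The conclusion of the first half: either percolation or box sums are small. -/
theorem half1 (hd : 1 ≤ d) (hα : 0 < α) (hαd : α < d) (hc : 0 < c) :
    ∃ (b : ℕ) (A : ℝ), 2 ≤ b ∧ 0 < A ∧ ∀ p : Sym2 (V d) → ℝ, PH d p α c C →
      (∃ N : ℕ, ∀ J : ℕ, ∃ L : ℕ, 1 / 2 ≤ Pr p (box L (0 : V d)).sym2
        (fun ω => ∃ x ∈ box N (0 : V d), J ≤ (cl (box L 0) ω x).card)) ∨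
      ∀ n : ℕ, SS p (box (b ^ n) (0 : V d)) ≤ A * ((b:ℝ) ^ ((d:ℝ) + α)) ^ n := by
  obtain ⟨b, hb2, hbig⟩ : ∃ b : ℕ, 2 ≤ b ∧ 8 * (b:ℝ) ^ ((d:ℝ) + α) ≤ (((b ^ d : ℕ) : ℝ)) ^ 2 := by
    have ht : Filter.Tendsto (fun n : ℕ => (n:ℝ) ^ ((d:ℝ) - α)) Filter.atTop Filter.atTop :=
      (tendsto_rpow_atTop (by linarith)).comp tendsto_natCast_atTop_atTop
    obtain ⟨b, h8, hb⟩ := ((ht.eventually_ge_atTop 8).and (Filter.eventually_ge_atTop 2)).exists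
    refine ⟨b, hb, ?_⟩
    have hb0 : (0:ℝ) < b := by positivity
    calc 8 * (b:ℝ) ^ ((d:ℝ) + α) ≤ (b:ℝ) ^ ((d:ℝ) - α) * (b:ℝ) ^ ((d:ℝ) + α) := by gcongr
      _ = _ := by
          rw [← Real.rpow_add hb0]; push_cast
          rw [← pow_mul, ← Real.rpow_natCast]; congr 1; push_cast; ring
  have hM1 : (1:ℝ) ≤ (((b ^ d : ℕ) : ℝ)) ^ 2 := by
    have : 1 ≤ (b ^ d) ^ 2 := Nat.one_le_pow _ _ (by positivity)
    exact_mod_cast this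
  set M2 := (((b ^ d : ℕ) : ℝ)) ^ 2 with hM2
  set η : ℝ := 1 / (4 * M2) with hη
  have hη0 : 0 < η := by positivity
  have hη1 : M2 * η ≤ 1 / 4 := by rw [hη]; field_simp; norm_num
  set D := (b:ℝ) ^ ((d:ℝ) + α) with hD
  have hD0 : 0 < D := by have : (0:ℝ) < b := by positivity
                         positivity
  set K : ℝ := 1 + 4 * M2 * D / (c * η) with hKdef
  have hK1 : 1 ≤ K := by rw [hKdef]; have : 0 < 4 * M2 * D / (c * η) := by positivity
                         linarith
  have hK : 4 * M2 * D ≤ c * η * K ^ 2 := by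
    have h1 : 4 * M2 * D = c * η * (4 * M2 * D / (c * η)) := by field_simp
    rw [h1]
    gcongr
    nlinarith
  obtain ⟨A, hA0, hA⟩ := rec_main (d := d) (C := C) hd hα hc hb2 hη0 (by nlinarith) hK1
  refine ⟨b, A, hb2, hA0, fun p hp => ?_⟩
  rcases hA p hp with ⟨n, m, hm, hmK, hP⟩ | h
  · left
    exact ⟨b ^ n, fun J => ⟨b ^ (n + J), renorm hp hc hα hb2 hd hbig hη0 hη1 hK hm hmK hP J⟩⟩
  · right; exact h

end

section
variable {d : ℕ} {α c C : ℝ} {p : Sym2 (V d) → ℝ}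

/-- ball -/
noncomputable def bl (s : ℕ) (x : V d) : Finset (V d) := box (2 * s + 1) (fun i => x i - s)

theorem mem_bl {s : ℕ} {x y : V d} : y ∈ bl s x ↔ normInf (y - x) ≤ s := by
  rw [bl, mem_box, normInf_le]
  refine forall_congr' fun i => ?_
  simp only [Pi.sub_apply]; push_cast; omega

theorem card_bl (s : ℕ) (x : V d) : (bl s x).card = (2 * s + 1) ^ d := card_box _ _

theorem bl_map (s : ℕ) (x z : V d) : (bl s x).map (Equiv.addRight z).toEmbedding = bl s (x + z) := by
  rw [bl, box_map, bl]; congr 1; funext i; simp only [Pi.add_apply]; ring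

theorem sum_bl_tr (hp : PH d p α c C) (s : ℕ) (x : V d) :
    ∑ u ∈ bl s x, tau p (bl s x) x u = ∑ u ∈ bl s (0 : V d), tau p (bl s 0) 0 u := by
  have h := bl_map s (0 : V d) x
  rw [zero_add] at h
  rw [← h, Finset.sum_map]
  refine Finset.sum_congr rfl fun u _ => ?_
  have := tau_tr (p := p) (Equiv.addRight x) (hp.tr' x) (bl s 0) 0 u
  simpa using this

theorem ball_bound (hd : 1 ≤ d) (hα : 0 < α) {b : ℕ} (hb : 2 ≤ b) {A : ℝ} (hA : 0 < A) (hp : PH d p α c C)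
    (hS : ∀ n : ℕ, SS p (box (b ^ n) (0 : V d)) ≤ A * ((b:ℝ) ^ ((d:ℝ) + α)) ^ n) {s : ℕ} (hs : 1 ≤ s) (x : V d) :
    ∑ u ∈ bl s x, tau p (bl s x) x u ≤ (2 ^ d * A * (4 * b) ^ α) * (s:ℝ) ^ α := by
  rw [sum_bl_tr hp]
  set T := ∑ u ∈ bl s (0 : V d), tau p (bl s 0) 0 u with hT
  have hex : ∃ n, 4 * s ≤ b ^ n := ⟨4 * s, (Nat.lt_pow_self (by omega)).le⟩
  obtain ⟨n, hn, hnmin⟩ : ∃ n, 4 * s ≤ b ^ n ∧ ∀ k < n, ¬ 4 * s ≤ b ^ k :=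
    ⟨Nat.find hex, Nat.find_spec hex, fun k hk => Nat.find_min hex hk⟩
  have hn2 : b ^ n ≤ 4 * b * s := by
    cases n with
    | zero => simp at hn; omega
    | succ k =>
      have := hnmin k (by omega)
      rw [pow_succ]; nlinarith
  set L' := b ^ n - 2 * s with hL'
  set Z := box L' (fun _ => (s:ℤ) : V d) with hZ
  have hsub : ∀ z ∈ Z, bl s z ⊆ box (b ^ n) (0 : V d) := by
    intro z hz y hy
    rw [hZ, mem_box] at hz
    rw [bl, mem_box] at hy
    rw [mem_box]
    intro i
    have h1 := hz i; have h2 := hy i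
    have h3 : ((L' : ℕ) : ℤ) = ((b ^ n : ℕ) : ℤ) - 2 * s := by omega
    rw [h3] at h1
    push_cast at h1 h2 ⊢
    simp only [Pi.zero_apply]
    constructor <;> linarith
  have h1 : (Z.card : ℝ) * T ≤ SS p (box (b ^ n) (0 : V d)) := by
    rw [← nsmul_eq_mul, ← Finset.sum_const]
    calc ∑ z ∈ Z, T = ∑ z ∈ Z, ∑ u ∈ bl s z, tau p (bl s z) z u :=
          Finset.sum_congr rfl fun z _ => (sum_bl_tr hp s z).symm
      _ ≤ ∑ z ∈ Z, ∑ u ∈ box (b ^ n) (0 : V d), tau p (box (b ^ n) 0) z u := by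
          refine Finset.sum_le_sum fun z hz => ?_
          calc _ ≤ ∑ u ∈ bl s z, tau p (box (b ^ n) 0) z u :=
                Finset.sum_le_sum fun u _ => tau_mono hp.h0 hp.h1 (hsub z hz) _ _
            _ ≤ _ := Finset.sum_le_sum_of_subset_of_nonneg (hsub z hz) fun _ _ _ => tau_nonneg hp.h0 hp.h1 _ _ _
      _ ≤ _ := by
          refine Finset.sum_le_sum_of_subset_of_nonneg ?_ fun _ _ _ =>
            Finset.sum_nonneg fun _ _ => tau_nonneg hp.h0 hp.h1 _ _ _
          intro z hz
          refine hsub z hz (mem_bl.2 ?_)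
          rw [sub_self, normInf_eq_zero.2 rfl]; omega
  have h2 := h1.trans (hS n)
  rw [hZ, card_box, ← pow_cast_rpow] at h2
  have hbn : (0:ℝ) < ((b ^ n : ℕ) : ℝ) := by positivity
  rw [Real.rpow_add hbn, Real.rpow_natCast] at h2
  have hT0 : 0 ≤ T := Finset.sum_nonneg fun _ _ => tau_nonneg hp.h0 hp.h1 _ _ _
  have hL2 : ((b ^ n : ℕ) : ℝ) / 2 ≤ (L' : ℝ) := by
    have : b ^ n ≤ 2 * L' := by omega
    have : ((b ^ n : ℕ) : ℝ) ≤ 2 * (L' : ℝ) := by exact_mod_cast this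
    linarith
  have h3 : (((b ^ n : ℕ) : ℝ) / 2) ^ d * T ≤ A * (((b ^ n : ℕ) : ℝ) ^ d * ((b ^ n : ℕ) : ℝ) ^ α) := by
    refine le_trans ?_ h2
    push_cast
    push_cast at hL2
    gcongr
  have h4 : T ≤ 2 ^ d * A * ((b ^ n : ℕ) : ℝ) ^ α := by
    generalize ((b ^ n : ℕ) : ℝ) = R at *
    have hRd : 0 < R ^ d := by positivity
    rw [div_pow, div_mul_eq_mul_div, div_le_iff₀ (by positivity)] at h3
    refine le_of_mul_le_mul_left (a := R ^ d) ?_ hRd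
    linarith
  refine h4.trans ?_
  rw [mul_assoc (2 ^ d * A), ← Real.mul_rpow (by positivity) (by positivity)]
  have : ((b ^ n : ℕ) : ℝ) ≤ 4 * b * s := by exact_mod_cast hn2
  gcongr

end

section
variable {d : ℕ}

theorem boot {ι : Type*} (f : ι → ℝ) {B a : ℝ} (hB : ∀ i, f i ≤ B) (ha : 0 ≤ a)
    (h : ∀ N, 0 ≤ N → (∀ i, f i ≤ N) → ∀ i, f i ≤ a + N / 2) (i : ι) : f i ≤ 2 * a := by
  have key : ∀ k : ℕ, ∀ i, f i ≤ 2 * a + max B 0 * (1 / 2) ^ k := by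
    intro k
    induction k with
    | zero => intro i; have := hB i; have := le_max_left B 0; simp; linarith
    | succ k ih =>
      intro i
      have := h _ (by positivity) ih i
      rw [pow_succ]; linarith
  have ht : Filter.Tendsto (fun k : ℕ => 2 * a + max B 0 * (1 / 2 : ℝ) ^ k) Filter.atTop (nhds (2 * a + max B 0 * 0)) :=
    Filter.Tendsto.const_add _ (Filter.Tendsto.const_mul _
      (tendsto_pow_atTop_nhds_zero_of_lt_one (by norm_num) (by norm_num)))
  simp only [mul_zero, add_zero] at ht
  exact ge_of_tendsto' ht fun k => key k i

theorem card_bl_le (R : ℕ) (hR : 1 ≤ R) (u : V d) : ((bl R u).card : ℝ) ≤ 3 ^ d * (R:ℝ) ^ d := by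
  rw [card_bl, ← mul_pow]
  push_cast
  have : (1:ℝ) ≤ R := by exact_mod_cast hR
  gcongr; linarith

theorem short_sum {α : ℝ} (hd : 1 ≤ d) (h0 : 0 < α) (h1 : α < 1) :
    ∃ K : ℝ, 0 < K ∧ ∀ (R : ℕ) (u : V d),
      ∑ v ∈ (bl R u).erase u, (normInf (v - u) : ℝ) ^ (1 - ((d:ℝ) + α)) ≤ K * (R:ℝ) ^ (1 - α) := by
  have hd' : (1:ℝ) ≤ d := by exact_mod_cast hd
  set s := (d:ℝ) + α - 1 with hs
  have hs0 : 0 < s := by linarith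
  have hq : 0 < 1 - (2:ℝ) ^ (-(1 - α)) := by
    have : (2:ℝ) ^ (-(1 - α)) < 1 := Real.rpow_lt_one_of_one_lt_of_neg (by norm_num) (by linarith)
    linarith
  set K := 2 ^ s * 3 ^ d / (1 - (2:ℝ) ^ (-(1 - α))) with hK
  have hK0 : 0 < K := by positivity
  refine ⟨K, hK0, fun R u => ?_⟩
  induction R using Nat.strong_induction_on with
  | _ R ih =>
  rcases Nat.eq_zero_or_pos R with rfl | hR
  · have : (bl 0 u).erase u = ∅ := by
      ext v
      simp only [Finset.mem_erase, mem_bl, Nat.le_zero, normInf_eq_zero, sub_eq_zero, Finset.notMem_empty, iff_false]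
      tauto
    rw [this, Finset.sum_empty]; positivity
  have hR0 : (0:ℝ) < R := by exact_mod_cast hR
  have e1 : (1 - ((d:ℝ) + α)) = -s := by rw [hs]; ring
  rw [e1] at ih ⊢
  have hsub : (bl (R / 2) u).erase u ⊆ (bl R u).erase u := by
    intro v hv
    rw [Finset.mem_erase, mem_bl] at hv ⊢
    exact ⟨hv.1, by omega⟩
  rw [← Finset.sum_sdiff hsub]
  have h2 : ∑ v ∈ (bl R u).erase u \ (bl (R / 2) u).erase u, (normInf (v - u) : ℝ) ^ (-s) ≤
      2 ^ s * 3 ^ d * (R:ℝ) ^ (1 - α) := by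
    calc _ ≤ ∑ v ∈ (bl R u).erase u \ (bl (R / 2) u).erase u, ((R:ℝ) / 2) ^ (-s) := by
          refine Finset.sum_le_sum fun v hv => ?_
          rw [Finset.mem_sdiff, Finset.mem_erase, Finset.mem_erase, mem_bl, mem_bl] at hv
          have h3 : R / 2 < normInf (v - u) := by
            by_contra hcon
            exact hv.2 ⟨hv.1.1, by omega⟩
          refine Real.rpow_le_rpow_of_nonpos (by positivity) ?_ (by linarith)
          have : R ≤ 2 * normInf (v - u) := by omega
          have : (R:ℝ) ≤ 2 * normInf (v - u) := by exact_mod_cast this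
          linarith
      _ ≤ (3 ^ d * (R:ℝ) ^ d) * ((R:ℝ) / 2) ^ (-s) := by
          rw [Finset.sum_const, nsmul_eq_mul]
          refine mul_le_mul_of_nonneg_right ?_ (by positivity)
          refine le_trans ?_ (card_bl_le R hR u)
          exact_mod_cast Finset.card_le_card (Finset.sdiff_subset.trans (Finset.erase_subset _ _))
      _ = _ := by
          rw [Real.div_rpow hR0.le (by norm_num), Real.rpow_neg (by norm_num : (0:ℝ) ≤ 2), div_inv_eq_mul]
          have : (R:ℝ) ^ (1 - α) = (R:ℝ) ^ d * (R:ℝ) ^ (-s) := by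
            rw [← Real.rpow_natCast, ← Real.rpow_add hR0]; congr 1; rw [hs]; ring
          rw [this]; ring
  have h3 := ih (R / 2) (by omega)
  have h4 : ((R / 2 : ℕ) : ℝ) ^ (1 - α) ≤ (2:ℝ) ^ (-(1 - α)) * (R:ℝ) ^ (1 - α) := by
    have : ((R / 2 : ℕ) : ℝ) ≤ (R:ℝ) / 2 := Nat.cast_div_le
    calc _ ≤ ((R:ℝ) / 2) ^ (1 - α) := by
          refine Real.rpow_le_rpow (by positivity) this (by linarith)
      _ = _ := by rw [Real.div_rpow hR0.le (by norm_num), Real.rpow_neg (by norm_num)]; field_simp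
  have h5 : K * (1 - (2:ℝ) ^ (-(1 - α))) = 2 ^ s * 3 ^ d := by rw [hK]; field_simp
  calc _ ≤ 2 ^ s * 3 ^ d * (R:ℝ) ^ (1 - α) + K * ((2:ℝ) ^ (-(1 - α)) * (R:ℝ) ^ (1 - α)) := by
        refine add_le_add h2 (h3.trans ?_); gcongr
    _ = K * (R:ℝ) ^ (1 - α) := by rw [← h5]; ring

theorem dyadic {g g' : ℝ} (hg' : 0 < g') (hgg : g < g') :
    ∃ K : ℝ, 0 < K ∧ ∀ (Q : Finset (V d)) (y : V d) (f : V d → ℝ) (H : ℝ) (ρ : ℕ), 1 ≤ ρ → 0 ≤ H → (∀ v, 0 ≤ f v) →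
      (∀ r : ℕ, 1 ≤ r → ∑ v ∈ Q with normInf (v - y) ≤ r, f v ≤ H * (r:ℝ) ^ g) →
      ∑ v ∈ Q, (max (ρ:ℝ) (normInf (v - y))) ^ (-g') * f v ≤ K * H * (ρ:ℝ) ^ (g - g') := by
  set q := (2:ℝ) ^ (g - g') with hq
  have hq0 : 0 < q := by positivity
  have hq1 : q < 1 := Real.rpow_lt_one_of_one_lt_of_neg (by norm_num) (by linarith)
  have hq2 : 0 < 1 - q := by linarith
  refine ⟨2 ^ g' * (1 - q)⁻¹, by positivity, fun Q y f H ρ hρ hH hf hF => ?_⟩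
  have hρ0 : (0:ℝ) < ρ := by exact_mod_cast hρ
  set n := Q.sup fun v => normInf (v - y) with hn
  set w : ℕ → ℝ := fun k => 2 ^ g' * (((2 ^ k * ρ : ℕ) : ℝ)) ^ (-g') with hw
  have hw0 : ∀ k, 0 ≤ w k := fun k => by positivity
  have hpt : ∀ v ∈ Q, (max (ρ:ℝ) (normInf (v - y))) ^ (-g') * f v ≤
      ∑ k ∈ Finset.range (n + 1), w k * (if normInf (v - y) ≤ 2 ^ k * ρ then f v else 0) := by
    intro v hv
    have hvn : normInf (v - y) ≤ n := Finset.le_sup (f := fun v => normInf (v - y)) hv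
    set t := normInf (v - y)
    have htn : t ≤ 2 ^ n * ρ := by
      have : n < 2 ^ n := Nat.lt_two_pow_self
      nlinarith
    have hex : ∃ k, t ≤ 2 ^ k * ρ := ⟨n, htn⟩
    obtain ⟨k, hk, hkm⟩ : ∃ k, t ≤ 2 ^ k * ρ ∧ ∀ i < k, ¬ t ≤ 2 ^ i * ρ :=
      ⟨Nat.find hex, Nat.find_spec hex, fun i hi => Nat.find_min hex hi⟩
    have hkn : k ∈ Finset.range (n + 1) := by
      rw [Finset.mem_range]
      by_contra hc
      exact hkm n (by omega) htn
    refine le_trans ?_ (Finset.single_le_sum (fun i _ => mul_nonneg (hw0 i) (by split_ifs <;> simp [hf])) hkn)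
    rw [if_pos hk]
    refine mul_le_mul_of_nonneg_right ?_ (hf v)
    have e : w k = (((2 ^ k * ρ : ℕ) : ℝ) / 2) ^ (-g') := by
      rw [hw, Real.div_rpow (by positivity) (by norm_num), Real.rpow_neg (by norm_num : (0:ℝ) ≤ 2), div_inv_eq_mul, mul_comm]
    rw [e]
    refine Real.rpow_le_rpow_of_nonpos (by positivity) ?_ (by linarith)
    cases k with
    | zero => refine le_max_of_le_left ?_; simp
    | succ i =>
      refine le_max_of_le_right ?_
      have h1 := hkm i (by omega)
      have h2 : 2 ^ (i + 1) * ρ ≤ 2 * t := by rw [pow_succ]; nlinarith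
      have h3 : ((2 ^ (i + 1) * ρ : ℕ) : ℝ) ≤ 2 * t := by exact_mod_cast h2
      linarith
  calc _ ≤ ∑ v ∈ Q, ∑ k ∈ Finset.range (n + 1), w k * (if normInf (v - y) ≤ 2 ^ k * ρ then f v else 0) :=
        Finset.sum_le_sum hpt
    _ = ∑ k ∈ Finset.range (n + 1), w k * ∑ v ∈ Q with normInf (v - y) ≤ 2 ^ k * ρ, f v := by
        rw [Finset.sum_comm]
        refine Finset.sum_congr rfl fun k _ => ?_
        rw [← Finset.mul_sum, Finset.sum_filter]
    _ ≤ ∑ k ∈ Finset.range (n + 1), w k * (H * ((2 ^ k * ρ : ℕ):ℝ) ^ g) := by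
        refine Finset.sum_le_sum fun k _ => mul_le_mul_of_nonneg_left (hF _ ?_) (hw0 k)
        exact Nat.mul_pos (by positivity) hρ
    _ = ∑ k ∈ Finset.range (n + 1), 2 ^ g' * H * (ρ:ℝ) ^ (g - g') * q ^ k := by
        refine Finset.sum_congr rfl fun k _ => ?_
        have hp : (0:ℝ) < ((2 ^ k * ρ : ℕ):ℝ) := by positivity
        have e1 : (((2 ^ k * ρ : ℕ):ℝ)) ^ (-g') * ((2 ^ k * ρ : ℕ):ℝ) ^ g = (ρ:ℝ) ^ (g - g') * q ^ k := by
          rw [← Real.rpow_add hp, Nat.cast_mul, Real.mul_rpow (by positivity) (by positivity)]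
          rw [show -g' + g = g - g' by ring, pow_cast_rpow, mul_comm]; rfl
        calc _ = 2 ^ g' * H * ((((2 ^ k * ρ : ℕ):ℝ)) ^ (-g') * ((2 ^ k * ρ : ℕ):ℝ) ^ g) := by rw [hw]; ring
          _ = _ := by rw [e1]; ring
    _ ≤ _ := by
        rw [← Finset.mul_sum]
        have : ∑ k ∈ Finset.range (n + 1), q ^ k ≤ (1 - q)⁻¹ := by
          rw [← tsum_geometric_of_lt_one hq0.le hq1]
          exact (summable_geometric_of_lt_one hq0.le hq1).sum_le_tsum _ fun _ _ => by positivity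
        calc _ ≤ 2 ^ g' * H * (ρ:ℝ) ^ (g - g') * (1 - q)⁻¹ := by gcongr
          _ = _ := by ring

end

section
variable {d : ℕ} {α c C : ℝ} {p : Sym2 (V d) → ℝ}

/-- averaged weight -/
noncomputable def wt (p : Sym2 (V d) → ℝ) (ρ : ℕ) (u v : V d) : ℝ :=
  p s(u, v) * min 1 ((normInf (v - u) : ℝ) / ρ)

theorem wt_nonneg (hp : PH d p α c C) (ρ : ℕ) (u v : V d) : 0 ≤ wt p ρ u v :=
  mul_nonneg (hp.h0 _) (by positivity)

theorem avg (hp : PH d p α c C) {Q : Finset (V d)} {x : V d} (hx : x ∈ Q) (y : V d) {ρ : ℕ} (hρ : 1 ≤ ρ) :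
    tau p Q x y ≤ tau p (bl (2 * ρ) x) x y + ∑ u ∈ bl (2 * ρ) x, tau p (bl (2 * ρ) x) x u *
      ∑ v ∈ Q with ρ < normInf (v - x), wt p ρ u v * tau p Q v y := by
  classical
  have hρ0 : (0:ℝ) < ρ := by exact_mod_cast hρ
  set g : V d → ℝ := fun u => tau p (bl (2 * ρ) x) x u with hg
  have hg0 : ∀ u, 0 ≤ g u := fun u => tau_nonneg hp.h0 hp.h1 _ _ _
  have hq0 : ∀ v, 0 ≤ p s(v, v) := fun v => hp.h0 _
  have ht0 : ∀ v, 0 ≤ tau p Q v y := fun u => tau_nonneg hp.h0 hp.h1 _ _ _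
  have h1 : ∀ s ∈ Finset.Ico ρ (2 * ρ), tau p Q x y ≤ g y + ∑ u ∈ bl (2 * ρ) x, ∑ v ∈ Q,
      g u * (p s(u, v) * tau p Q v y) * (if normInf (u - x) ≤ s ∧ s < normInf (v - x) then 1 else 0) := by
    intro s hs
    rw [Finset.mem_Ico] at hs
    set B := Q.filter (fun u => normInf (u - x) ≤ s) with hB
    have hxB : x ∈ B := by
      rw [hB, Finset.mem_filter]
      refine ⟨hx, ?_⟩
      rw [sub_self, normInf_eq_zero.mpr rfl]; omega
    have hBb : B ⊆ bl (2 * ρ) x := by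
      intro u hu
      rw [hB, Finset.mem_filter] at hu
      rw [mem_bl]; omega
    refine (exit_ineq hp.h0 hp.h1 (Finset.filter_subset _ Q) hxB).trans ?_
    refine add_le_add (tau_mono hp.h0 hp.h1 hBb _ _) ?_
    refine le_trans (Finset.sum_le_sum (g := fun u => ∑ v ∈ Q, g u * (p s(u, v) * tau p Q v y) * (if normInf (u - x) ≤ s ∧ s < normInf (v - x) then 1 else 0)) fun u hu => ?_) ?_
    · have hus : normInf (u - x) ≤ s := (Finset.mem_filter.mp hu).2
      refine le_trans (Finset.sum_le_sum (g := fun v => g u * (p s(u, v) * tau p Q v y) * (if normInf (u - x) ≤ s ∧ s < normInf (v - x) then 1 else 0)) fun v hv => ?_) ?_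
      · rw [Finset.mem_sdiff, Finset.mem_filter] at hv
        have hvs : s < normInf (v - x) := by
          by_contra hc; exact hv.2 ⟨hv.1, by omega⟩
        rw [if_pos ⟨hus, hvs⟩, mul_one]
        exact mul_le_mul_of_nonneg_right (tau_mono hp.h0 hp.h1 hBb _ _) (mul_nonneg (hp.h0 _) (ht0 _))
      · refine Finset.sum_le_sum_of_subset_of_nonneg Finset.sdiff_subset fun v _ _ => ?_
        exact mul_nonneg (mul_nonneg (hg0 _) (mul_nonneg (hp.h0 _) (ht0 _))) (by split_ifs <;> norm_num)
    · refine Finset.sum_le_sum_of_subset_of_nonneg hBb fun u _ _ => Finset.sum_nonneg fun v _ => ?_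
      exact mul_nonneg (mul_nonneg (hg0 _) (mul_nonneg (hp.h0 _) (ht0 _))) (by split_ifs <;> norm_num)
  have h2 := Finset.sum_le_sum h1
  rw [Finset.sum_const, Nat.card_Ico, nsmul_eq_mul, Finset.sum_add_distrib, Finset.sum_const, Nat.card_Ico,
    nsmul_eq_mul, Finset.sum_comm] at h2
  have e1 : 2 * ρ - ρ = ρ := by omega
  rw [e1] at h2
  have h3 : ∀ u v : V d, (∑ s ∈ Finset.Ico ρ (2 * ρ), (if normInf (u - x) ≤ s ∧ s < normInf (v - x) then (1:ℝ) else 0)) ≤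
      if ρ < normInf (v - x) then ρ * min 1 ((normInf (v - u) : ℝ) / ρ) else 0 := by
    intro u v
    rw [← Finset.sum_filter, Finset.sum_const, nsmul_eq_mul, mul_one]
    have htri : normInf (v - x) ≤ normInf (v - u) + normInf (u - x) := normInf_tri v u x
    split_ifs with hc
    · rw [mul_min_of_nonneg _ _ hρ0.le, mul_one, mul_div_cancel₀ _ hρ0.ne']
      refine le_min ?_ ?_
      · have := Finset.card_filter_le (Finset.Ico ρ (2 * ρ)) (fun s => normInf (u - x) ≤ s ∧ s < normInf (v - x))
        rw [Nat.card_Ico, e1] at this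
        exact_mod_cast this
      · have : (Finset.filter (fun s => normInf (u - x) ≤ s ∧ s < normInf (v - x)) (Finset.Ico ρ (2 * ρ))).card ≤
            (Finset.Ico (normInf (u - x)) (normInf (v - x))).card := by
          refine Finset.card_le_card fun s hs => ?_
          rw [Finset.mem_filter] at hs
          rw [Finset.mem_Ico]; exact hs.2
        rw [Nat.card_Ico] at this
        exact_mod_cast this.trans (by omega)
    · rw [Finset.filter_eq_empty_iff.mpr]
      · simp
      · intro s hs
        rw [Finset.mem_Ico] at hs
        omega
  have h4 : ∑ u ∈ bl (2 * ρ) x, ∑ s ∈ Finset.Ico ρ (2 * ρ), ∑ v ∈ Q,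
      g u * (p s(u, v) * tau p Q v y) * (if normInf (u - x) ≤ s ∧ s < normInf (v - x) then (1:ℝ) else 0) ≤
      ρ * ∑ u ∈ bl (2 * ρ) x, g u * ∑ v ∈ Q with ρ < normInf (v - x), wt p ρ u v * tau p Q v y := by
    rw [Finset.mul_sum]
    refine Finset.sum_le_sum fun u _ => ?_
    rw [Finset.sum_comm, Finset.sum_filter, Finset.mul_sum, Finset.mul_sum]
    refine Finset.sum_le_sum fun v _ => ?_
    rw [← Finset.mul_sum]
    refine (mul_le_mul_of_nonneg_left (h3 u v) (mul_nonneg (hg0 _) (mul_nonneg (hp.h0 _) (ht0 _)))).trans (le_of_eq ?_)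
    unfold wt
    split_ifs <;> ring
  have h5 := h2.trans (add_le_add_right h4 _)
  rw [← mul_add] at h5
  exact le_of_mul_le_mul_left h5 hρ0

theorem wt_le (hp : PH d p α c C) (ρ : ℕ) {u v : V d} (h : u ≠ v) :
    wt p ρ u v ≤ C * (normInf (v - u) : ℝ) ^ (-((d:ℝ) + α)) := by
  have := hp.up u v h
  rw [normInf_comm] at this
  refine le_trans ?_ this
  exact mul_le_of_le_one_right (hp.h0 _) (min_le_left _ _)

theorem wt_short (hd : 1 ≤ d) (h0 : 0 < α) (h1 : α < 1) :
    ∃ K : ℝ, 0 < K ∧ ∀ (c C : ℝ) (p : Sym2 (V d) → ℝ), 0 < C → PH d p α c C → ∀ (Q : Finset (V d)) (u : V d) (ρ : ℕ) (ε : ℝ), 1 ≤ ρ → 0 < ε →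
      ∑ v ∈ Q with (normInf (v - u) : ℝ) ≤ ε * ρ, wt p ρ u v ≤ C * K * ε ^ (1 - α) * (ρ:ℝ) ^ (-α) := by
  obtain ⟨K, hK, hs⟩ := short_sum hd h0 h1
  refine ⟨K, hK, fun c C p hC hp Q u ρ ε hρ hε => ?_⟩
  have hρ0 : (0:ℝ) < ρ := by exact_mod_cast hρ
  set R := ⌊ε * ρ⌋₊ with hR
  have hR1 : (R:ℝ) ≤ ε * ρ := Nat.floor_le (by positivity)
  have h2 : ∀ v, v ≠ u → wt p ρ u v ≤ C / ρ * (normInf (v - u) : ℝ) ^ (1 - ((d:ℝ) + α)) := by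
    intro v hv
    have hn := normInf_pos hv
    have hn0 : (0:ℝ) < normInf (v - u) := by exact_mod_cast hn
    have h3 := hp.up u v hv.symm
    rw [normInf_comm] at h3
    calc wt p ρ u v ≤ (C * (normInf (v - u) : ℝ) ^ (-((d:ℝ) + α))) * ((normInf (v - u) : ℝ) / ρ) := by
          unfold wt
          exact mul_le_mul h3 (min_le_right _ _) (by positivity) (by positivity)
      _ = _ := by
          rw [sub_eq_add_neg (1:ℝ), Real.rpow_add hn0, Real.rpow_one]; ring
  calc _ ≤ ∑ v ∈ bl R u, wt p ρ u v := by
        refine Finset.sum_le_sum_of_subset_of_nonneg ?_ fun v _ _ => wt_nonneg hp _ _ _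
        intro v hv
        rw [Finset.mem_filter] at hv
        rw [mem_bl]; exact Nat.le_floor hv.2
    _ = ∑ v ∈ (bl R u).erase u, wt p ρ u v := by
        rw [Finset.sum_erase]
        unfold wt
        rw [sub_self, normInf_eq_zero.mpr rfl]; simp
    _ ≤ ∑ v ∈ (bl R u).erase u, C / ρ * (normInf (v - u) : ℝ) ^ (1 - ((d:ℝ) + α)) :=
        Finset.sum_le_sum fun v hv => h2 v (Finset.ne_of_mem_erase hv)
    _ ≤ C / ρ * (K * (R:ℝ) ^ (1 - α)) := by
        rw [← Finset.mul_sum]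
        exact mul_le_mul_of_nonneg_left (hs R u) (by positivity)
    _ ≤ C / ρ * (K * (ε * ρ) ^ (1 - α)) := by
        gcongr
    _ = _ := by
        rw [Real.mul_rpow hε.le hρ0.le]
        have : (ρ:ℝ) ^ (1 - α) = ρ * (ρ:ℝ) ^ (-α) := by
          rw [sub_eq_add_neg, Real.rpow_add hρ0, Real.rpow_one]
        rw [this]; field_simp

theorem wt_total (hd : 1 ≤ d) (h0 : 0 < α) (h1 : α < 1) :
    ∃ K : ℝ, 0 < K ∧ ∀ (c C : ℝ) (p : Sym2 (V d) → ℝ), 0 < C → PH d p α c C → ∀ (Q : Finset (V d)) (u : V d) (ρ : ℕ), 1 ≤ ρ →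
      ∑ v ∈ Q, wt p ρ u v ≤ C * K * (ρ:ℝ) ^ (-α) := by
  obtain ⟨K, hK, hs⟩ := wt_short (d := d) hd h0 h1
  obtain ⟨K', hK', hs'⟩ := dyadic (d := d) (g := (d:ℝ)) (g' := (d:ℝ) + α) (by positivity) (by linarith)
  refine ⟨K + K' * 3 ^ d, by positivity, fun c C p hC hp Q u ρ hρ => ?_⟩
  have hρ0 : (0:ℝ) < ρ := by exact_mod_cast hρ
  have a1 := hs c C p hC hp Q u ρ 1 hρ one_pos
  rw [Real.one_rpow, mul_one, one_mul] at a1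
  have a2 := hs' Q u (fun _ => 1) (3 ^ d) ρ hρ (by positivity) (fun _ => by norm_num) (by
    intro r hr
    rw [Finset.sum_const, nsmul_eq_mul, mul_one, Real.rpow_natCast]
    refine le_trans ?_ (card_bl_le r hr u)
    exact_mod_cast Finset.card_le_card fun v hv => mem_bl.mpr (Finset.mem_filter.mp hv).2)
  rw [← Finset.sum_filter_add_sum_filter_not Q (fun v => (normInf (v - u) : ℝ) ≤ ρ)]
  have e : (d:ℝ) - (d + α) = -α := by ring
  rw [e] at a2
  calc _ ≤ C * K * (ρ:ℝ) ^ (-α) + C * (K' * 3 ^ d * (ρ:ℝ) ^ (-α)) := by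
        refine add_le_add a1 ?_
        refine le_trans ?_ (mul_le_mul_of_nonneg_left a2 hC.le)
        rw [Finset.mul_sum]
        refine le_trans (Finset.sum_le_sum (g := fun v => C * ((max (ρ:ℝ) (normInf (v - u))) ^ (-((d:ℝ) + α)) * 1)) fun v hv => ?_) (Finset.sum_le_sum_of_subset_of_nonneg (Finset.filter_subset _ _) fun v _ _ => by positivity)
        rw [Finset.mem_filter, not_le] at hv
        rw [max_eq_right hv.2.le, mul_one]
        refine wt_le hp ρ ?_
        rintro rfl
        rw [sub_self, normInf_eq_zero.mpr rfl] at hv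
        have := hv.2
        norm_num at this
        linarith
    _ = _ := by ring

end

section
variable {d : ℕ} {α c C : ℝ} {p : Sym2 (V d) → ℝ}

theorem exists_small {Z s : ℝ} (hZ : 0 < Z) (hs : 0 < s) : ∃ ε : ℝ, 0 < ε ∧ ε ≤ 1 ∧ Z * ε ^ s ≤ 1 / 2 := by
  have hq : 0 < 1 / (2 * (Z + 1)) := by positivity
  refine ⟨(1 / (2 * (Z + 1))) ^ (1 / s), by positivity, ?_, ?_⟩
  · refine Real.rpow_le_one hq.le ?_ (by positivity)
    rw [div_le_one (by positivity)]; linarith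
  · rw [← Real.rpow_mul hq.le, one_div_mul_cancel hs.ne', Real.rpow_one, mul_one_div, div_le_iff₀ (by positivity)]
    linarith

theorem stepI (hd : 1 ≤ d) (h0 : 0 < α) (h1 : α < 1) (hαd : α < d) (hC : 0 < C) {A : ℝ} (hA : 0 < A) :
    ∃ D : ℝ, 0 < D ∧ ∀ (c : ℝ) (p : Sym2 (V d) → ℝ), PH d p α c C →
      (∀ (s : ℕ) (x : V d), 1 ≤ s → ∑ u ∈ bl s x, tau p (bl s x) x u ≤ A * (s:ℝ) ^ α) →
      ∀ (Q : Finset (V d)) (y : V d) (H : ℝ), 1 ≤ H →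
      (∀ r : ℕ, 1 ≤ r → ∑ v ∈ Q with normInf (v - y) ≤ r, tau p Q v y ≤ H * (r:ℝ) ^ α) →
      ∀ x ∈ Q, tau p Q x y ≤ D * H * (max 1 (normInf (x - y) : ℝ)) ^ (-((d:ℝ) - α)) := by
  obtain ⟨K₂, hK₂, hshort⟩ := wt_short (d := d) hd h0 h1
  obtain ⟨K, hK, hdy⟩ := dyadic (d := d) (g := α) (g' := (d:ℝ) + α) (by positivity) (by
    have : (1:ℝ) ≤ d := by exact_mod_cast hd
    linarith)
  set e := (d:ℝ) - α with he
  have he0 : 0 < e := by linarith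
  obtain ⟨ε, hε, hε1, hεs⟩ := exists_small (Z := A * C * K₂ * 2 ^ α * 2 ^ e) (s := 1 - α) (by positivity) (by linarith)
  set E := (19 / ε) ^ ((d:ℝ) + α) with hE
  set C₃ := A * 2 ^ α * C * E * K * 16 ^ e with hC₃
  set C₄ := C₃ + 8 ^ e with hC₄
  have hC₃0 : 0 < C₃ := by positivity
  refine ⟨2 * C₄, by positivity, fun c p hp hball Q y H hH hF x hx => ?_⟩
  have hH0 : 0 < H := by linarith
  have ht0 : ∀ v, 0 ≤ tau p Q v y := fun u => tau_nonneg hp.h0 hp.h1 _ _ _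
  set M : V d → ℝ := fun x => max 1 (normInf (x - y) : ℝ) with hM
  have hM0 : ∀ x, 0 < M x := fun x => lt_of_lt_of_le one_pos (le_max_left _ _)
  set f : {x // x ∈ Q} → ℝ := fun x => tau p Q x y * M x ^ e with hf
  have hf0 : ∀ x, 0 ≤ f x := fun x => mul_nonneg (ht0 _) (Real.rpow_nonneg (hM0 _).le _)
  have main : ∀ N, 0 ≤ N → (∀ i, f i ≤ N) → ∀ i, f i ≤ C₄ * H + N / 2 := by
    rintro N hN hfN ⟨x, hx⟩
    have hτ : ∀ v ∈ Q, tau p Q v y ≤ N * M v ^ (-e) := by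
      intro v hv
      have := hfN ⟨v, hv⟩
      rw [Real.rpow_neg (hM0 v).le, ← div_eq_mul_inv, le_div_iff₀ (Real.rpow_pos_of_pos (hM0 v) _)]
      exact this
    set r := normInf (x - y) with hr
    show tau p Q x y * M x ^ e ≤ _
    rcases lt_or_ge r 8 with h8 | h8
    · have a1 : M x ^ e ≤ 8 ^ e := by
        refine Real.rpow_le_rpow (hM0 x).le (max_le (by norm_num) ?_) he0.le
        exact_mod_cast h8.le
      have a2 := tau_le_one hp.h0 hp.h1 Q x y
      calc tau p Q x y * M x ^ e ≤ 1 * 8 ^ e := mul_le_mul a2 a1 (Real.rpow_nonneg (hM0 _).le _) zero_le_one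
        _ ≤ 8 ^ e * H := by rw [one_mul]; exact le_mul_of_one_le_right (by positivity) hH
        _ ≤ C₄ * H := by rw [hC₄]; gcongr; linarith
        _ ≤ _ := by linarith
    set ρ := r / 8 with hρ
    have hρ1 : 1 ≤ ρ := by omega
    have hρ0 : (0:ℝ) < ρ := by exact_mod_cast hρ1
    have hr16 : r ≤ 16 * ρ := by omega
    have hr8 : 8 * ρ ≤ r := by omega
    have hr0 : (0:ℝ) < r := by exact_mod_cast (by omega : 0 < r)
    have hMx : M x = r := max_eq_right (by exact_mod_cast (by omega : 1 ≤ r))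
    have havg := avg hp hx y hρ1
    have hgy : tau p (bl (2 * ρ) x) x y = 0 := by
      refine tau_out _ ?_ ?_
      · rw [mem_bl, sub_self, normInf_eq_zero.mpr rfl]; omega
      · rw [mem_bl, normInf_comm]; omega
    rw [hgy, zero_add] at havg
    set S := C * K₂ * ε ^ (1 - α) * (ρ:ℝ) ^ (-α) * (N * ((r:ℝ) / 2) ^ (-e)) + C * E * (K * H * (ρ:ℝ) ^ (-(d:ℝ))) with hS
    have hinner : ∀ u ∈ bl (2 * ρ) x, ∑ v ∈ Q with ρ < normInf (v - x), wt p ρ u v * tau p Q v y ≤ S := by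
      intro u hu
      rw [mem_bl] at hu
      calc _ ≤ ∑ v ∈ Q, wt p ρ u v * tau p Q v y :=
            Finset.sum_le_sum_of_subset_of_nonneg (Finset.filter_subset _ _)
              fun v _ _ => mul_nonneg (wt_nonneg hp _ _ _) (ht0 v)
        _ = _ := (Finset.sum_filter_add_sum_filter_not Q (fun v => (normInf (v - u) : ℝ) ≤ ε * ρ) _).symm
        _ ≤ S := by
          refine add_le_add ?_ ?_
          · refine le_trans (Finset.sum_le_sum (g := fun v => wt p ρ u v * (N * ((r:ℝ) / 2) ^ (-e))) fun v hv => ?_) ?_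
            · rw [Finset.mem_filter] at hv
              refine mul_le_mul_of_nonneg_left ((hτ v hv.1).trans ?_) (wt_nonneg hp _ _ _)
              refine mul_le_mul_of_nonneg_left ?_ hN
              refine Real.rpow_le_rpow_of_nonpos (by positivity) ?_ (by linarith)
              refine le_max_of_le_right ?_
              have b1 : (normInf (v - u) : ℝ) ≤ ρ := hv.2.trans (mul_le_of_le_one_left hρ0.le hε1)
              have b2 : normInf (v - u) ≤ ρ := by exact_mod_cast b1
              have b3 := normInf_tri x u y
              have b4 := normInf_tri u v y
              rw [normInf_comm x u] at b3
              rw [normInf_comm u v] at b4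
              have b5 : r ≤ 2 * normInf (v - y) := by omega
              have b6 : (r:ℝ) ≤ 2 * normInf (v - y) := by exact_mod_cast b5
              linarith
            · rw [← Finset.sum_mul]
              exact mul_le_mul_of_nonneg_right (hshort c C p hC hp Q u ρ ε hρ1 hε) (by positivity)
          · have hd1 := hdy Q y (fun v => tau p Q v y) H ρ hρ1 hH0.le ht0 hF
            have e1 : α - ((d:ℝ) + α) = -(d:ℝ) := by ring
            rw [e1] at hd1
            refine le_trans ?_ (mul_le_mul_of_nonneg_left hd1 (by positivity))
            rw [Finset.mul_sum]
            refine le_trans (Finset.sum_le_sum (g := fun v => C * E * ((max (ρ:ℝ) (normInf (v - y))) ^ (-((d:ℝ) + α)) * tau p Q v y)) fun v hv => ?_) (Finset.sum_le_sum_of_subset_of_nonneg (Finset.filter_subset _ _) fun v _ _ => mul_nonneg (by positivity) (mul_nonneg (by positivity) (ht0 v)))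
            rw [Finset.mem_filter, not_le] at hv
            rw [← mul_assoc]
            refine mul_le_mul_of_nonneg_right ?_ (ht0 v)
            set t := normInf (v - u) with ht
            have ht0 : (0:ℝ) < t := lt_trans (by positivity) hv.2
            have hne : u ≠ v := by
              rintro rfl
              rw [ht, sub_self, normInf_eq_zero.mpr rfl] at ht0
              norm_num at ht0
            refine (wt_le hp ρ hne).trans ?_
            rw [mul_assoc]
            refine mul_le_mul_of_nonneg_left ?_ hC.le
            have hmax : max (ρ:ℝ) (normInf (v - y)) ≤ 19 / ε * t := by
              have c1 : (ρ:ℝ) ≤ t / ε := by rw [le_div_iff₀ hε]; linarith [hv.2]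
              have c2 : (t:ℝ) ≤ t / ε := by rw [le_div_iff₀ hε]; nlinarith
              have c3 : normInf (v - y) ≤ t + 18 * ρ := by
                have b3 := normInf_tri v u y
                have b4 := normInf_tri u x y
                omega
              have c4 : (normInf (v - y) : ℝ) ≤ t + 18 * ρ := by exact_mod_cast c3
              have c5 : 19 / ε * t = 19 * (t / ε) := by ring
              rw [c5]
              refine max_le ?_ ?_ <;> linarith
            have hmax0 : 0 < max (ρ:ℝ) (normInf (v - y)) := lt_of_lt_of_le hρ0 (le_max_left _ _)
            calc (t:ℝ) ^ (-((d:ℝ) + α)) = E * (19 / ε * t) ^ (-((d:ℝ) + α)) := by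
                  rw [Real.mul_rpow (by positivity) ht0.le, ← mul_assoc, hE, ← Real.rpow_add (by positivity)]
                  simp
              _ ≤ _ := by
                  refine mul_le_mul_of_nonneg_left ?_ (by positivity)
                  exact Real.rpow_le_rpow_of_nonpos hmax0 hmax (by linarith)
    have hS0 : 0 ≤ S := by positivity
    have hfin : tau p Q x y ≤ A * ((2 * ρ : ℕ) : ℝ) ^ α * S := by
      refine havg.trans ?_
      refine le_trans (Finset.sum_le_sum fun u hu => mul_le_mul_of_nonneg_left (hinner u hu) (tau_nonneg hp.h0 hp.h1 _ _ _)) ?_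
      rw [← Finset.sum_mul]
      exact mul_le_mul_of_nonneg_right (hball _ _ (by omega)) hS0
    have k1 : ((2 * ρ : ℕ) : ℝ) ^ α = 2 ^ α * (ρ:ℝ) ^ α := by
      push_cast; rw [Real.mul_rpow (by norm_num) hρ0.le]
    have k2 : (ρ:ℝ) ^ α * (ρ:ℝ) ^ (-α) = 1 := by rw [← Real.rpow_add hρ0]; simp
    have k3 : (ρ:ℝ) ^ α * (ρ:ℝ) ^ (-(d:ℝ)) = (ρ:ℝ) ^ (-e) := by
      rw [← Real.rpow_add hρ0]; congr 1; rw [he]; ring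
    have k4 : ((r:ℝ) / 2) ^ (-e) = 2 ^ e * (r:ℝ) ^ (-e) := by
      rw [Real.div_rpow hr0.le (by norm_num), Real.rpow_neg (by norm_num : (0:ℝ) ≤ 2), div_inv_eq_mul, mul_comm]
    have k5 : (ρ:ℝ) ^ (-e) ≤ 16 ^ e * (r:ℝ) ^ (-e) := by
      have : (r:ℝ) / 16 ≤ ρ := by
        have : (r:ℝ) ≤ 16 * ρ := by exact_mod_cast hr16
        linarith
      calc _ ≤ ((r:ℝ) / 16) ^ (-e) := Real.rpow_le_rpow_of_nonpos (by positivity) this (by linarith)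
        _ = _ := by rw [Real.div_rpow hr0.le (by norm_num), Real.rpow_neg (by norm_num : (0:ℝ) ≤ 16), div_inv_eq_mul, mul_comm]
    have k6 : (r:ℝ) ^ (-e) * (r:ℝ) ^ e = 1 := by rw [← Real.rpow_add hr0]; simp
    have hfin2 : tau p Q x y ≤ (C₃ * H + N / 2) * (r:ℝ) ^ (-e) := by
      calc _ ≤ _ := hfin
        _ = (A * C * K₂ * 2 ^ α * 2 ^ e * ε ^ (1 - α)) * N * (r:ℝ) ^ (-e) * ((ρ:ℝ) ^ α * (ρ:ℝ) ^ (-α))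
            + A * 2 ^ α * C * E * K * H * ((ρ:ℝ) ^ α * (ρ:ℝ) ^ (-(d:ℝ))) := by
            rw [k1, hS, k4]; ring
        _ ≤ (1 / 2) * N * (r:ℝ) ^ (-e) * 1 + A * 2 ^ α * C * E * K * H * (16 ^ e * (r:ℝ) ^ (-e)) := by
            rw [k2, k3]; gcongr
        _ = _ := by rw [hC₃]; ring
    rw [hMx]
    calc _ ≤ (C₃ * H + N / 2) * (r:ℝ) ^ (-e) * (r:ℝ) ^ e := mul_le_mul_of_nonneg_right hfin2 (by positivity)
      _ = C₃ * H + N / 2 := by rw [mul_assoc, k6, mul_one]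
      _ ≤ C₄ * H + N / 2 := by
        have : (0:ℝ) ≤ 8 ^ e * H := by positivity
        rw [hC₄, add_mul]; linarith
  have hb := boot f (B := ∑ i, f i) (fun i => Finset.single_le_sum (fun i _ => hf0 i) (Finset.mem_univ i)) (by positivity) main ⟨x, hx⟩
  have hb' : tau p Q x y * M x ^ e ≤ 2 * (C₄ * H) := hb
  show _ ≤ _ * M x ^ (-e)
  rw [Real.rpow_neg (hM0 x).le, ← div_eq_mul_inv, le_div_iff₀ (Real.rpow_pos_of_pos (hM0 x) _)]
  linarith

end

section
variable {d : ℕ} {α c C : ℝ} {p : Sym2 (V d) → ℝ}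

theorem tau_bound (hd : 1 ≤ d) (h0 : 0 < α) (h1 : α < 1) (hαd : α < d) (hC : 0 < C) {A : ℝ} (hA : 0 < A) :
    ∃ D : ℝ, 0 < D ∧ ∀ (c : ℝ) (p : Sym2 (V d) → ℝ), PH d p α c C →
      (∀ (s : ℕ) (x : V d), 1 ≤ s → ∑ u ∈ bl s x, tau p (bl s x) x u ≤ A * (s:ℝ) ^ α) →
      ∀ (Q : Finset (V d)), ∀ x ∈ Q, ∀ y ∈ Q,
        tau p Q x y ≤ D * (max 1 (normInf (x - y) : ℝ)) ^ (-((d:ℝ) - α)) := by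
  classical
  obtain ⟨D, hD, hI⟩ := stepI (d := d) hd h0 h1 hαd hC hA
  obtain ⟨K, hK, htot⟩ := wt_total (d := d) hd h0 h1
  set e := (d:ℝ) - α with he
  have he0 : 0 < e := by linarith
  set C₇ := A * 2 ^ α * (C * K) * D * 2 ^ e * 3 ^ d with hC₇
  have hC₇0 : 0 < C₇ := by positivity
  obtain ⟨ε, hε, hε1, hεs⟩ := exists_small (Z := C₇) (s := e) hC₇0 he0
  set B := ⌈1 / ε⌉₊ + 2 with hB
  have hB2 : 2 ≤ B := by omega
  have hB0 : (0:ℝ) < B := by exact_mod_cast (by omega : 0 < B)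
  have hBs : C₇ * (B:ℝ) ^ (-e) ≤ 1 / 2 := by
    refine le_trans (mul_le_mul_of_nonneg_left ?_ hC₇0.le) hεs
    have : 1 / ε ≤ B := by
      have := Nat.le_ceil (1 / ε)
      rw [hB]; push_cast; linarith
    calc _ ≤ (1 / ε) ^ (-e) := Real.rpow_le_rpow_of_nonpos (by positivity) this (by linarith)
      _ = ε ^ e := by rw [one_div, Real.inv_rpow hε.le, Real.rpow_neg hε.le, inv_inv]
  set a := A * (2 * B) ^ α + 1 / 2 with ha
  have ha0 : 1 / 2 ≤ a := by
    have : 0 ≤ A * (2 * (B:ℝ)) ^ α := by positivity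
    linarith
  refine ⟨D * (2 * a), by positivity, fun c p hp hball Q x hx y hy => ?_⟩
  have ht0 : ∀ v y, 0 ≤ tau p Q v y := fun u y => tau_nonneg hp.h0 hp.h1 _ _ _
  set F : V d → ℕ → ℝ := fun x r => ∑ v ∈ Q with normInf (v - x) ≤ r, tau p Q v x with hF
  set f : {x // x ∈ Q} × {r : ℕ // 1 ≤ r} → ℝ := fun i => F i.1 i.2 * ((i.2 : ℕ) : ℝ) ^ (-α) with hf
  have conv : ∀ (x : V d) (r : ℕ) (N : ℝ), 1 ≤ r → (F x r * (r:ℝ) ^ (-α) ≤ N ↔ F x r ≤ N * (r:ℝ) ^ α) := by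
    intro x r N hr
    have : (0:ℝ) < r := by exact_mod_cast hr
    rw [Real.rpow_neg this.le, ← div_eq_mul_inv, div_le_iff₀ (by positivity)]
  have main : ∀ N, 0 ≤ N → (∀ i, f i ≤ N) → ∀ i, f i ≤ a + N / 2 := by
    rintro N hN hfN ⟨⟨x, hx⟩, ⟨r, hr⟩⟩
    set H := max N 1 with hH
    have hH1 : 1 ≤ H := le_max_right _ _
    have hHN : H ≤ N + 1 := max_le (by linarith) (by linarith)
    have hFH : ∀ y ∈ Q, ∀ r : ℕ, 1 ≤ r → F y r ≤ H * (r:ℝ) ^ α := by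
      intro y hy r hr
      exact (conv y r H hr).mp ((hfN ⟨⟨y, hy⟩, ⟨r, hr⟩⟩).trans (le_max_left _ _))
    have hτ : ∀ v ∈ Q, ∀ y ∈ Q, tau p Q v y ≤ D * H * (max 1 (normInf (v - y) : ℝ)) ^ (-e) :=
      fun v hv y hy => hI c p hp hball Q y H hH1 (hFH y hy) v hv
    have hr0 : (0:ℝ) < r := by exact_mod_cast hr
    refine (conv x r _ hr).mpr ?_
    set ρ := B * r with hρ
    have hρ1 : 1 ≤ ρ := by rw [hρ]; nlinarith
    have hρr : 2 * r ≤ ρ := by rw [hρ]; nlinarith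
    have hρ0 : (0:ℝ) < ρ := by exact_mod_cast hρ1
    set g : V d → ℝ := fun u => tau p (bl (2 * ρ) x) x u with hg
    have hg0 : ∀ u, 0 ≤ g u := fun u => tau_nonneg hp.h0 hp.h1 _ _ _
    have hgs : ∑ u ∈ bl (2 * ρ) x, g u ≤ A * ((2 * ρ : ℕ) : ℝ) ^ α := hball _ _ (by omega)
    set Y := Q.filter (fun v => normInf (v - x) ≤ r) with hY
    set T := (3 ^ d * (r:ℝ) ^ d) * (D * H * ((ρ:ℝ) / 2) ^ (-e)) with hT
    have hT0 : 0 ≤ T := by positivity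
    have hYs : ∀ v ∈ Q, ρ < normInf (v - x) → ∑ y ∈ Y, tau p Q v y ≤ T := by
      intro v hv hvx
      calc _ ≤ ∑ y ∈ Y, D * H * ((ρ:ℝ) / 2) ^ (-e) := by
            refine Finset.sum_le_sum fun y hy => ?_
            rw [hY, Finset.mem_filter] at hy
            refine (hτ v hv y hy.1).trans (mul_le_mul_of_nonneg_left ?_ (by positivity))
            refine Real.rpow_le_rpow_of_nonpos (by positivity) ?_ (by linarith)
            refine le_max_of_le_right ?_
            have b1 := normInf_tri v y x
            have b2 : ρ ≤ 2 * normInf (v - y) := by omega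
            have b3 : (ρ:ℝ) ≤ 2 * normInf (v - y) := by exact_mod_cast b2
            linarith
        _ ≤ T := by
            rw [Finset.sum_const, nsmul_eq_mul]
            refine mul_le_mul_of_nonneg_right ?_ (by positivity)
            refine le_trans ?_ (card_bl_le r hr x)
            exact_mod_cast Finset.card_le_card fun v hv => mem_bl.mpr (Finset.mem_filter.mp hv).2
    have hFx : F x r ≤ A * ((2 * ρ : ℕ) : ℝ) ^ α + A * ((2 * ρ : ℕ) : ℝ) ^ α * ((C * K * (ρ:ℝ) ^ (-α)) * T) := by
      calc F x r = ∑ y ∈ Y, tau p Q x y := Finset.sum_congr rfl fun y _ => tau_symm _ _ _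
        _ ≤ ∑ y ∈ Y, (g y + ∑ u ∈ bl (2 * ρ) x, g u *
              ∑ v ∈ Q with ρ < normInf (v - x), wt p ρ u v * tau p Q v y) :=
            Finset.sum_le_sum fun y _ => avg hp hx y hρ1
        _ = ∑ y ∈ Y, g y + ∑ u ∈ bl (2 * ρ) x, g u *
              ∑ v ∈ Q with ρ < normInf (v - x), wt p ρ u v * ∑ y ∈ Y, tau p Q v y := by
            rw [Finset.sum_add_distrib, Finset.sum_comm]
            congr 1
            refine Finset.sum_congr rfl fun u _ => ?_
            rw [← Finset.mul_sum, Finset.sum_comm]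
            congr 1
            refine Finset.sum_congr rfl fun v _ => ?_
            rw [Finset.mul_sum]
        _ ≤ _ := by
            refine add_le_add ?_ ?_
            · refine le_trans (Finset.sum_le_sum_of_subset_of_nonneg ?_ fun u _ _ => hg0 u) hgs
              intro v hv
              rw [hY, Finset.mem_filter] at hv
              rw [mem_bl]; omega
            · refine le_trans ?_ (mul_le_mul_of_nonneg_right hgs (by positivity))
              rw [Finset.sum_mul]
              refine Finset.sum_le_sum fun u _ => mul_le_mul_of_nonneg_left ?_ (hg0 u)
              refine le_trans (Finset.sum_le_sum (g := fun v => wt p ρ u v * T) fun v hv => ?_) ?_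
              · rw [Finset.mem_filter] at hv
                exact mul_le_mul_of_nonneg_left (hYs v hv.1 hv.2) (wt_nonneg hp _ _ _)
              · rw [← Finset.sum_mul]
                exact mul_le_mul_of_nonneg_right (htot c C p hC hp _ u ρ hρ1) hT0
    have k0 : (ρ:ℝ) = B * r := by rw [hρ]; push_cast; ring
    have k1 : ((2 * ρ : ℕ) : ℝ) ^ α = 2 ^ α * (ρ:ℝ) ^ α := by
      push_cast; rw [Real.mul_rpow (by norm_num) hρ0.le]
    have k1' : ((2 * ρ : ℕ) : ℝ) ^ α = (2 * B) ^ α * (r:ℝ) ^ α := by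
      push_cast; rw [k0, ← mul_assoc, Real.mul_rpow (by positivity) hr0.le]
    have k2 : (ρ:ℝ) ^ α * (ρ:ℝ) ^ (-α) = 1 := by rw [← Real.rpow_add hρ0]; simp
    have k4 : ((ρ:ℝ) / 2) ^ (-e) = 2 ^ e * ((B:ℝ) ^ (-e) * (r:ℝ) ^ (-e)) := by
      rw [Real.div_rpow hρ0.le (by norm_num), Real.rpow_neg (by norm_num : (0:ℝ) ≤ 2), div_inv_eq_mul, mul_comm, k0,
        Real.mul_rpow hB0.le hr0.le]
    have k5 : (r:ℝ) ^ d * (r:ℝ) ^ (-e) = (r:ℝ) ^ α := by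
      rw [← Real.rpow_natCast, ← Real.rpow_add hr0]; congr 1; rw [he]; ring
    calc F x r ≤ _ := hFx
      _ = A * (2 * B) ^ α * (r:ℝ) ^ α + (C₇ * (B:ℝ) ^ (-e)) * H * ((r:ℝ) ^ d * (r:ℝ) ^ (-e)) * ((ρ:ℝ) ^ α * (ρ:ℝ) ^ (-α)) := by
          rw [hT, k4]
          nth_rewrite 1 [k1']
          rw [k1, hC₇]; ring
      _ ≤ A * (2 * B) ^ α * (r:ℝ) ^ α + (1 / 2) * (N + 1) * (r:ℝ) ^ α * 1 := by
          rw [k2, k5]; gcongr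
      _ = _ := by rw [ha]; ring
  have hbd : ∀ i, f i ≤ (Q.card : ℝ) := by
    rintro ⟨⟨x, hx⟩, ⟨r, hr⟩⟩
    refine (conv x r _ hr).mpr ?_
    have : (1:ℝ) ≤ r := by exact_mod_cast hr
    calc F x r ≤ ∑ v ∈ Q with normInf (v - x) ≤ r, (1:ℝ) := Finset.sum_le_sum fun v _ => tau_le_one hp.h0 hp.h1 _ _ _
      _ ≤ ∑ v ∈ Q, (1:ℝ) := Finset.sum_le_sum_of_subset_of_nonneg (Finset.filter_subset _ _) fun _ _ _ => zero_le_one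
      _ = Q.card := by simp
      _ ≤ _ := le_mul_of_one_le_right (by positivity) (Real.one_le_rpow this h0.le)
  have hfin := boot f hbd (by linarith) main
  have := hI c p hp hball Q y (2 * a) (by linarith) (fun r hr => (conv y r _ hr).mp (hfin ⟨⟨y, hy⟩, ⟨r, hr⟩⟩)) x hx
  exact this

end

section
variable {d : ℕ} {J : V d → V d → ℝ} {α c C : ℝ}

/-- real edge probability -/
noncomputable def qq (J : V d → V d → ℝ) (β : ℝ) (e : Sym2 (V d)) : ℝ :=
  1 - Real.exp (-β *
    Sym2.lift ⟨fun x y => (J x y + J y x) / 2, fun x y => by dsimp only; rw [add_comm]⟩ e)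

theorem edgeProb_eq (β : ℝ) (e : Sym2 (V d)) : edgeProb J β e = ENNReal.ofReal (qq J β e) := rfl

theorem qq_mk (hJ : KernelHyp d J α c C) (β : ℝ) (x y : V d) : qq J β s(x, y) = 1 - Real.exp (-β * J x y) := by
  unfold qq
  rw [Sym2.lift_mk]
  dsimp only
  rw [hJ.symm y x]; ring_nf

theorem qq_nonneg (hJ : KernelHyp d J α c C) {β : ℝ} (hβ : 0 ≤ β) (e : Sym2 (V d)) : 0 ≤ qq J β e := by
  induction e using Sym2.ind with
  | _ x y =>
  rw [qq_mk hJ, sub_nonneg, Real.exp_le_one_iff]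
  have := mul_nonneg hβ (hJ.nonneg x y)
  linarith

theorem qq_le_one (β : ℝ) (e : Sym2 (V d)) : qq J β e ≤ 1 := by
  unfold qq
  have := Real.exp_pos (-β *
    Sym2.lift ⟨fun x y => (J x y + J y x) / 2, fun x y => by dsimp only; rw [add_comm]⟩ e)
  linarith

theorem qq_PH (hJ : KernelHyp d J α c C) {β₀ β : ℝ} (h0 : 0 < β₀) (h1 : β₀ / 2 ≤ β) (h2 : β ≤ β₀) :
    PH d (qq J β) α (β₀ / 2 * c) (β₀ * C) where
  h0 := qq_nonneg hJ (by linarith)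
  h1 := qq_le_one β
  tr := fun z x y => by rw [qq_mk hJ, qq_mk hJ, hJ.transInv]
  lo := fun x y hxy => by
    rw [qq_mk hJ, _root_.sub_sub_cancel, Real.exp_le_exp]
    have a1 := hJ.lower x y hxy
    have e1 : -((d:ℝ) + α) = -(d:ℝ) - α := by ring
    have : β₀ / 2 * (c * (normInf (x - y) : ℝ) ^ (-(d:ℝ) - α)) ≤ β * J x y :=
      mul_le_mul h1 a1 (mul_nonneg hJ.c_pos.le (by positivity)) (by linarith)
    rw [e1]; linarith
  up := fun x y hxy => by
    rw [qq_mk hJ]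
    have a1 := hJ.upper x y hxy
    have e1 : -((d:ℝ) + α) = -(d:ℝ) - α := by ring
    have a2 := Real.add_one_le_exp (-β * J x y)
    have : β * J x y ≤ β₀ * (C * (normInf (x - y) : ℝ) ^ (-(d:ℝ) - α)) :=
      mul_le_mul h2 a1 (hJ.nonneg _ _) h0.le
    rw [e1]; linarith

theorem qq_cont (e : Sym2 (V d)) : Continuous fun β => qq J β e := by
  unfold qq; fun_prop

theorem tau_cont (Q : Finset (V d)) (x y : V d) : Continuous fun β => tau (qq J β) Q x y := by
  unfold tau Pr Ex
  refine continuous_finsetSum _ fun ω _ => ?_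
  refine Continuous.mul (Continuous.mul ?_ ?_) continuous_const
  · exact continuous_finsetProd _ fun e _ => qq_cont e
  · exact continuous_finsetProd _ fun e _ => continuous_const.sub (qq_cont e)

/-- open edges in E -/
def op (E : Finset (Sym2 (V d))) (ω : Config d) : Finset (Sym2 (V d)) := E.filter fun e => ω e = true

theorem meas_op (E : Finset (Sym2 (V d))) (a : Finset (Sym2 (V d))) : MeasurableSet {ω : Config d | op E ω = a} := by
  have : {ω : Config d | op E ω = a} = (fun ω : Config d => fun e : E => ω e) ⁻¹' {g | (E.attach.filter fun e => g e = true).map (Function.Embedding.subtype _) = a} := by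
    ext ω
    simp only [Set.mem_setOf_eq, Set.mem_preimage]
    have : op E ω = (E.attach.filter fun e : E => ω e.1 = true).map (Function.Embedding.subtype _) := by
      ext e
      simp [op, and_comm]
    rw [this]
  rw [this]
  refine measurableSet_preimage ?_ (Set.toFinite _).measurableSet
  fun_prop

theorem meas_cyl (E : Finset (Sym2 (V d))) (A : Finset (Sym2 (V d)) → Prop) : MeasurableSet {ω : Config d | A (op E ω)} := by
  classical
  have : {ω : Config d | A (op E ω)} = ⋃ a ∈ E.powerset.filter A, {ω : Config d | op E ω = a} := by
    ext ω
    simp only [Set.mem_setOf_eq, Set.mem_iUnion, Finset.mem_filter, Finset.mem_powerset, exists_prop, exists_eq_right']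
    exact ⟨fun h => ⟨Finset.filter_subset _ _, h⟩, fun h => h.2⟩
  rw [this]
  exact Finset.measurableSet_biUnion _ fun a _ => meas_op E a

theorem P_cyl {P : ℝ → Measure (Config d)} (hP : IsLRP J P) (hJ : KernelHyp d J α c C) {β : ℝ} (hβ : 0 ≤ β)
    (E : Finset (Sym2 (V d))) (A : Finset (Sym2 (V d)) → Prop) :
    P β {ω | A (op E ω)} = ENNReal.ofReal (Pr (qq J β) E A) := by
  classical
  have hq0 := qq_nonneg hJ hβ
  have hq1 := fun e => qq_le_one (J := J) β e
  have hq2 : ∀ e, 0 ≤ 1 - qq J β e := fun e => sub_nonneg.mpr (hq1 e)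
  have : {ω : Config d | A (op E ω)} = ⋃ a ∈ E.powerset.filter A, {ω : Config d | op E ω = a} := by
    ext ω
    simp only [Set.mem_setOf_eq, Set.mem_iUnion, Finset.mem_filter, Finset.mem_powerset, exists_prop, exists_eq_right']
    exact ⟨fun h => ⟨Finset.filter_subset _ _, h⟩, fun h => h.2⟩
  rw [this, measure_biUnion_finset ?_ (fun a _ => meas_op E a)]
  · unfold Pr Ex
    rw [ENNReal.ofReal_sum_of_nonneg]
    · rw [Finset.sum_filter]
      refine Finset.sum_congr rfl fun a ha => ?_
      rw [Finset.mem_powerset] at ha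
      split_ifs with hA
      · dsimp only
        rw [ind_true hA, mul_one]
        have h1 : {ω : Config d | op E ω = a} = {ω | ∀ e ∈ E, ω e = (decide (e ∈ a))} := by
          ext ω
          simp only [Set.mem_setOf_eq]
          constructor
          · rintro rfl e he
            simp [op, he]
          · intro h
            ext e
            rw [op, Finset.mem_filter]
            constructor
            · rintro ⟨he, h2⟩
              rw [h e he] at h2
              simpa using h2
            · intro he
              refine ⟨ha he, ?_⟩
              rw [h e (ha he)]; simpa using he
        rw [h1, hP β E (fun e => decide (e ∈ a)), ← Finset.prod_sdiff ha, mul_comm, ENNReal.ofReal_mul (Finset.prod_nonneg fun e _ => hq0 e),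
          ENNReal.ofReal_prod_of_nonneg (fun e _ => hq0 e), ENNReal.ofReal_prod_of_nonneg (fun e _ => hq2 e)]
        congr 1
        · refine Finset.prod_congr rfl fun e he => ?_
          simp [he, edgeProb_eq]
        · refine Finset.prod_congr rfl fun e he => ?_
          rw [Finset.mem_sdiff] at he
          simp [he.2, edgeProb_eq, ENNReal.ofReal_sub _ (hq0 e)]
      · dsimp only
        rw [ind_false hA, mul_zero, ENNReal.ofReal_zero]
    · intro a _
      refine mul_nonneg (mul_nonneg (Finset.prod_nonneg fun e _ => hq0 e) (Finset.prod_nonneg fun e _ => hq2 e)) (ind_nonneg _)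
  · intro a _ b _ hab
    rw [Function.onFun, Set.disjoint_left]
    intro ω h1 h2
    exact hab (h1.symm.trans h2)

theorem P_prob {P : ℝ → Measure (Config d)} (hP : IsLRP J P) (β : ℝ) : IsProbabilityMeasure (P β) := by
  have := hP β ∅ (fun _ => true)
  simp at this
  exact ⟨this⟩

theorem cn_conn {E : Finset (Sym2 (V d))} {ω : Config d} {x y : V d} (h : cn (op E ω) x y) : conn ω x y := by
  unfold cn at h
  refine Relation.ReflTransGen.mono (fun a b hab => ?_) x y h
  obtain ⟨h1, h2⟩ := hab
  exact ⟨h1, (Finset.mem_filter.mp h2).2⟩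

theorem op_mono {E E' : Finset (Sym2 (V d))} (h : E ⊆ E') (ω : Config d) : op E ω ⊆ op E' ω :=
  Finset.filter_subset_filter _ h

theorem bl_mono {m n : ℕ} (h : m ≤ n) (x : V d) : bl m x ⊆ bl n x := fun y hy => by
  rw [mem_bl] at hy ⊢; omega

theorem conn_cn {ω : Config d} {x y : V d} (h : conn ω x y) : ∃ n, cn (op (bl n (0 : V d)).sym2 ω) x y := by
  induction h with
  | refl => exact ⟨0, cn_refl _ _⟩
  | @tail b c _ hbc ih =>
    obtain ⟨n, hn⟩ := ih
    set m := max n (max (normInf b) (normInf c))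
    refine ⟨m, cn_trans (cn_mono (op_mono (Finset.sym2_mono (bl_mono (le_max_left _ _) _)) ω) hn) (cn_edge ?_)⟩
    rw [op, Finset.mem_filter]
    refine ⟨?_, hbc.2⟩
    rw [Finset.mk_mem_sym2_iff, mem_bl, mem_bl, sub_zero, sub_zero]
    exact ⟨(le_max_left _ _).trans (le_max_right _ _), (le_max_right _ _).trans (le_max_right _ _)⟩

theorem twoPoint_le {P : ℝ → Measure (Config d)} (hP : IsLRP J P) (hJ : KernelHyp d J α c C) {β : ℝ} (hβ : 0 ≤ β)
    {x y : V d} {b : ℝ} (h : ∀ Q : Finset (V d), x ∈ Q → y ∈ Q → tau (qq J β) Q x y ≤ b) :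
    twoPoint P β x y ≤ ENNReal.ofReal b := by
  have h1 : {ω : Config d | conn ω x y} = ⋃ n : ℕ, {ω | cn (op (bl n (0 : V d)).sym2 ω) x y} := by
    ext ω
    rw [Set.mem_iUnion]
    exact ⟨fun h => conn_cn h, fun ⟨n, hn⟩ => cn_conn hn⟩
  unfold twoPoint
  rw [h1, Monotone.measure_iUnion]
  · refine iSup_le fun n => ?_
    rw [P_cyl hP hJ hβ _ (fun η => cn η x y)]
    refine ENNReal.ofReal_le_ofReal ?_
    set m := max n (max (normInf x) (normInf y))
    refine le_trans (tau_mono (qq_nonneg hJ hβ) (qq_le_one β) (bl_mono (le_max_left _ _ : n ≤ m) 0) x y) (h _ ?_ ?_)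
    · rw [mem_bl, sub_zero]; exact (le_max_left _ _).trans (le_max_right _ _)
    · rw [mem_bl, sub_zero]; exact (le_max_right _ _).trans (le_max_right _ _)
  · intro m n hmn ω hω
    exact cn_mono (op_mono (Finset.sym2_mono (bl_mono hmn _)) ω) hω

theorem inf_of_big {P : ℝ → Measure (Config d)} (hP : IsLRP J P) (hJ : KernelHyp d J α c C) {β : ℝ} (hβ : 0 ≤ β)
    (h : ∃ N, ∀ K, ∃ L, 1 / 2 ≤ Pr (qq J β) (box L (0 : V d)).sym2
      (fun ω => ∃ x ∈ box N (0 : V d), K ≤ (cl (box L 0) ω x).card)) :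
    0 < P β {ω | ∃ x, (cluster ω x).Infinite} := by
  have := P_prob hP β
  obtain ⟨N, hN⟩ := h
  set S : ℕ → Set (Config d) := fun K => ⋃ L : ℕ, {ω | ∃ x ∈ box N (0 : V d), K ≤ (cl (box L 0) (op (box L (0 : V d)).sym2 ω) x).card} with hS
  have hm : ∀ K, MeasurableSet (S K) := fun K => MeasurableSet.iUnion fun L =>
    meas_cyl (box L (0 : V d)).sym2 (fun η => ∃ x ∈ box N (0 : V d), K ≤ (cl (box L 0) η x).card)
  have hanti : Antitone S := by
    intro K K' hK ω hω
    rw [hS, Set.mem_iUnion] at hω ⊢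
    obtain ⟨L, x, hx, h⟩ := hω
    exact ⟨L, x, hx, hK.trans h⟩
  have hge : ∀ K, ENNReal.ofReal (1 / 2) ≤ P β (S K) := by
    intro K
    obtain ⟨L, hL⟩ := hN K
    refine (ENNReal.ofReal_le_ofReal hL).trans ?_
    rw [← P_cyl hP hJ hβ]
    exact measure_mono (Set.subset_iUnion (fun L : ℕ => {ω : Config d | ∃ x ∈ box N (0 : V d), K ≤ (cl (box L 0) (op (box L (0 : V d)).sym2 ω) x).card}) L)
  have hsub : (⋂ K, S K) ⊆ {ω | ∃ x, (cluster ω x).Infinite} := by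
    intro ω hω
    rw [Set.mem_iInter] at hω
    by_contra hcon
    simp only [Set.mem_setOf_eq, not_exists, Set.not_infinite] at hcon
    have := hω (1 + ∑ x ∈ box N (0 : V d), (cluster ω x).ncard)
    rw [hS, Set.mem_iUnion] at this
    obtain ⟨L, x, hx, h⟩ := this
    have h1 : (cl (box L 0) (op (box L (0 : V d)).sym2 ω) x).card ≤ (cluster ω x).ncard := by
      rw [← Set.ncard_coe_finset]
      refine Set.ncard_le_ncard ?_ (hcon x)
      intro y hy
      exact cn_conn (mem_cl.mp (Finset.mem_coe.mp hy)).2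
    have h2 := Finset.single_le_sum (f := fun x => (cluster ω x).ncard) (fun _ _ => Nat.zero_le _) hx
    omega
  refine lt_of_lt_of_le ?_ (measure_mono hsub)
  rw [hanti.measure_iInter (fun K => (hm K).nullMeasurableSet) ⟨0, measure_ne_top _ _⟩]
  exact lt_of_lt_of_le (by simp) (le_iInf hge)

end

section
variable {d : ℕ} {J : V d → V d → ℝ} {α c C : ℝ}

theorem crit_bound (hJ : KernelHyp d J α c C) (P : ℝ → Measure (Config d)) (hP : IsLRP J P) (hα1 : α < 1) :
    ∃ D : ℝ, 0 < D ∧ ∀ x y : V d,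
      twoPoint P (betaC P) x y ≤ ENNReal.ofReal (D * (max 1 (normInf (x - y) : ℝ)) ^ (-((d:ℝ) - α))) := by
  have hbdd : BddBelow {β : ℝ | 0 ≤ β ∧ 0 < P β {ω | ∃ x, (cluster ω x).Infinite}} := ⟨0, fun β hβ => hβ.1⟩
  have hc0 : 0 ≤ betaC P := Real.sInf_nonneg fun β hβ => hβ.1
  rcases hc0.eq_or_lt with h0 | h0
  · refine ⟨1, one_pos, fun x y => twoPoint_le hP hJ hc0 fun Q hx hy => ?_⟩
    rw [← h0]
    have hq : ∀ e, qq J 0 e = 0 := fun e => by simp [qq]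
    by_cases hxy : x = y
    · subst hxy
      rw [sub_self, normInf_eq_zero.mpr rfl]
      simpa using tau_le_one (qq_nonneg hJ le_rfl) (qq_le_one 0) Q x x
    · have := exit_ineq (y := y) (qq_nonneg hJ le_rfl) (qq_le_one 0) (Finset.singleton_subset_iff.mpr hx) (Finset.mem_singleton_self x)
      rw [tau_out _ (Finset.mem_singleton_self x) (by simpa using fun h => hxy h.symm)] at this
      simp only [hq, zero_mul, mul_zero, Finset.sum_const_zero, add_zero] at this
      refine this.trans (by positivity)
  · set β₀ := betaC P with hβ₀
    have hC : 0 < C := lt_of_lt_of_le hJ.c_pos hJ.c_le_C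
    obtain ⟨b, A, hb, hA, hhalf⟩ := half1 (d := d) (α := α) (c := β₀ / 2 * c) (C := β₀ * C) hJ.d_pos hJ.alpha_pos hJ.alpha_lt_d
      (mul_pos (by linarith) hJ.c_pos)
    have hb0 : (0:ℝ) < b := by exact_mod_cast (by omega : 0 < b)
    obtain ⟨D, hD, hτ⟩ := tau_bound (d := d) (α := α) (C := β₀ * C) (A := 2 ^ d * A * (4 * b) ^ α) hJ.d_pos hJ.alpha_pos hα1 hJ.alpha_lt_d
      (mul_pos h0 hC) (by positivity)
    refine ⟨D, hD, fun x y => twoPoint_le hP hJ hc0 fun Q hx hy => ?_⟩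
    have hlt : ∀ β, β₀ / 2 ≤ β → β < β₀ → tau (qq J β) Q x y ≤ D * (max 1 (normInf (x - y) : ℝ)) ^ (-((d:ℝ) - α)) := by
      intro β h1 h2
      have hβ : 0 ≤ β := by linarith
      have hPH := qq_PH hJ h0 h1 h2.le
      rcases hhalf _ hPH with h3 | h3
      · exact absurd ⟨hβ, inf_of_big hP hJ hβ h3⟩ (notMem_of_lt_csInf h2 hbdd)
      · exact hτ _ _ hPH (fun s x hs => ball_bound hJ.d_pos hJ.alpha_pos hb hA hPH h3 hs x) Q x hx y hy
    have hcont : Filter.Tendsto (fun β => tau (qq J β) Q x y) (nhdsWithin β₀ (Set.Iio β₀)) (nhds (tau (qq J β₀) Q x y)) :=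
      ((tau_cont Q x y).tendsto β₀).mono_left nhdsWithin_le_nhds
    refine le_of_tendsto hcont ?_
    filter_upwards [Ioo_mem_nhdsLT (show β₀ / 2 < β₀ by linarith)] with β hβ
    exact hlt β hβ.1.le hβ.2

theorem amgm3 {a b c : ℝ} (ha : 0 ≤ a) (hb : 0 ≤ b) (hc : 0 ≤ c) : a * b * c ≤ a ^ 3 + b ^ 3 + c ^ 3 := by
  nlinarith [mul_nonneg (add_nonneg (add_nonneg ha hb) hc) (add_nonneg (add_nonneg (sq_nonneg (a - b)) (sq_nonneg (b - c))) (sq_nonneg (a - c))), mul_nonneg (mul_nonneg ha hb) hc]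

theorem tri_fin (P : ℝ → Measure (Config d)) (β : ℝ) {e D : ℝ} (hD : 0 < D) (he : (d:ℝ) < 3 * e / 2) 
    (h : ∀ x y : V d, twoPoint P β x y ≤ ENNReal.ofReal (D * (max 1 (normInf (x - y) : ℝ)) ^ (-e))) :
    triangle P β < ⊤ := by
  have hd0 : (0:ℝ) ≤ d := by positivity
  set M : V d → ℝ := fun x => max 1 (normInf x : ℝ) with hM
  have hM0 : ∀ x, 0 < M x := fun x => lt_of_lt_of_le one_pos (le_max_left _ _)
  set k : V d → ℝ := fun x => M x ^ (-(e / 2)) with hk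
  have hk0 : ∀ x, 0 ≤ k x := fun x => Real.rpow_nonneg (hM0 x).le _
  have hk2 : ∀ x, M x ^ (-e) = k x ^ 2 := fun x => by
    rw [hk, ← Real.rpow_natCast, ← Real.rpow_mul (hM0 x).le]; congr 1; push_cast; ring
  have hk3 : ∀ x, k x ^ 3 = M x ^ (-(3 * e / 2)) := fun x => by
    rw [hk, ← Real.rpow_natCast, ← Real.rpow_mul (hM0 x).le]; congr 1; push_cast; ring
  set w : V d → ℝ≥0∞ := fun x => ENNReal.ofReal (k x ^ 3) with hw
  set S := ∑' x, w x with hS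
  have hSfin : S < ⊤ := by
    obtain ⟨K, hK, hdy⟩ := dyadic (d := d) (g := (d:ℝ)) (g' := 3 * e / 2) (by linarith) he
    refine lt_of_le_of_lt (b := ENNReal.ofReal (K * 3 ^ d)) ?_ ENNReal.ofReal_lt_top
    rw [hS, ENNReal.tsum_eq_iSup_sum]
    refine iSup_le fun Q => ?_
    rw [hw, ← ENNReal.ofReal_sum_of_nonneg fun x _ => pow_nonneg (hk0 x) 3]
    refine ENNReal.ofReal_le_ofReal ?_
    have := hdy Q 0 (fun _ => 1) (3 ^ d) 1 le_rfl (by positivity) (fun _ => zero_le_one) (by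
      intro r hr
      rw [Finset.sum_const, nsmul_eq_mul, mul_one, Real.rpow_natCast]
      refine le_trans ?_ (card_bl_le r hr (0 : V d))
      exact_mod_cast Finset.card_le_card fun v hv => mem_bl.mpr (Finset.mem_filter.mp hv).2)
    simpa [hk3, hM] using this
  have hnc : ∀ y : V d, M (y - 0) = M (0 - y) := fun y => by rw [hM]; dsimp only; rw [normInf_comm]
  have hpt : ∀ x y : V d, twoPoint P β 0 x * twoPoint P β x y * twoPoint P β y 0 ≤
      ENNReal.ofReal (D ^ 3) * (w x * w (x - y) + w (x - y) * w y + w x * w y) := by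
    intro x y
    have e1 : (max 1 (normInf (0 - x) : ℝ)) = M x := by rw [hM]; dsimp only; rw [normInf_comm, sub_zero]
    have e2 : (max 1 (normInf (y - 0) : ℝ)) = M y := by rw [sub_zero]
    have e3 : (max 1 (normInf (x - y) : ℝ)) = M (x - y) := rfl
    have h1 := h 0 x
    have h2 := h x y
    have h3 := h y 0
    rw [e1, hk2] at h1
    rw [e3, hk2] at h2
    rw [e2, hk2] at h3
    refine (mul_le_mul' (mul_le_mul' h1 h2) h3).trans ?_
    have n1 := hk0 x
    have n2 := hk0 y
    have n3 := hk0 (x - y)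
    rw [hw]
    dsimp only
    rw [← ENNReal.ofReal_mul (by positivity), ← ENNReal.ofReal_mul (by positivity), ← ENNReal.ofReal_mul (by positivity),
      ← ENNReal.ofReal_mul (by positivity), ← ENNReal.ofReal_mul (by positivity), ← ENNReal.ofReal_add (by positivity) (by positivity),
      ← ENNReal.ofReal_add (by positivity) (by positivity), ← ENNReal.ofReal_mul (by positivity)]
    refine ENNReal.ofReal_le_ofReal ?_
    have := amgm3 (mul_nonneg n1 n3) (mul_nonneg n3 n2) (mul_nonneg n1 n2)
    calc _ = D ^ 3 * ((k x * k (x - y)) * (k (x - y) * k y) * (k x * k y)) := by ring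
      _ ≤ D ^ 3 * ((k x * k (x - y)) ^ 3 + (k (x - y) * k y) ^ 3 + (k x * k y) ^ 3) := by gcongr
      _ = _ := by ring
  have s1 : ∀ x : V d, ∑' y, w (x - y) = S := fun x => (Equiv.subLeft x).tsum_eq w
  have s2' : ∀ y : V d, ∑' x, w (x - y) = S := fun y => (Equiv.subRight y).tsum_eq w
  refine lt_of_le_of_lt (b := ENNReal.ofReal (D ^ 3) * (S * S + S * S + S * S)) ?_ ?_
  · unfold triangle
    refine (ENNReal.tsum_le_tsum fun x => ENNReal.tsum_le_tsum fun y => hpt x y).trans (le_of_eq ?_)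
    simp_rw [ENNReal.tsum_mul_left, ENNReal.tsum_add, ENNReal.tsum_mul_left, s1]
    rw [ENNReal.tsum_mul_right, ENNReal.tsum_comm (f := fun x y => w (x - y) * w y)]
    simp_rw [ENNReal.tsum_mul_right, s2', ENNReal.tsum_mul_left, ← hS]
  · exact ENNReal.mul_lt_top ENNReal.ofReal_lt_top
      (by simp only [ENNReal.add_lt_top]; exact ⟨⟨ENNReal.mul_lt_top hSfin hSfin, ENNReal.mul_lt_top hSfin hSfin⟩, ENNReal.mul_lt_top hSfin hSfin⟩)

theorem main_final (hJ : KernelHyp d J α c C)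
    (P : ℝ → Measure (Config d)) (hP : IsLRP J P)
    (hα : α < min 1 ((d : ℝ) / 3)) :
    triangle P (betaC P) < ⊤ := by
  obtain ⟨D, hD, h⟩ := crit_bound hJ P hP (lt_of_lt_of_le hα (min_le_left _ _))
  have := lt_of_lt_of_le hα (min_le_right _ _)
  exact tri_fin P _ hD (by linarith) h

end

/-- If `0 < α < d` and `α < min(1, d/3)` then the triangle diagram is finite at
criticality. -/
theorem triangle_finite_at_criticality {d : ℕ} {J : V d → V d → ℝ} {α c C : ℝ}
    (hJ : KernelHyp d J α c C)
    (P : ℝ → Measure (Config d)) (hP : IsLRP J P)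
    (hα : α < min 1 ((d : ℝ) / 3)) :
    triangle P (betaC P) < ⊤ := by
  exact main_final hJ P hP hα

end LRP
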